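/- Let A be a commutative unital ℝ-algebra that is finitely generated by elements x₁,…,xₙ, let D ⊆ A\{0} be a multiplicatively closed set with 1 ∈ D, let S = {g₁,…,g_m} ⊆ A be finite, and let F = D⁻¹A with canonical map ι : A → F. Assume there exist p ∈ D and an integer k ≥ 1 such that p − 1 ∈ Pos(K_S^A) and k·p − (x₁²+⋯+xₙ²) ∈ Pos(K_S^A). Then: (1) the closure of T_S^F in the finest locally convex topology on F equals Pos^F(K_S^A \ ⋃_{d∈D} Z_A(d)); (2) the closure of T_S^F in the topology of finitely open sets on F equals Pos^F(K_S^A); (3) for every linear functional L : F → ℝ with L(T_S^F) ⊆ [0,∞) there exists a positive Borel measure μ on the closed set 𝒳 = closure(K_S^A \ ⋃_{d∈D} Z_A(d)) ⊆ V(A) such that μ(𝒳 ∩ Z_A(d)) = 0 for every d ∈ D and L(ι(f)/ι(d)) = ∫_𝒳 χ(f)/χ(d) dμ(χ) for all f ∈ A and d ∈ D (the integrand being defined μ-almost everywhere). -/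

import Mathlib

/-!
Write `K = K_S` and `F = D⁻¹A`.

*Real points.* If a preordering of `A` does not contain `-1`, a Zorn argument gives a homomorphism
from `A` to a real closed field that makes the preordering nonnegative (`exists_realClosed_hom`;
real closedness is used through the intermediate value property `PolyIVT`). A root-matching argument
in the style of Cohen and Hörmander transfers finitely many signs from such a point to a character
`A → ℝ`, which may moreover avoid the zeros of countably many elements that do not vanish at the
given point (`exists_real_point`). Consequently an element `f` that is positive on `K` has a
certificate `f s = 1 + t` with `s`, `t` in the preordering (`exists_strict_certificate`).

*Positivity of functionals.* Let `L` be nonnegative on the preordering of an algebra `E` over `A` in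
which `p` is invertible. Applied to `c² P² - a²` with `P` a power of `p`, the certificates bound the
moments of the fraction `a / P`, and therefore `|L (a / P)| ≤ sup_K |a / P| · L 1`
(`abs_le_of_sq_le`). Every element of `A` is dominated on `K` by a power of `p`, because the
coordinates are; so `L (h² f) ≥ 0` whenever `f ≥ 0` on `K` (`nonneg_of_nonneg_on_K`).

*Parts (1) and (3).* A functional on `F` that is nonnegative on fractions nonnegative on `K` extends,
by M. Riesz, to compactly supported functions, hence is given by a measure on `K` for which each
denominator is nonzero almost everywhere (`exists_measure_of_nonneg`). Although `D` may be
uncountable, almost every character has no vanishing denominator at all: by the Besicovitch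
differentiation theorem Lebesgue measure has finite density with respect to the representing measure
`μ` at `μ`-almost every point, while the `μ`-integrability of all powers of `1 / d` forces infinite
density at every zero of `d` (`ae_forall_ne_zero`). This is (3), and (1) follows by duality.

*Part (2).* A fraction lies in `Pos^F(K)` iff its sign is right off the zeros of one further
denominator. A countable intersection of such conditions reduces to a single one
(`exists_finite_exception`, again by transfer from real closed fields), which makes `Pos^F(K)` closed
in the finite topology (`isClosed_PosF`). Conversely, an element of `Pos^F(K)` lies in a finitely
generated subalgebra of `F` that contains `1 / p`; its dimension is countable, and there the
finite-topology closure of a convex cone contains its bidual (`dualClosure_subset_closure`), so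
positivity of functionals applies.
-/

open MvPolynomial MeasureTheory

noncomputable section

/-- The Euclidean (weak) topology on a real vector space; for finite-dimensional
spaces this is the usual Euclidean topology. -/
def weakTop (V : Type*) [AddCommGroup V] [Module ℝ V] : TopologicalSpace V :=
  ⨅ L : V →ₗ[ℝ] ℝ, TopologicalSpace.induced L inferInstance

/-- The topology of finitely open sets: `O` is open iff its intersection with every
finite-dimensional subspace `U` is open in the Euclidean topology of `U`. -/
def finTop (E : Type*) [AddCommGroup E] [Module ℝ E] : TopologicalSpace E where
  IsOpen O := ∀ U : Submodule ℝ E, FiniteDimensional ℝ U →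
    @IsOpen _ (weakTop U) ((Subtype.val : U → E) ⁻¹' O)
  isOpen_univ := by
    intro U _
    letI := weakTop U
    rw [Set.preimage_univ]
    exact isOpen_univ
  isOpen_inter := by
    intro s t hs ht U hU
    letI := weakTop U
    rw [Set.preimage_inter]
    exact (hs U hU).inter (ht U hU)
  isOpen_sUnion := by
    intro s hs U hU
    letI := weakTop U
    rw [Set.preimage_sUnion]
    exact isOpen_biUnion fun t ht => hs t ht U hU

/-- The closure of a convex cone in the finest locally convex topology, via the dual
characterization: `x` lies in the closure iff `L x ≥ 0` for every linear functional `L`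
nonnegative on the cone. -/
def dualClosure {E : Type*} [AddCommGroup E] [Module ℝ E] (C : Set E) : Set E :=
  {x | ∀ L : E →ₗ[ℝ] ℝ, (∀ c ∈ C, 0 ≤ L c) → 0 ≤ L x}

/-- The preordering generated by `g 1, …, g m` in a commutative ring: all finite sums
of elements `σ • g₁^ν₁ ⋯ g_m^ν_m` with `σ` a sum of squares and `ν ∈ {0,1}^m`. -/
def genPreordering {E : Type*} [CommRing E] {m : ℕ} (g : Fin m → E) : Set E :=
  {x | ∃ σ : (Fin m → Bool) → E, (∀ ν, IsSumSq (σ ν)) ∧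
    x = ∑ ν : Fin m → Bool, σ ν * ∏ j, (if ν j then g j else 1)}


/-- The set of characters (unital `ℝ`-algebra homomorphisms `A → ℝ`), as a subset of the
product `A → ℝ`; the subtype carries the subspace topology, i.e. the coarsest topology
making all evaluations `χ ↦ χ a` continuous. -/
def CharSet (A : Type*) [CommRing A] [Algebra ℝ A] : Set (A → ℝ) :=
  {χ | (∀ a b, χ (a + b) = χ a + χ b) ∧ (∀ a b, χ (a * b) = χ a * χ b) ∧
    ∀ r : ℝ, χ (algebraMap ℝ A r) = r}

/-- `K_S^A ⊆ V(A)` for `S = {g 1, …, g m}`. -/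
def KSA {A : Type*} [CommRing A] [Algebra ℝ A] {m : ℕ} (g : Fin m → A) :
    Set (CharSet A) :=
  {χ | ∀ i, 0 ≤ (χ : A → ℝ) (g i)}

/-- `Z_A(d) ⊆ V(A)`: the characters vanishing at `d`. -/
def ZA {A : Type*} [CommRing A] [Algebra ℝ A] (d : A) : Set (CharSet A) :=
  {χ | (χ : A → ℝ) d = 0}

/-- `Pos(𝒴) ⊆ A`: elements nonnegative at every character in `𝒴`. -/
def PosA {A : Type*} [CommRing A] [Algebra ℝ A] (Y : Set (CharSet A)) : Set A :=
  {a | ∀ χ ∈ Y, 0 ≤ (χ : A → ℝ) a}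

/-- `Pos^F(𝒴)`: elements of `F = D⁻¹A` with a representation `ι a/ι d`, `a·d ∈ Pos(𝒴)`. -/
def PosF {A : Type*} [CommRing A] [Algebra ℝ A] (D : Submonoid A)
    (Y : Set (CharSet A)) : Set (Localization D) :=
  {R | ∃ (a : A) (d : D), R = Localization.mk a d ∧
    ∀ χ ∈ Y, 0 ≤ (χ : A → ℝ) a * (χ : A → ℝ) (d : A)}

/-! ### Real closed fields from preorderings: algebraic preliminaries -/

/-- The intermediate value property for polynomials over a linearly ordered field. -/
def PolyIVT (R : Type*) [Field R] [LinearOrder R] : Prop :=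
  ∀ (f : Polynomial R) (a b : R), a < b → f.eval a * f.eval b < 0 →
    ∃ c, a < c ∧ c < b ∧ f.eval c = 0

/-- An ideal `I` maximal subject to `-1 ∉ T + I` is prime, and real with respect to `T`. -/
theorem exists_domain_of_neg_one_notMem {B : Type*} [CommRing B] (T : Subsemiring B)
    (hsq : ∀ b : B, b ^ 2 ∈ T) (hT : (-1 : B) ∉ T) :
    ∃ I : Ideal B, I.IsPrime ∧ ∀ b, ∀ s ∈ T, b ^ 2 + s ∈ I → b ∈ I := by
  obtain ⟨I, -, hI⟩ := zorn_le_nonempty₀ {I : Ideal B | ∀ t ∈ T, 1 + t ∉ I} (by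
    intro c hc hchain y hy
    refine ⟨sSup c, ?_, fun z hz => le_sSup hz⟩
    intro t ht hmem
    obtain ⟨J, hJ, hJm⟩ := (Submodule.mem_sSup_of_directed ⟨y, hy⟩ hchain.directedOn).1 hmem
    exact hc hJ t ht hJm) ⊥ (by
    intro t ht h
    apply hT
    have : t = -1 := by linear_combination (Ideal.mem_bot.1 h)
    rwa [← this])
  have hIm : ∀ t ∈ T, 1 + t ∉ I := hI.prop
  have key : ∀ b, b ∉ I → ∃ t ∈ T, ∃ h, 1 + t + b * h ∈ I := by
    intro b hb
    by_contra hcon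
    push Not at hcon
    have h1 : (I ⊔ Ideal.span {b}) ∈ {I : Ideal B | ∀ t ∈ T, 1 + t ∉ I} := by
      intro t ht hmem
      obtain ⟨i, hi, z, hz, hiz⟩ := Submodule.mem_sup.1 hmem
      obtain ⟨h, rfl⟩ := Ideal.mem_span_singleton.1 hz
      apply hcon t ht (-h)
      convert hi using 1
      linear_combination -hiz
    have h2 := hI.le_of_ge h1 le_sup_left
    exact hb (h2 (Ideal.mem_sup_right (Ideal.mem_span_singleton_self b)))
  refine ⟨I, ?_, ?_⟩
  · refine ⟨?_, ?_⟩
    · intro h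
      apply hIm 0 T.zero_mem
      rw [h]; trivial
    · intro a b hab
      by_contra hcon
      push Not at hcon
      obtain ⟨t, ht, h, hth⟩ := key a hcon.1
      obtain ⟨t', ht', h', hth'⟩ := key b hcon.2
      apply hIm (t + t' + t * t') (T.add_mem (T.add_mem ht ht') (T.mul_mem ht ht'))
      have : 1 + (t + t' + t * t') = (1 + t + a * h) * (1 + t') - (a * h) * (1 + t' + b * h')
          + (a * b) * (h * h') := by ring
      rw [this]
      exact I.add_mem (I.sub_mem (I.mul_mem_right _ hth) (I.mul_mem_left _ hth'))
        (I.mul_mem_right _ hab)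
  · intro b s hs hbs
    by_contra hb
    obtain ⟨t, ht, h, hth⟩ := key b hb
    apply hIm (s * h ^ 2 + (t + t + t ^ 2)) (T.add_mem (T.mul_mem hs (hsq h))
      (T.add_mem (T.add_mem ht ht) (hsq t)))
    have : 1 + (s * h ^ 2 + (t + t + t ^ 2)) = (1 + t + b * h) * (1 + t - b * h)
      + (b ^ 2 + s) * h ^ 2 := by ring
    rw [this]
    exact I.add_mem (I.mul_mem_right _ hth) (I.mul_mem_right _ hbs)

/-- The sums `∑ tᵢ xᵢ²` with `tᵢ ∈ T` and `xᵢ ∈ E`. -/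
def sqCone {Ω : Type*} [Field Ω] (T : Subsemiring Ω) (E : Subfield Ω) : AddSubmonoid Ω :=
  AddSubmonoid.closure {z | ∃ t ∈ T, ∃ x ∈ E, z = t * x ^ 2}

section sqCone

variable {Ω : Type*} [Field Ω] {T : Subsemiring Ω} {E E' : Subfield Ω}

theorem mem_sqCone {t x : Ω} (ht : t ∈ T) (hx : x ∈ E) : t * x ^ 2 ∈ sqCone T E :=
  AddSubmonoid.subset_closure ⟨t, ht, x, hx, rfl⟩

theorem sq_mem_sqCone {x : Ω} (hx : x ∈ E) : x ^ 2 ∈ sqCone T E := by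
  simpa using mem_sqCone T.one_mem hx

theorem le_sqCone {t : Ω} (ht : t ∈ T) : t ∈ sqCone T E := by
  simpa using mem_sqCone ht E.one_mem

theorem mul_mem_sqCone {y z : Ω} (hy : y ∈ sqCone T E) (hz : z ∈ sqCone T E) :
    y * z ∈ sqCone T E := by
  induction hy using AddSubmonoid.closure_induction with
  | zero => simp
  | add u v _ _ hu hv => rw [add_mul]; exact add_mem hu hv
  | mem u hu =>
    obtain ⟨t, ht, x, hx, rfl⟩ := hu
    induction hz using AddSubmonoid.closure_induction with
    | zero => simp
    | add u v _ _ hu hv => rw [mul_add]; exact add_mem hu hv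
    | mem v hv =>
      obtain ⟨t', ht', x', hx', rfl⟩ := hv
      have : t * x ^ 2 * (t' * x' ^ 2) = t * t' * (x * x') ^ 2 := by ring
      rw [this]
      exact mem_sqCone (T.mul_mem ht ht') (E.mul_mem hx hx')

theorem sqCone_le (hTE : ∀ t ∈ T, t ∈ E) {z : Ω} (hz : z ∈ sqCone T E) : z ∈ E := by
  induction hz using AddSubmonoid.closure_induction with
  | zero => exact E.zero_mem
  | add u v _ _ hu hv => exact E.add_mem hu hv
  | mem u hu =>
    obtain ⟨t, ht, x, hx, rfl⟩ := hu
    exact E.mul_mem (hTE t ht) (pow_mem hx 2)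

/-- Zorn's lemma: a subfield maximal among those over which `-1` stays outside the cone. -/
theorem exists_maximal_subfield (K₀ : Subfield Ω) (hK : (-1 : Ω) ∉ sqCone T K₀) :
    ∃ E : Subfield Ω, K₀ ≤ E ∧ (-1 : Ω) ∉ sqCone T E ∧
      ∀ E' : Subfield Ω, E ≤ E' → (-1 : Ω) ∉ sqCone T E' → E' ≤ E := by
  obtain ⟨E, hE, hmax⟩ := zorn_le_nonempty₀ {E : Subfield Ω | (-1 : Ω) ∉ sqCone T E} (by
    intro c hc hchain y hy
    refine ⟨sSup c, ?_, fun z hz => le_sSup hz⟩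
    have key : ∀ z ∈ sqCone T (sSup c), ∃ E ∈ c, z ∈ sqCone T E := by
      intro z hz
      induction hz using AddSubmonoid.closure_induction with
      | zero => exact ⟨y, hy, zero_mem _⟩
      | mem u hu =>
        obtain ⟨t, ht, x, hx, rfl⟩ := hu
        obtain ⟨E, hE, hxE⟩ := (Subfield.mem_sSup_of_directedOn ⟨y, hy⟩ hchain.directedOn).1 hx
        exact ⟨E, hE, mem_sqCone ht hxE⟩
      | add u v _ _ hu hv =>
        obtain ⟨E₁, h₁, hu⟩ := hu
        obtain ⟨E₂, h₂, hv⟩ := hv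
        obtain ⟨E, hE, h1E, h2E⟩ := hchain.directedOn E₁ h₁ E₂ h₂
        have mono : ∀ E₁ E₂ : Subfield Ω, E₁ ≤ E₂ → sqCone T E₁ ≤ sqCone T E₂ := by
          intro E₁ E₂ h
          apply AddSubmonoid.closure_mono
          rintro _ ⟨t, ht, x, hx, rfl⟩
          exact ⟨t, ht, x, h hx, rfl⟩
        exact ⟨E, hE, add_mem (mono _ _ h1E hu) (mono _ _ h2E hv)⟩
    intro hneg
    obtain ⟨E, hE, h⟩ := key _ hneg
    exact hc hE h) K₀ hK
  exact ⟨E, hE, hmax.prop, fun E' h h' => hmax.le_of_ge h' h⟩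

end sqCone

/-- A field whose squares are closed under addition, do not contain `-1`, and contain `a` or `-a`
for each `a`, is linearly ordered with the squares as nonnegative elements. -/
theorem exists_order_of_squares (R : Type*) [Field R]
    (hadd : ∀ a b : R, IsSquare a → IsSquare b → IsSquare (a + b))
    (hneg : ¬ IsSquare (-1 : R)) (htot : ∀ a : R, IsSquare a ∨ IsSquare (-a)) :
    ∃ (_ : LinearOrder R) (_ : IsStrictOrderedRing R), ∀ a : R, 0 ≤ a ↔ IsSquare a := by
  let C : RingCone R :=
    { carrier := {a | IsSquare a}
      mul_mem' := fun ha hb => ha.mul hb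
      one_mem' := IsSquare.one
      add_mem' := fun ha hb => hadd _ _ ha hb
      zero_mem' := IsSquare.zero
      eq_zero_of_mem_of_neg_mem' := by
        intro a ha hb
        by_contra h0
        apply hneg
        have : (-1 : R) = (-a) * a * (a⁻¹ * a⁻¹) := by field_simp
        rw [this]
        exact (IsSquare.mul hb ha).mul ⟨_, rfl⟩ }
  haveI : HasMemOrNegMem C := ⟨fun a => htot a⟩
  classical
  letI o : LinearOrder R := LinearOrder.mkOfAddGroupCone C
  haveI : IsOrderedRing R := IsOrderedRing.mkOfCone C
  refine ⟨o, IsOrderedRing.toIsStrictOrderedRing R, fun a => ?_⟩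
  change a - 0 ∈ C ↔ _
  rw [sub_zero]
  rfl

/-- The key property of a real closed field extracted from maximality, as an input to the
intermediate value theorem. -/
theorem polyIVT_of_irreducible {R : Type*} [Field R] [LinearOrder R] [IsStrictOrderedRing R]
    (H : ∀ f : Polynomial R, Irreducible f → 2 ≤ f.natDegree → ∃ G h : Polynomial R,
      G + 1 = f * h ∧ G.natDegree ≤ 2 * (f.natDegree - 1) ∧ ∀ c, 0 ≤ G.eval c) : PolyIVT R := by
  intro f
  induction hN : f.natDegree using Nat.strong_induction_on generalizing f with
  | _ N ih =>
  intro a b hab hf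
  have hf0 : f ≠ 0 := by rintro rfl; simp at hf
  have hN0 : f.natDegree ≠ 0 := by
    intro h0
    rw [Polynomial.eq_C_of_natDegree_eq_zero h0] at hf
    simp only [Polynomial.eval_C] at hf
    nlinarith [mul_self_nonneg (f.coeff 0)]
  by_cases hirr : Irreducible f
  · by_cases h2 : 2 ≤ f.natDegree
    · obtain ⟨G, h, hG, hdeg, hpos⟩ := H f hirr h2
      have hG1 : ∀ c, 0 < (f * h).eval c := by
        intro c
        rw [← hG]
        simp only [Polynomial.eval_add, Polynomial.eval_one]
        linarith [hpos c]
      have hh0 : h ≠ 0 := by rintro rfl; simpa using hG1 0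
      have hdegh : h.natDegree < N := by
        have h1 : (f * h).natDegree = f.natDegree + h.natDegree := Polynomial.natDegree_mul hf0 hh0
        have h2 : (G + 1).natDegree ≤ 2 * (f.natDegree - 1) := by
          refine (Polynomial.natDegree_add_le _ _).trans ?_
          simp [hdeg]
        rw [hG, h1] at h2
        omega
      have h3 := hG1 a
      have h4 := hG1 b
      rw [Polynomial.eval_mul] at h3 h4
      have h5 : h.eval a * h.eval b < 0 := by
        have h6 := mul_pos h3 h4
        by_contra hcon
        push Not at hcon
        nlinarith
      obtain ⟨c, -, -, hc⟩ := ih _ hdegh h rfl a b hab h5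
      have := hG1 c
      simp [hc] at this
    · have h1 : f.natDegree = 1 := by omega
      obtain ⟨m, hm, q, rfl⟩ := Polynomial.natDegree_eq_one.1 h1
      simp only [Polynomial.eval_add, Polynomial.eval_mul, Polynomial.eval_C,
        Polynomial.eval_X] at hf ⊢
      refine ⟨-q / m, ?_, ?_, by field_simp; ring⟩
      · by_contra hcon
        push Not at hcon
        have h7 : q = - m * (-q / m) := by field_simp
        set c := -q / m
        rw [h7] at hf
        have : (m * a + -m * c) * (m * b + -m * c) = m ^ 2 * ((a - c) * (b - c)) := by ring
        rw [this] at hf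
        have : 0 ≤ m ^ 2 * ((a - c) * (b - c)) :=
          mul_nonneg (sq_nonneg _) (mul_nonneg (by linarith) (by linarith))
        linarith
      · by_contra hcon
        push Not at hcon
        have h7 : q = - m * (-q / m) := by field_simp
        set c := -q / m
        rw [h7] at hf
        have : (m * a + -m * c) * (m * b + -m * c) = m ^ 2 * ((c - a) * (c - b)) := by ring
        rw [this] at hf
        have : 0 ≤ m ^ 2 * ((c - a) * (c - b)) :=
          mul_nonneg (sq_nonneg _) (mul_nonneg (by linarith) (by linarith))
        linarith
  · have hu : ¬ IsUnit f := fun h => hN0 (Polynomial.natDegree_eq_zero_of_isUnit h)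
    rw [irreducible_iff] at hirr
    push Not at hirr
    obtain ⟨g, h, hgh, hg, hh⟩ := hirr hu
    have hg0 : g ≠ 0 := by rintro rfl; simp at hgh; exact hf0 hgh
    have hh0 : h ≠ 0 := by rintro rfl; simp at hgh; exact hf0 hgh
    have hd : f.natDegree = g.natDegree + h.natDegree := by
      rw [hgh, Polynomial.natDegree_mul hg0 hh0]
    have hpos : ∀ q : Polynomial R, q ≠ 0 → ¬ IsUnit q → 0 < q.natDegree := by
      intro q hq hqu
      rw [Polynomial.natDegree_pos_iff_degree_pos]
      exact Polynomial.degree_pos_of_ne_zero_of_nonunit hq hqu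
    have h1 := hpos g hg0 hg
    have h2 := hpos h hh0 hh
    rw [hgh] at hf ⊢
    simp only [Polynomial.eval_mul] at hf ⊢
    by_cases hgs : g.eval a * g.eval b < 0
    · obtain ⟨c, hac, hcb, hc⟩ := ih _ (by omega) g rfl a b hab hgs
      exact ⟨c, hac, hcb, by simp [hc]⟩
    · have : h.eval a * h.eval b < 0 := by
        by_contra hcon
        push Not at hcon hgs
        nlinarith [mul_nonneg hgs hcon]
      obtain ⟨c, hac, hcb, hc⟩ := ih _ (by omega) h rfl a b hab this
      exact ⟨c, hac, hcb, by simp [hc]⟩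

/-! ### A preordering without `-1` becomes nonnegative in a real closed field -/

section maximal
variable {Ω : Type*} [Field Ω] {T : Subsemiring Ω} {E : Subfield Ω}

theorem exists_poly_of_mem_adjoin {f : Polynomial E} (hf : Irreducible f) {α : Ω}
    (hα : Polynomial.aeval α f = 0) {y : Ω}
    (hy : y ∈ (IntermediateField.adjoin E {α}).toSubfield) :
    ∃ g : Polynomial E, Polynomial.aeval α g = y ∧ g.natDegree ≤ f.natDegree - 1 := by
  have halg : IsAlgebraic E α := ⟨f, hf.ne_zero, hα⟩
  have h1 : y ∈ (IntermediateField.adjoin E {α}).toSubalgebra := hy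
  rw [IntermediateField.adjoin_simple_toSubalgebra_of_isAlgebraic halg,
    Algebra.adjoin_singleton_eq_range_aeval] at h1
  obtain ⟨g, hg⟩ := h1
  refine ⟨g % f, ?_, ?_⟩
  · have h2 : Polynomial.aeval α (g % f + f * (g / f)) = y := by
      rw [EuclideanDomain.mod_add_div]; exact hg
    simpa [hα] using h2
  · have := Polynomial.natDegree_mod_lt g (q := f) hf.natDegree_pos.ne'
    omega

/-- An element of the cone over `E(α)` is the value at `α` of a polynomial of controlled degree
whose values on `E` lie in the cone over `E`. -/
theorem exists_poly_of_mem_sqCone_adjoin (hTE : ∀ t ∈ T, t ∈ E) {f : Polynomial E}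
    (hf : Irreducible f) {α : Ω} (hα : Polynomial.aeval α f = 0) {z : Ω}
    (hz : z ∈ sqCone T (IntermediateField.adjoin E {α}).toSubfield) :
    ∃ G : Polynomial E, Polynomial.aeval α G = z ∧ G.natDegree ≤ 2 * (f.natDegree - 1) ∧
      ∀ c : E, ((G.eval c : E) : Ω) ∈ sqCone T E := by
  induction hz using AddSubmonoid.closure_induction with
  | zero => exact ⟨0, by simp, by simp, fun c => by simp⟩
  | add u v _ _ hu hv =>
    obtain ⟨G, h1, h2, h3⟩ := hu
    obtain ⟨G', h1', h2', h3'⟩ := hv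
    refine ⟨G + G', by simp [h1, h1'], (Polynomial.natDegree_add_le _ _).trans (max_le h2 h2'),
      fun c => ?_⟩
    rw [Polynomial.eval_add]
    exact add_mem (h3 c) (h3' c)
  | mem u hu =>
    obtain ⟨t, ht, x, hx, rfl⟩ := hu
    obtain ⟨g, rfl, hg⟩ := exists_poly_of_mem_adjoin hf hα hx
    refine ⟨Polynomial.C ⟨t, hTE t ht⟩ * g ^ 2, ?_, ?_, fun c => ?_⟩
    · simp only [map_mul, map_pow, Polynomial.aeval_C]
      rfl
    · refine (Polynomial.natDegree_C_mul_le _ _).trans (Polynomial.natDegree_pow_le.trans ?_)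
      omega
    · simp only [Polynomial.eval_mul, Polynomial.eval_C, Polynomial.eval_pow]
      exact mem_sqCone ht (g.eval c).2

theorem neg_one_mem_of_maximal
    (hmax : ∀ E' : Subfield Ω, E ≤ E' → (-1 : Ω) ∉ sqCone T E' → E' ≤ E) {α : Ω} (hα : α ∉ E) :
    (-1 : Ω) ∈ sqCone T (IntermediateField.adjoin E {α}).toSubfield := by
  by_contra hcon
  apply hα
  apply hmax _ _ hcon
  · exact IntermediateField.mem_adjoin_simple_self E α
  · intro x hx
    exact (IntermediateField.adjoin E {α}).algebraMap_mem ⟨x, hx⟩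

/-- A non-square `a` of a maximal subfield has `-a` in the cone, since adjoining `√a` must bring
`-1` into the cone. -/
theorem neg_mem_sqCone_of_not_square [IsAlgClosed Ω] (hTE : ∀ t ∈ T, t ∈ E)
    (hE : (-1 : Ω) ∉ sqCone T E)
    (hmax : ∀ E' : Subfield Ω, E ≤ E' → (-1 : Ω) ∉ sqCone T E' → E' ≤ E)
    (a : E) (ha : ¬ IsSquare a) : (-a : Ω) ∈ sqCone T E := by
  obtain ⟨α, hα⟩ := IsAlgClosed.exists_pow_nat_eq (a : Ω) (n := 2) (by norm_num)
  have hαE : α ∉ E := by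
    intro h
    exact ha ⟨⟨α, h⟩, Subtype.ext (by simp [← hα, sq])⟩
  have hirr : Irreducible (Polynomial.X ^ 2 - Polynomial.C a : Polynomial E) := by
    refine X_pow_sub_C_irreducible_of_prime Nat.prime_two ?_
    intro b hb
    exact ha ⟨b, by rw [← hb, sq]⟩
  have hroot : Polynomial.aeval α (Polynomial.X ^ 2 - Polynomial.C a : Polynomial E) = 0 := by
    simp only [map_sub, map_pow, Polynomial.aeval_X, Polynomial.aeval_C, hα]
    exact sub_self _
  have key : ∀ z ∈ sqCone T (IntermediateField.adjoin E {α}).toSubfield,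
      ∃ u ∈ sqCone T E, ∃ v ∈ sqCone T E, ∃ w ∈ E, z = u + a * v + w * α := by
    intro z hz
    induction hz using AddSubmonoid.closure_induction with
    | zero => exact ⟨0, zero_mem _, 0, zero_mem _, 0, zero_mem _, by simp⟩
    | add y z _ _ hy hz =>
      obtain ⟨u, hu, v, hv, w, hw, rfl⟩ := hy
      obtain ⟨u', hu', v', hv', w', hw', rfl⟩ := hz
      exact ⟨u + u', add_mem hu hu', v + v', add_mem hv hv', w + w', add_mem hw hw', by ring⟩
    | mem y hy =>
      obtain ⟨t, ht, x, hx, rfl⟩ := hy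
      obtain ⟨g, rfl, hg⟩ := exists_poly_of_mem_adjoin hirr hroot hx
      rw [Polynomial.natDegree_X_pow_sub_C] at hg
      obtain ⟨b, c, rfl⟩ := Polynomial.exists_eq_X_add_C_of_natDegree_le_one (by omega)
      refine ⟨t * c ^ 2, mem_sqCone ht c.2, t * b ^ 2, mem_sqCone ht b.2, 2 * t * b * c,
        mul_mem (mul_mem (mul_mem (by exact_mod_cast natCast_mem E 2) (hTE t ht)) b.2) c.2, ?_⟩
      simp only [map_add, map_mul, Polynomial.aeval_C, Polynomial.aeval_X]
      change t * ((b : Ω) * α + c) ^ 2 = _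
      rw [← hα]
      ring
  obtain ⟨u, hu, v, hv, w, hw, h⟩ := key _ (neg_one_mem_of_maximal hmax hαE)
  have hw0 : w = 0 := by
    by_contra hw0
    apply hαE
    have : α = (-1 - u - a * v) / w := by field_simp; linear_combination -h
    rw [this]
    refine div_mem (sub_mem (sub_mem (neg_mem (one_mem _)) (sqCone_le hTE hu)) ?_) hw
    exact mul_mem a.2 (sqCone_le hTE hv)
  subst hw0
  have hv0 : v ≠ 0 := by
    rintro rfl
    apply hE
    rw [h]
    simpa using hu
  have : (-a : Ω) = (1 + u) * v * (v⁻¹) ^ 2 := by field_simp; linear_combination h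
  rw [this]
  refine mul_mem_sqCone (mul_mem_sqCone (add_mem (le_sqCone T.one_mem) hu) hv)
    (sq_mem_sqCone (inv_mem (sqCone_le hTE hv)))

theorem isSquare_of_mem_sqCone [IsAlgClosed Ω] (hTE : ∀ t ∈ T, t ∈ E)
    (hE : (-1 : Ω) ∉ sqCone T E)
    (hmax : ∀ E' : Subfield Ω, E ≤ E' → (-1 : Ω) ∉ sqCone T E' → E' ≤ E)
    (a : E) (ha : (a : Ω) ∈ sqCone T E) : IsSquare a := by
  by_contra hs
  have h := neg_mem_sqCone_of_not_square hTE hE hmax a hs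
  have ha0 : (a : Ω) ≠ 0 := by
    intro h0
    apply hs
    have : a = 0 := Subtype.ext h0
    rw [this]
    exact IsSquare.zero
  apply hE
  have : (-1 : Ω) = (-a) * a * ((a : Ω)⁻¹) ^ 2 := by field_simp
  rw [this]
  exact mul_mem_sqCone (mul_mem_sqCone h ha) (sq_mem_sqCone (inv_mem a.2))

/-- A maximal subfield as above is real closed, in the form needed below. -/
theorem realClosed_of_maximal [IsAlgClosed Ω] (hTE : ∀ t ∈ T, t ∈ E)
    (hE : (-1 : Ω) ∉ sqCone T E)
    (hmax : ∀ E' : Subfield Ω, E ≤ E' → (-1 : Ω) ∉ sqCone T E' → E' ≤ E) :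
    ∃ (_ : LinearOrder E) (_ : IsStrictOrderedRing E), PolyIVT E ∧
      ∀ a : E, (a : Ω) ∈ T → 0 ≤ a := by
  have hsq := isSquare_of_mem_sqCone hTE hE hmax
  have hsq' : ∀ a : E, IsSquare a → (a : Ω) ∈ sqCone T E := by
    rintro _ ⟨b, rfl⟩
    have := sq_mem_sqCone (T := T) b.2
    rw [sq] at this
    exact this
  obtain ⟨o, ho, hnn⟩ := exists_order_of_squares E
    (fun a b ha hb => hsq _ (add_mem (hsq' a ha) (hsq' b hb)))
    (fun h => hE (by simpa using hsq' _ h))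
    (fun a => by
      by_cases ha : IsSquare a
      · exact Or.inl ha
      · exact Or.inr (hsq _ (by simpa using neg_mem_sqCone_of_not_square hTE hE hmax a ha)))
  refine ⟨o, ho, polyIVT_of_irreducible ?_, fun a ha => (hnn a).2 (hsq a (le_sqCone ha))⟩
  intro f hf hdeg
  obtain ⟨α, hα⟩ := IsAlgClosed.exists_aeval_eq_zero Ω f
    (Polynomial.degree_pos_of_irreducible hf).ne'
  have hαE : α ∉ E := by
    intro h
    have h0 : f.IsRoot (⟨α, h⟩ : E) := by
      have : Polynomial.aeval (algebraMap E Ω ⟨α, h⟩) f = 0 := hα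
      rw [Polynomial.aeval_algebraMap_apply] at this
      rw [Polynomial.IsRoot.def]
      simpa using this
    have := Polynomial.degree_eq_one_of_irreducible_of_root hf h0
    have h1 : f.natDegree = 1 := Polynomial.natDegree_eq_of_degree_eq_some this
    omega
  obtain ⟨G, h1, h2, h3⟩ := exists_poly_of_mem_sqCone_adjoin hTE hf hα
    (neg_one_mem_of_maximal hmax hαE)
  have hdvd : f ∣ G + 1 := by
    have := minpoly.dvd E α (p := G + 1) (by simp [h1])
    rw [← minpoly.eq_of_irreducible hf hα] at this
    exact (dvd_mul_right _ _).trans this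
  obtain ⟨h, hh⟩ := hdvd
  exact ⟨G, h, hh, h2, fun c => (hnn _).2 (hsq _ (h3 c))⟩

end maximal

universe u

/-- A commutative ring with a proper preordering maps to an ordered field with the intermediate
value property, the preordering becoming nonnegative. -/
theorem exists_realClosed_hom {B : Type u} [CommRing B] (T : Subsemiring B)
    (hsq : ∀ b : B, b ^ 2 ∈ T) (hT : (-1 : B) ∉ T) :
    ∃ (R : Type u) (_ : Field R) (_ : LinearOrder R) (_ : IsStrictOrderedRing R)
      (φ : B →+* R), PolyIVT R ∧ ∀ t ∈ T, 0 ≤ φ t := by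
  obtain ⟨I, hI, hIs⟩ := exists_domain_of_neg_one_notMem T hsq hT
  let K := FractionRing (B ⧸ I)
  let Ω := AlgebraicClosure K
  let ψ : B →+* K := (algebraMap (B ⧸ I) K).comp (Ideal.Quotient.mk I)
  let j : B →+* Ω := (algebraMap K Ω).comp ψ
  let T' : Subsemiring Ω := T.map j
  have hψ : ∀ b, ψ b = 0 ↔ b ∈ I := by
    intro b
    simp only [ψ, RingHom.comp_apply]
    rw [IsFractionRing.to_map_eq_zero_iff, Ideal.Quotient.eq_zero_iff_mem]
  have hfrac : ∀ x : K, ∃ a b, b ∉ I ∧ x = ψ a / ψ b := by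
    intro x
    obtain ⟨a, b, hb, rfl⟩ := IsFractionRing.div_surjective (A := B ⧸ I) x
    obtain ⟨a, rfl⟩ := Ideal.Quotient.mk_surjective a
    obtain ⟨b, rfl⟩ := Ideal.Quotient.mk_surjective b
    refine ⟨a, b, ?_, rfl⟩
    intro h
    exact nonZeroDivisors.ne_zero hb (Ideal.Quotient.eq_zero_iff_mem.2 h)
  have key : ∀ z ∈ sqCone T' (algebraMap K Ω).fieldRange, ∃ s ∈ T, ∃ b, b ∉ I ∧
      z * j b ^ 2 = j s := by
    intro z hz
    induction hz using AddSubmonoid.closure_induction with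
    | zero => exact ⟨0, zero_mem _, 1, fun h => hI.ne_top ((Ideal.eq_top_iff_one I).2 h), by simp⟩
    | add y z _ _ hy hz =>
      obtain ⟨s, hs, b, hb, h⟩ := hy
      obtain ⟨s', hs', b', hb', h'⟩ := hz
      refine ⟨s * b' ^ 2 + s' * b ^ 2, add_mem (mul_mem hs (hsq _)) (mul_mem hs' (hsq _)),
        b * b', fun hbb => (hI.mem_or_mem hbb).elim hb hb', ?_⟩
      simp only [map_mul, map_add, map_pow]
      rw [← h, ← h']
      ring
    | mem y hy =>
      obtain ⟨_, ⟨t, ht, rfl⟩, _, ⟨x, rfl⟩, rfl⟩ := hy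
      obtain ⟨a, b, hb, rfl⟩ := hfrac x
      refine ⟨t * a ^ 2, mul_mem ht (hsq _), b, hb, ?_⟩
      have hb0 : ψ b ≠ 0 := fun h => hb ((hψ b).1 h)
      simp only [map_mul, map_pow, j, RingHom.comp_apply, map_div₀]
      have : algebraMap K Ω (ψ b) ≠ 0 := by simpa using hb0
      rw [div_pow, mul_assoc, div_mul_cancel₀ _ (pow_ne_zero 2 this)]
  have hK : (-1 : Ω) ∉ sqCone T' (algebraMap K Ω).fieldRange := by
    intro h
    obtain ⟨s, hs, b, hb, h⟩ := key _ h
    apply hb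
    apply hIs b s hs
    rw [← hψ]
    apply (algebraMap K Ω).injective
    have : j (b ^ 2 + s) = 0 := by
      simp only [map_add, map_pow]
      rw [← h]; ring
    rw [map_zero]
    exact this
  obtain ⟨E, hKE, hE, hmax⟩ := exists_maximal_subfield _ hK
  have hjE : ∀ b, j b ∈ E := fun b => hKE ⟨ψ b, rfl⟩
  obtain ⟨o, ho, hivt, hnn⟩ := realClosed_of_maximal (by
    rintro _ ⟨t, -, rfl⟩
    exact hjE t) hE hmax
  refine ⟨E, inferInstance, o, ho, j.codRestrict E hjE, hivt, fun t ht => hnn _ ⟨t, ht, rfl⟩⟩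

/-! ### Sign behaviour of polynomials over a real closed field -/

section RealPoly
variable {R : Type*} [Field R] [LinearOrder R] [IsStrictOrderedRing R]

theorem exists_forall_ge_eval_pos (f : Polynomial R) (hf : 0 < f.leadingCoeff) :
    ∃ M ε : R, 0 < ε ∧ ∀ x, M ≤ x → ε ≤ f.eval x := by
  induction hN : f.natDegree generalizing f with
  | zero =>
    refine ⟨0, f.leadingCoeff, hf, fun x _ => ?_⟩
    rw [Polynomial.eq_C_of_natDegree_eq_zero hN]
    simp
  | succ N ih =>
    have hd : f.divX.natDegree = N := by rw [Polynomial.natDegree_divX_eq_natDegree_tsub_one, hN]; rfl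
    have hl : f.divX.leadingCoeff = f.leadingCoeff := by
      rw [Polynomial.leadingCoeff, hd, Polynomial.coeff_divX, Polynomial.leadingCoeff, hN]
    obtain ⟨M, ε, hε, hM⟩ := ih f.divX (by rwa [hl]) hd
    refine ⟨max (max M 0) ((1 - f.coeff 0) / ε), 1, one_pos, fun x hx => ?_⟩
    have h1 : M ≤ x := (le_max_left _ _).trans ((le_max_left _ _).trans hx)
    have h2 : 0 ≤ x := (le_max_right M 0).trans ((le_max_left _ _).trans hx)
    have h3 : (1 - f.coeff 0) / ε ≤ x := (le_max_right _ _).trans hx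
    rw [div_le_iff₀ hε] at h3
    have h4 : f.eval x = x * f.divX.eval x + f.coeff 0 := by
      have := congrArg (Polynomial.eval x) (Polynomial.X_mul_divX_add f).symm
      simpa only [Polynomial.eval_add, Polynomial.eval_mul, Polynomial.eval_X,
        Polynomial.eval_C] using this
    rw [h4]
    nlinarith [hM x h1]

theorem exists_forall_ge_sign_eval (f : Polynomial R) (hf : f ≠ 0) :
    ∃ M : R, ∀ x, M ≤ x → SignType.sign (f.eval x) = SignType.sign f.leadingCoeff := by
  rcases lt_or_gt_of_ne (Polynomial.leadingCoeff_ne_zero.2 hf) with h | h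
  · obtain ⟨M, ε, hε, hM⟩ := exists_forall_ge_eval_pos (-f) (by simpa using h)
    refine ⟨M, fun x hx => ?_⟩
    have := hM x hx
    rw [Polynomial.eval_neg] at this
    rw [sign_neg h, sign_neg (by linarith)]
  · obtain ⟨M, ε, hε, hM⟩ := exists_forall_ge_eval_pos f h
    refine ⟨M, fun x hx => ?_⟩
    rw [sign_pos h, sign_pos (by linarith [hM x hx])]

theorem exists_forall_le_sign_eval (f : Polynomial R) (hf : f ≠ 0) :
    ∃ M : R, ∀ x, x ≤ -M → SignType.sign (f.eval x) =
      SignType.sign ((-1) ^ f.natDegree * f.leadingCoeff) := by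
  have hX : (-Polynomial.X : Polynomial R).natDegree = 1 := by simp
  have h0 : f.comp (-Polynomial.X) ≠ 0 := by
    intro h
    rw [Polynomial.comp_eq_zero_iff] at h
    rcases h with h | ⟨-, h⟩
    · exact hf h
    · rw [h] at hX; simp at hX
  obtain ⟨M, hM⟩ := exists_forall_ge_sign_eval (f.comp (-Polynomial.X)) h0
  refine ⟨M, fun x hx => ?_⟩
  have := hM (-x) (by linarith)
  rw [Polynomial.leadingCoeff_comp (by simp)] at this
  simpa [mul_comm] using this

theorem sign_eval_eq_of_no_root (hR : PolyIVT R) (f : Polynomial R) {a b : R} (hab : a ≤ b)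
    (h : ∀ c, a ≤ c → c ≤ b → f.eval c ≠ 0) :
    SignType.sign (f.eval a) = SignType.sign (f.eval b) := by
  rcases hab.eq_or_lt with rfl | hab
  · rfl
  have hb := h b hab.le le_rfl
  have ha := h a le_rfl hab.le
  have hn : ¬ f.eval a * f.eval b < 0 := by
    intro hlt
    obtain ⟨c, h1, h2, h3⟩ := hR f a b hab hlt
    exact h c h1.le h2.le h3
  rcases lt_or_gt_of_ne ha with h1 | h1 <;> rcases lt_or_gt_of_ne hb with h2 | h2
  · rw [sign_neg h1, sign_neg h2]
  · exact absurd (mul_neg_of_neg_of_pos h1 h2) hn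
  · exact absurd (mul_neg_of_pos_of_neg h1 h2) hn
  · rw [sign_pos h1, sign_pos h2]

/-- Rolle's theorem for polynomials, from the intermediate value property: with `b` the next root
after `a`, write `f = (X - a)^m (X - b)^n g` and look at the signs of the cofactor of
`(X - a)^(m-1) (X - b)^(n-1)` in `f'` at `a` and `b`. -/
theorem rolle_of_polyIVT (hR : PolyIVT R) (f : Polynomial R) (hf : f ≠ 0) {a b : R} (hab : a < b)
    (ha : f.eval a = 0) (hb : f.eval b = 0) :
    ∃ c, a < c ∧ c < b ∧ f.derivative.eval c = 0 := by
  classical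
  obtain ⟨b₁, hb₁⟩ := (f.roots.toFinset.filter (a < ·)).exists_minimal
    ⟨b, by simp [hf, hb, hab]⟩
  have hb₁m : f.eval b₁ = 0 ∧ a < b₁ := by
    have := hb₁.prop
    simp [hf] at this
    exact this
  have hmin : ∀ c, a < c → f.eval c = 0 → b₁ ≤ c := by
    intro c hc hc0
    rcases le_total b₁ c with h | h
    · exact h
    · exact hb₁.le_of_le (by simp [hf, hc, hc0]) h
  suffices ∃ c, a < c ∧ c < b₁ ∧ f.derivative.eval c = 0 by
    obtain ⟨c, h1, h2, h3⟩ := this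
    exact ⟨c, h1, h2.trans_le (hmin b hab hb), h3⟩
  obtain ⟨hb0, hab₁⟩ := hb₁m
  obtain ⟨f₁, h1, h1'⟩ := Polynomial.exists_eq_pow_rootMultiplicity_mul_and_not_dvd f hf a
  have hm := (Polynomial.rootMultiplicity_pos hf).2 ha
  obtain ⟨m, hm'⟩ := Nat.exists_eq_succ_of_ne_zero hm.ne'
  have hf₁ : f₁ ≠ 0 := by rintro rfl; simp at h1'
  obtain ⟨g, h2, h2'⟩ := Polynomial.exists_eq_pow_rootMultiplicity_mul_and_not_dvd f₁ hf₁ b₁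
  have hf₁b : f₁.eval b₁ = 0 := by
    rw [h1] at hb0
    simp only [Polynomial.eval_mul, Polynomial.eval_pow, Polynomial.eval_sub, Polynomial.eval_X,
      Polynomial.eval_C, mul_eq_zero] at hb0
    rcases hb0 with h | h
    · exact absurd h (pow_ne_zero _ (sub_pos.2 hab₁).ne')
    · exact h
  have hn := (Polynomial.rootMultiplicity_pos hf₁).2 hf₁b
  obtain ⟨n, hn'⟩ := Nat.exists_eq_succ_of_ne_zero hn.ne'
  rw [hm'] at h1
  rw [hn'] at h2
  have hga : g.eval a ≠ 0 := by
    intro h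
    apply h1'
    rw [Polynomial.dvd_iff_isRoot, Polynomial.IsRoot.def, h2]
    simp [h]
  have hgb : g.eval b₁ ≠ 0 := by
    intro h
    apply h2'
    rwa [Polynomial.dvd_iff_isRoot, Polynomial.IsRoot.def]
  have hgs := sign_eval_eq_of_no_root hR g hab₁.le (by
    intro c hc hc' hc0
    rcases hc.eq_or_lt with rfl | hc
    · exact hga hc0
    rcases hc'.eq_or_lt with rfl | hc'
    · exact hgb hc0
    · exact absurd (hmin c hc (by rw [h1, h2]; simp [hc0])) (not_le.2 hc'))
  have hgpos : 0 < g.eval a * g.eval b₁ := by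
    rcases lt_or_gt_of_ne hga with h | h
    · rw [sign_neg h, eq_comm, sign_eq_neg_one_iff] at hgs
      exact mul_pos_of_neg_of_neg h hgs
    · rw [sign_pos h, eq_comm, sign_eq_one_iff] at hgs
      exact mul_pos h hgs
  let h : Polynomial R := Polynomial.C (m + 1 : R) * (Polynomial.X - Polynomial.C b₁) * g +
    Polynomial.C (n + 1 : R) * (Polynomial.X - Polynomial.C a) * g +
    (Polynomial.X - Polynomial.C a) * (Polynomial.X - Polynomial.C b₁) * g.derivative
  have hder : f.derivative = (Polynomial.X - Polynomial.C a) ^ m *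
      (Polynomial.X - Polynomial.C b₁) ^ n * h := by
    rw [h1, h2]
    simp only [Polynomial.derivative_mul, Polynomial.derivative_pow_succ, Polynomial.derivative_sub,
      Polynomial.derivative_X, Polynomial.derivative_C, h, Nat.succ_eq_add_one]
    ring
  obtain ⟨c, hc1, hc2, hc⟩ := hR h a b₁ hab₁ (by
    simp only [h, Polynomial.eval_add, Polynomial.eval_mul, Polynomial.eval_C, Polynomial.eval_sub,
      Polynomial.eval_X]
    have : ((m + 1 : R) * (a - b₁) * g.eval a + (n + 1) * (a - a) * g.eval a +
      (a - a) * (a - b₁) * g.derivative.eval a) * ((m + 1) * (b₁ - b₁) * g.eval b₁ +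
      (n + 1) * (b₁ - a) * g.eval b₁ + (b₁ - a) * (b₁ - b₁) * g.derivative.eval b₁) =
      - ((m + 1) * (n + 1) * (b₁ - a) ^ 2 * (g.eval a * g.eval b₁)) := by ring
    rw [this, neg_lt_zero]
    have : 0 < b₁ - a := sub_pos.2 hab₁
    positivity)
  exact ⟨c, hc1, hc2, by rw [hder]; simp [hc]⟩

/-- If `f'` has no zero in `(s, t)` and `f` has a zero there, `f` changes sign across `[s, t]`. -/
theorem mul_neg_of_root_of_derivative_ne (hR : PolyIVT R) (f : Polynomial R)
    (hf : f.natDegree ≠ 0) {s r t : R} (hsr : s < r) (hrt : r < t) (hr : f.eval r = 0)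
    (hd : ∀ c, s < c → c < t → f.derivative.eval c ≠ 0) : f.eval s * f.eval t < 0 := by
  have hroll : ∀ u v, s ≤ u → u < v → v ≤ t → f.eval u ≠ f.eval v := by
    intro u v hu huv hv heq
    obtain ⟨c, h1, h2, h3⟩ := rolle_of_polyIVT hR (f - Polynomial.C (f.eval u)) (by
      intro h0
      apply hf
      rw [sub_eq_zero.1 h0]
      simp) huv (by simp) (by simp [heq])
    refine hd c (hu.trans_lt h1) (h2.trans_le hv) (by simpa using h3)
  have hs0 : f.eval s ≠ 0 := hr ▸ hroll s r le_rfl hsr hrt.le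
  have ht0 : f.eval t ≠ 0 := hr ▸ (hroll r t hsr.le hrt le_rfl).symm
  -- equal signs at `s` and `t` make a value attained twice
  have aux : ∀ q : Polynomial R, (∀ u v, s ≤ u → u < v → v ≤ t → q.eval u ≠ q.eval v) →
      q.eval r = 0 → 0 < q.eval s → 0 < q.eval t → False := by
    intro q hq hqr hs ht
    rcases lt_trichotomy (q.eval s) (q.eval t) with h | h | h
    · obtain ⟨c, h1, h2, h3⟩ := hR (q - Polynomial.C (q.eval s)) r t hrt (by
        simp only [Polynomial.eval_sub, Polynomial.eval_C, hqr]
        apply mul_neg_of_neg_of_pos <;> linarith)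
      simp only [Polynomial.eval_sub, Polynomial.eval_C, sub_eq_zero] at h3
      exact hq s c le_rfl (hsr.trans h1) h2.le h3.symm
    · exact hq s t le_rfl (hsr.trans hrt) le_rfl h
    · obtain ⟨c, h1, h2, h3⟩ := hR (q - Polynomial.C (q.eval t)) s r hsr (by
        simp only [Polynomial.eval_sub, Polynomial.eval_C, hqr]
        apply mul_neg_of_pos_of_neg <;> linarith)
      simp only [Polynomial.eval_sub, Polynomial.eval_C, sub_eq_zero] at h3
      exact hq c t h1.le (h2.trans hrt) le_rfl h3
  rcases lt_or_gt_of_ne hs0 with h1 | h1 <;> rcases lt_or_gt_of_ne ht0 with h2 | h2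
  · exact (aux (-f) (fun u v a b c => by simpa using hroll u v a b c) (by simpa using hr)
      (by simpa using h1) (by simpa using h2)).elim
  · exact mul_neg_of_neg_of_pos h1 h2
  · exact mul_neg_of_pos_of_neg h1 h2
  · exact (aux f hroll hr h1 h2).elim
end RealPoly

/-! ### Matching the roots of polynomials over two real closed fields -/

section Matching
set_option linter.unusedSectionVars false
variable {R₁ R₂ : Type*} [Field R₁] [LinearOrder R₁] [IsStrictOrderedRing R₁]
  [Field R₂] [LinearOrder R₂] [IsStrictOrderedRing R₂]

/-- `b` and `b'` occupy the same position relative to the two coordinates of `Z`. -/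
def ZCompat (Z : Set (R₁ × R₂)) (b : R₁) (b' : R₂) : Prop :=
  ∀ z ∈ Z, (z.1 < b ↔ z.2 < b') ∧ (b < z.1 ↔ b' < z.2)

/-- `Z` is the graph of an order isomorphism between its two projections. -/
def ZMono (Z : Set (R₁ × R₂)) : Prop := ∀ z ∈ Z, ZCompat Z z.1 z.2

variable {Z Y : Set (R₁ × R₂)} {b : R₁} {b' : R₂}

theorem ZCompat.mono (h : ZCompat Z b b') (hY : Y ⊆ Z) : ZCompat Y b b' :=
  fun z hz => h z (hY hz)

theorem ZMono.insert (hZ : ZMono Z) (hb : ZCompat Z b b') : ZMono (insert (b, b') Z) := by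
  rintro z (rfl | hz) w (rfl | hw)
  · simp
  · exact hb w hw
  · exact ⟨(hb z hz).2, (hb z hz).1⟩
  · exact hZ z hz w hw

theorem ZMono.swap (hZ : ZMono Z) : ZMono (Prod.swap ⁻¹' Z : Set (R₂ × R₁)) :=
  fun z hz w hw => ⟨(hZ z.swap hz w.swap hw).1.symm, (hZ z.swap hz w.swap hw).2.symm⟩

theorem ZCompat.of_swap (h : ZCompat (Prod.swap ⁻¹' Z : Set (R₂ × R₁)) b' b) : ZCompat Z b b' :=
  fun z hz => ⟨(h z.swap (by simpa using hz)).1.symm, (h z.swap (by simpa using hz)).2.symm⟩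

theorem ZCompat.swap (h : ZCompat Z b b') : ZCompat (Prod.swap ⁻¹' Z : Set (R₂ × R₁)) b' b :=
  fun z hz => ⟨(h z.swap hz).1.symm, (h z.swap hz).2.symm⟩

theorem ZCompat.eq_of_fst {z : R₁ × R₂} (h : ZCompat Z b b') (hz : z ∈ Z) (hzb : z.1 = b) :
    z.2 = b' := by
  obtain ⟨h1, h2⟩ := h z hz
  rw [hzb] at h1 h2
  simp only [lt_self_iff_false, false_iff, not_lt] at h1 h2
  exact le_antisymm h2 h1

theorem ZCompat.eq_of_snd {z : R₁ × R₂} (h : ZCompat Z b b') (hz : z ∈ Z) (hzb : z.2 = b') :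
    z.1 = b := by
  obtain ⟨h1, h2⟩ := h z hz
  rw [hzb] at h1 h2
  simp only [lt_self_iff_false, iff_false, not_lt] at h1 h2
  exact le_antisymm h2 h1

theorem exists_nearest (hY : Y.Finite) (hlo : ∃ z ∈ Y, z.1 < b) (hhi : ∃ z ∈ Y, b < z.1)
    (hb : ∀ z ∈ Y, z.1 ≠ b) :
    ∃ s ∈ Y, ∃ t ∈ Y, s.1 < b ∧ b < t.1 ∧ ∀ z ∈ Y, z.1 ≤ s.1 ∨ t.1 ≤ z.1 := by
  obtain ⟨s, hs, hsm⟩ := Set.exists_max_image {z ∈ Y | z.1 < b} Prod.fst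
    (hY.subset fun z hz => hz.1) (by obtain ⟨z, h1, h2⟩ := hlo; exact ⟨z, h1, h2⟩)
  obtain ⟨t, ht, htm⟩ := Set.exists_min_image {z ∈ Y | b < z.1} Prod.fst
    (hY.subset fun z hz => hz.1) (by obtain ⟨z, h1, h2⟩ := hhi; exact ⟨z, h1, h2⟩)
  refine ⟨s, hs.1, t, ht.1, hs.2, ht.2, fun z hz => ?_⟩
  rcases lt_or_gt_of_ne (hb z hz) with h | h
  · exact Or.inl (hsm z ⟨hz, h⟩)
  · exact Or.inr (htm z ⟨hz, h⟩)

theorem exists_far_aux {R ι : Type*} [Field R] [LinearOrder R] [IsStrictOrderedRing R]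
    {Z : Set ι} (hZ : Z.Finite) (f : ι → R) (M₀ : R) :
    ∃ M, M₀ < M ∧ 0 < M ∧ ∀ z ∈ Z, -M < f z ∧ f z < M := by
  obtain ⟨B, hB⟩ := (hZ.image fun z => |f z|).bddAbove
  refine ⟨max (max M₀ B) 0 + 1, ?_, ?_, fun z hz => ?_⟩
  · exact ((le_max_left _ _).trans (le_max_left _ _)).trans_lt (lt_add_one _)
  · exact (le_max_right _ _).trans_lt (lt_add_one _)
  · rw [← abs_lt]
    exact (hB ⟨z, hz, rfl⟩).trans_lt
      (((le_max_right _ _).trans (le_max_left _ _)).trans_lt (lt_add_one _))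

/-- Matched far points can be added to `Z` on both sides. -/
theorem exists_far (hZ : Z.Finite) (hm : ZMono Z) (M₀ : R₁) (M₀' : R₂) :
    ∃ M M', M₀ < M ∧ M₀' < M' ∧ ZMono (insert (M, M') (insert (-M, -M') Z)) := by
  obtain ⟨M, h1, h2, h3⟩ := exists_far_aux hZ Prod.fst M₀
  obtain ⟨M', h1', h2', h3'⟩ := exists_far_aux hZ Prod.snd M₀'
  refine ⟨M, M', h1, h1', ZMono.insert (ZMono.insert hm ?_) ?_⟩
  · intro z hz
    refine ⟨iff_of_false (not_lt.2 (h3 z hz).1.le) (not_lt.2 (h3' z hz).1.le),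
      iff_of_true (h3 z hz).1 (h3' z hz).1⟩
  · rintro z (rfl | hz)
    · refine ⟨iff_of_true (by simp; linarith) (by simp; linarith),
        iff_of_false (by simp; linarith) (by simp; linarith)⟩
    · exact ⟨iff_of_true (h3 z hz).2 (h3' z hz).2,
        iff_of_false (not_lt.2 (h3 z hz).2.le) (not_lt.2 (h3' z hz).2.le)⟩

/-- Every `b` has a partner in matching position, and an interval of partners unless `b` is itself
listed. -/
theorem exists_compat (hZ : Z.Finite) (hm : ZMono Z) (b : R₁) :
    ∃ b', ZCompat Z b b' ∧ ((∀ z ∈ Z, z.1 ≠ b) →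
      ∃ s t : R₂, s < t ∧ ∀ c, s < c → c < t → ZCompat Z b c) := by
  by_cases hb : ∃ z ∈ Z, z.1 = b
  · obtain ⟨z, hz, rfl⟩ := hb
    exact ⟨z.2, hm z hz, fun h => absurd rfl (h z hz)⟩
  · push Not at hb
    obtain ⟨M, M', hM, -, hmf⟩ := exists_far hZ hm |b| 0
    rw [abs_lt] at hM
    obtain ⟨s, hs, t, ht, hsb, hbt, hnear⟩ := exists_nearest
      (Y := insert (M, M') (insert (-M, -M') Z)) (b := b) ((hZ.insert _).insert _)
      ⟨(-M, -M'), by simp, hM.1⟩ ⟨(M, M'), by simp, hM.2⟩ (by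
        rintro z (rfl | rfl | hz)
        · exact hM.2.ne'
        · exact hM.1.ne
        · exact hb z hz)
    have hst : s.2 < t.2 := (hmf t ht s hs).1.1 (hsb.trans hbt)
    have key : ∀ c, s.2 < c → c < t.2 → ZCompat Z b c := by
      intro c hsc hct z hz
      have hz' : z ∈ insert (M, M') (insert (-M, -M') Z) := by simp [hz]
      rcases hnear z hz' with h | h
      · have h' : z.2 ≤ s.2 := not_lt.1 fun h' => not_lt.2 h ((hmf z hz' s hs).1.2 h')
        exact ⟨iff_of_true (h.trans_lt hsb) (h'.trans_lt hsc),
          iff_of_false (not_lt.2 (h.trans_lt hsb).le) (not_lt.2 (h'.trans_lt hsc).le)⟩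
      · have h' : t.2 ≤ z.2 := not_lt.1 fun h' => not_lt.2 h ((hmf t ht z hz').1.2 h')
        exact ⟨iff_of_false (not_lt.2 (hbt.trans_le h).le) (not_lt.2 (hct.trans_le h').le),
          iff_of_true (hbt.trans_le h) (hct.trans_le h')⟩
    refine ⟨(s.2 + t.2) / 2, key _ (by linarith) (by linarith), fun _ => ⟨s.2, t.2, hst, key⟩⟩

/-- `Z` lists, in matching order, the roots of the pairs of polynomials in `𝒬`, and the signs of
each pair agree at points in matching position. -/
structure Matched (Z : Set (R₁ × R₂)) (𝒬 : Set (Polynomial R₁ × Polynomial R₂)) : Prop where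
  fin : Z.Finite
  mono : ZMono Z
  nz : ∀ Q ∈ 𝒬, Q.1 ≠ 0 ∧ Q.2 ≠ 0
  cov₁ : ∀ Q ∈ 𝒬, ∀ r, Q.1.eval r = 0 → ∃ r', (r, r') ∈ Z
  cov₂ : ∀ Q ∈ 𝒬, ∀ r', Q.2.eval r' = 0 → ∃ r, (r, r') ∈ Z
  root : ∀ z ∈ Z, ∃ Q ∈ 𝒬, Q.1.eval z.1 = 0 ∧ Q.2.eval z.2 = 0
  sgn : ∀ b b', ZCompat Z b b' → ∀ Q ∈ 𝒬,
    SignType.sign (Q.1.eval b) = SignType.sign (Q.2.eval b')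

theorem Matched.prune (hR₂ : PolyIVT R₂) {𝒬 𝒬' : Set (Polynomial R₁ × Polynomial R₂)}
    (h : Matched Z 𝒬) (hQ : 𝒬' ⊆ 𝒬) :
    Matched {z ∈ Z | ∃ Q ∈ 𝒬', Q.1.eval z.1 = 0 ∧ Q.2.eval z.2 = 0} 𝒬' := by
  have hcov₁ : ∀ Q ∈ 𝒬', ∀ r, Q.1.eval r = 0 →
      ∃ r', (r, r') ∈ {z ∈ Z | ∃ Q ∈ 𝒬', Q.1.eval z.1 = 0 ∧ Q.2.eval z.2 = 0} := by
    intro Q hQm r hr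
    obtain ⟨r', hr'⟩ := h.cov₁ Q (hQ hQm) r hr
    refine ⟨r', hr', Q, hQm, hr, ?_⟩
    have := h.sgn r r' (h.mono _ hr') Q (hQ hQm)
    rwa [hr, sign_zero, eq_comm, sign_eq_zero_iff] at this
  have hcov₂ : ∀ Q ∈ 𝒬', ∀ r', Q.2.eval r' = 0 →
      ∃ r, (r, r') ∈ {z ∈ Z | ∃ Q ∈ 𝒬', Q.1.eval z.1 = 0 ∧ Q.2.eval z.2 = 0} := by
    intro Q hQm r' hr'
    obtain ⟨r, hr⟩ := h.cov₂ Q (hQ hQm) r' hr'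
    refine ⟨r, hr, Q, hQm, ?_, hr'⟩
    have := h.sgn r r' (h.mono _ hr) Q (hQ hQm)
    rwa [hr', sign_zero, sign_eq_zero_iff] at this
  refine ⟨h.fin.subset (Set.sep_subset _ _), fun z hz => (h.mono z hz.1).mono (Set.sep_subset _ _),
    fun Q hQm => h.nz Q (hQ hQm), hcov₁, hcov₂, fun z hz => hz.2, ?_⟩
  set Z' := {z ∈ Z | ∃ Q ∈ 𝒬', Q.1.eval z.1 = 0 ∧ Q.2.eval z.2 = 0} with hZ'
  intro b b' hbb Q hQm
  by_cases hb : ∃ z ∈ Z', z.1 = b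
  · obtain ⟨z, hz, rfl⟩ := hb
    rw [← hbb.eq_of_fst hz rfl]
    exact h.sgn _ _ (h.mono z hz.1) Q (hQ hQm)
  · push Not at hb
    obtain ⟨b'', hb'', -⟩ := exists_compat h.fin h.mono b
    rw [h.sgn b b'' hb'' Q (hQ hQm)]
    have hno : ∀ u v, ZCompat Z' b u → ZCompat Z' b v → ∀ c, u ≤ c → c ≤ v → Q.2.eval c ≠ 0 := by
      intro u v hu hv c huc hcv hc
      obtain ⟨r, hr⟩ := hcov₂ Q hQm c hc
      rcases lt_or_gt_of_ne (hb _ hr) with h1 | h1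
      · exact absurd ((hu _ hr).1.1 h1) (not_lt.2 huc)
      · exact absurd ((hv _ hr).2.1 h1) (not_lt.2 hcv)
    have hb3 : ZCompat Z' b b'' := hb''.mono (Set.sep_subset _ _)
    rcases le_total b' b'' with hle | hle
    · exact (sign_eval_eq_of_no_root hR₂ Q.2 hle (hno _ _ hbb hb3)).symm
    · exact sign_eval_eq_of_no_root hR₂ Q.2 hle (hno _ _ hb3 hbb)

theorem sign_mul_neg_iff {R : Type*} [Field R] [LinearOrder R] [IsStrictOrderedRing R] (x y : R) :
    x * y < 0 ↔ SignType.sign x * SignType.sign y = -1 := by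
  rw [← sign_mul, sign_eq_neg_one_iff]

/-- Far points for `P` where the sign of `P` is dictated by its leading term. -/
theorem exists_sign_bound {R : Type*} [Field R] [LinearOrder R] [IsStrictOrderedRing R]
    (P : Polynomial R) (hP : P ≠ 0) (c : R) : ∃ M₀ : R, c ≤ M₀ ∧ ∀ M, M₀ < M →
      SignType.sign (P.eval M) = SignType.sign P.leadingCoeff ∧
      SignType.sign (P.eval (-M)) = SignType.sign ((-1) ^ P.natDegree * P.leadingCoeff) := by
  obtain ⟨M₁, h1⟩ := exists_forall_ge_sign_eval P hP
  obtain ⟨M₂, h2⟩ := exists_forall_le_sign_eval P hP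
  refine ⟨max c (max M₁ M₂), le_max_left _ _, fun M hM => ⟨h1 M ?_, h2 (-M) ?_⟩⟩
  · exact ((le_max_left _ _).trans (le_max_right _ _)).trans hM.le
  · exact neg_le_neg (((le_max_right _ _).trans (le_max_right _ _)).trans hM.le)

/-- Enlarging `Z` by matched far points, at which the signs of `P₁`, `P₂` agree. -/
theorem exists_far_sign (hZ : Z.Finite) (hm : ZMono Z) {P₁ : Polynomial R₁} {P₂ : Polynomial R₂}
    (hP₁ : P₁ ≠ 0) (hP₂ : P₂ ≠ 0)
    (hdeg : P₁.natDegree = P₂.natDegree)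
    (hlc : SignType.sign P₁.leadingCoeff = SignType.sign P₂.leadingCoeff)
    (c : R₁) (c' : R₂) : ∃ M M', c < M ∧ c' < M' ∧
      ZMono (insert (M, M') (insert (-M, -M') Z)) ∧
      SignType.sign (P₁.eval M) = SignType.sign (P₂.eval M') ∧
      SignType.sign (P₁.eval (-M)) = SignType.sign (P₂.eval (-M')) := by
  obtain ⟨M₀, h1, h2⟩ := exists_sign_bound P₁ hP₁ c
  obtain ⟨M₀', h1', h2'⟩ := exists_sign_bound P₂ hP₂ c'
  obtain ⟨M, M', hM, hM', hmf⟩ := exists_far hZ hm M₀ M₀'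
  refine ⟨M, M', h1.trans_lt hM, h1'.trans_lt hM', hmf, ?_, ?_⟩
  · rw [(h2 M hM).1, (h2' M' hM').1, hlc]
  · rw [(h2 M hM).2, (h2' M' hM').2, sign_mul, sign_mul, hlc, hdeg, sign_pow, sign_pow]
    simp

/-- A root of `P₁` outside `Z` is matched by a root of `P₂`. -/
theorem exists_matching_root (hR₁ : PolyIVT R₁) (hR₂ : PolyIVT R₂) (hZ : Z.Finite) (hm : ZMono Z)
    {P₁ : Polynomial R₁} {P₂ : Polynomial R₂} (hd₁ : P₁.natDegree ≠ 0)
    (hdeg : P₁.natDegree = P₂.natDegree)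
    (hlc : SignType.sign P₁.leadingCoeff = SignType.sign P₂.leadingCoeff)
    (hder : ∀ r, P₁.derivative.eval r = 0 → ∃ r', (r, r') ∈ Z)
    (hH : ∀ z ∈ Z, SignType.sign (P₁.eval z.1) = SignType.sign (P₂.eval z.2))
    (r : R₁) (hr : P₁.eval r = 0) (hrZ : ∀ z ∈ Z, z.1 ≠ r) :
    ∃ r', P₂.eval r' = 0 ∧ ZCompat Z r r' := by
  have hP₁ : P₁ ≠ 0 := by rintro rfl; simp at hd₁
  have hP₂ : P₂ ≠ 0 := by rintro rfl; simp [hdeg] at hd₁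
  obtain ⟨M, M', hM, -, hmf, hs1, hs2⟩ := exists_far_sign hZ hm hP₁ hP₂ hdeg hlc |r| 0
  rw [abs_lt] at hM
  set Y := insert (M, M') (insert (-M, -M') Z) with hY
  have hHY : ∀ z ∈ Y, SignType.sign (P₁.eval z.1) = SignType.sign (P₂.eval z.2) := by
    rintro z (rfl | rfl | hz)
    · exact hs1
    · exact hs2
    · exact hH z hz
  obtain ⟨s, hs, t, ht, hsr, hrt, hnear⟩ := exists_nearest (Y := Y) (b := r)
    ((hZ.insert _).insert _) ⟨(-M, -M'), by simp [hY], hM.1⟩ ⟨(M, M'), by simp [hY], hM.2⟩ (by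
      rintro z (rfl | rfl | hz)
      · exact hM.2.ne'
      · exact hM.1.ne
      · exact hrZ z hz)
  have hneg := mul_neg_of_root_of_derivative_ne hR₁ P₁ hd₁ hsr hrt hr (by
    intro c hc1 hc2 hc
    obtain ⟨c', hc'⟩ := hder c hc
    rcases hnear (c, c') (by simp [hY, hc']) with h | h
    · exact absurd hc1 (not_lt.2 h)
    · exact absurd hc2 (not_lt.2 h))
  have hst : s.2 < t.2 := (hmf t ht s hs).1.1 (hsr.trans hrt)
  rw [sign_mul_neg_iff, hHY s hs, hHY t ht, ← sign_mul_neg_iff] at hneg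
  obtain ⟨r', h1, h2, h3⟩ := hR₂ P₂ s.2 t.2 hst hneg
  refine ⟨r', h3, fun z hz => ?_⟩
  have hz' : z ∈ Y := by simp [hY, hz]
  rcases hnear z hz' with h | h
  · have h' : z.2 ≤ s.2 := not_lt.1 fun h' => not_lt.2 h ((hmf z hz' s hs).1.2 h')
    exact ⟨iff_of_true (h.trans_lt hsr) (h'.trans_lt h1),
      iff_of_false (not_lt.2 (h.trans_lt hsr).le) (not_lt.2 (h'.trans_lt h1).le)⟩
  · have h' : t.2 ≤ z.2 := not_lt.1 fun h' => not_lt.2 h ((hmf t ht z hz').1.2 h')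
    exact ⟨iff_of_false (not_lt.2 (hrt.trans_le h).le) (not_lt.2 (h2.trans_le h').le),
      iff_of_true (hrt.trans_le h) (h2.trans_le h')⟩

/-- Once the roots of `P` and of its derivative are listed, the signs of `P` match everywhere. -/
theorem sign_eq_of_roots_listed (hR₁ : PolyIVT R₁) (hR₂ : PolyIVT R₂) (hZ : Z.Finite)
    (hm : ZMono Z) {P₁ : Polynomial R₁} {P₂ : Polynomial R₂} (hP₁ : P₁ ≠ 0) (hP₂ : P₂ ≠ 0)
    (hdeg : P₁.natDegree = P₂.natDegree)
    (hlc : SignType.sign P₁.leadingCoeff = SignType.sign P₂.leadingCoeff)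
    (hder : ∀ r, P₁.derivative.eval r = 0 → ∃ r', (r, r') ∈ Z)
    (hc₁ : ∀ r, P₁.eval r = 0 → ∃ r', (r, r') ∈ Z)
    (hc₂ : ∀ r', P₂.eval r' = 0 → ∃ r, (r, r') ∈ Z)
    (hH : ∀ z ∈ Z, SignType.sign (P₁.eval z.1) = SignType.sign (P₂.eval z.2))
    (hb : ZCompat Z b b') : SignType.sign (P₁.eval b) = SignType.sign (P₂.eval b') := by
  by_cases hbZ : ∃ z ∈ Z, z.1 = b
  · obtain ⟨z, hz, rfl⟩ := hbZ
    rw [← hb.eq_of_fst hz rfl]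
    exact hH z hz
  push Not at hbZ
  obtain ⟨M, M', hM, hM', hmf, hs1, hs2⟩ := exists_far_sign hZ hm hP₁ hP₂ hdeg hlc |b| |b'|
  rw [abs_lt] at hM hM'
  set Y := insert (M, M') (insert (-M, -M') Z) with hY
  have hHY : ∀ z ∈ Y, SignType.sign (P₁.eval z.1) = SignType.sign (P₂.eval z.2) := by
    rintro z (rfl | rfl | hz)
    · exact hs1
    · exact hs2
    · exact hH z hz
  have hbY : ZCompat Y b b' := by
    rintro z (rfl | rfl | hz)
    · exact ⟨iff_of_false (not_lt.2 hM.2.le) (not_lt.2 hM'.2.le), iff_of_true hM.2 hM'.2⟩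
    · exact ⟨iff_of_true hM.1 hM'.1, iff_of_false (not_lt.2 hM.1.le) (not_lt.2 hM'.1.le)⟩
    · exact hb z hz
  obtain ⟨s, hs, t, ht, hsr, hrt, hnear⟩ := exists_nearest (Y := Y) (b := b)
    ((hZ.insert _).insert _) ⟨(-M, -M'), by simp [hY], hM.1⟩ ⟨(M, M'), by simp [hY], hM.2⟩ (by
      rintro z (rfl | rfl | hz)
      · exact hM.2.ne'
      · exact hM.1.ne
      · exact hbZ z hz)
  have hsr' := (hbY s hs).1.1 hsr
  have hrt' := (hbY t ht).2.1 hrt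
  have hno₁ : ∀ c, s.1 < c → c < t.1 → P₁.eval c ≠ 0 := by
    intro c h1 h2 hc
    obtain ⟨c', hc'⟩ := hc₁ c hc
    rcases hnear (c, c') (by simp [hY, hc']) with h | h
    · exact absurd h1 (not_lt.2 h)
    · exact absurd h2 (not_lt.2 h)
  have hno₂ : ∀ c, s.2 < c → c < t.2 → P₂.eval c ≠ 0 := by
    intro c' h1 h2 hc
    obtain ⟨c, hc'⟩ := hc₂ c' hc
    have hcY : (c, c') ∈ Y := by simp [hY, hc']
    rcases hnear (c, c') hcY with h | h
    · exact absurd ((hmf _ hcY s hs).1.2 h1) (not_lt.2 h)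
    · exact absurd ((hmf _ ht _ hcY).1.2 h2) (not_lt.2 h)
  by_cases hs0 : P₁.eval s.1 = 0
  · have ht0 : P₁.eval t.1 ≠ 0 := by
      intro ht0
      obtain ⟨c, h1, h2, hc⟩ := rolle_of_polyIVT hR₁ P₁ hP₁ (hsr.trans hrt) hs0 ht0
      obtain ⟨c', hc'⟩ := hder c hc
      rcases hnear (c, c') (by simp [hY, hc']) with h | h
      · exact absurd h1 (not_lt.2 h)
      · exact absurd h2 (not_lt.2 h)
    have ht0' : P₂.eval t.2 ≠ 0 := by
      rw [← sign_ne_zero, ← hHY t ht, sign_ne_zero]; exact ht0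
    rw [sign_eval_eq_of_no_root hR₁ P₁ hrt.le, sign_eval_eq_of_no_root hR₂ P₂ hrt'.le, hHY t ht]
    · intro c h1 h2
      rcases h2.eq_or_lt with rfl | h2
      · exact ht0'
      · exact hno₂ c (hsr'.trans_le h1) h2
    · intro c h1 h2
      rcases h2.eq_or_lt with rfl | h2
      · exact ht0
      · exact hno₁ c (hsr.trans_le h1) h2
  · have hs0' : P₂.eval s.2 ≠ 0 := by
      rw [← sign_ne_zero, ← hHY s hs, sign_ne_zero]; exact hs0
    rw [← sign_eval_eq_of_no_root hR₁ P₁ hsr.le, ← sign_eval_eq_of_no_root hR₂ P₂ hsr'.le,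
      hHY s hs]
    · intro c h1 h2
      rcases h1.eq_or_lt with rfl | h1
      · exact hs0'
      · exact hno₂ c h1 (h2.trans_lt hrt')
    · intro c h1 h2
      rcases h1.eq_or_lt with rfl | h1
      · exact hs0
      · exact hno₁ c h1 (h2.trans_lt hrt)

/-- A pair of polynomials whose derivatives are in the family can be added to a matched family,
provided its signs agree at the roots already listed. -/
theorem Matched.extend (hR₁ : PolyIVT R₁) (hR₂ : PolyIVT R₂)
    {𝒬 : Set (Polynomial R₁ × Polynomial R₂)} (h : Matched Z 𝒬)
    {P₁ : Polynomial R₁} {P₂ : Polynomial R₂} (hd₁ : P₁.natDegree ≠ 0)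
    (hdeg : P₁.natDegree = P₂.natDegree)
    (hlc : SignType.sign P₁.leadingCoeff = SignType.sign P₂.leadingCoeff)
    (hder : (P₁.derivative, P₂.derivative) ∈ 𝒬)
    (hH : ∀ z ∈ Z, SignType.sign (P₁.eval z.1) = SignType.sign (P₂.eval z.2)) :
    ∃ Z', Matched Z' (insert (P₁, P₂) 𝒬) := by
  have hP₁ : P₁ ≠ 0 := by rintro rfl; simp at hd₁
  have hP₂ : P₂ ≠ 0 := by rintro rfl; simp [hdeg] at hd₁
  have hder₁ := h.cov₁ _ hder
  have hder₂ := h.cov₂ _ hder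
  let N : Set (R₁ × R₂) := {z | P₁.eval z.1 = 0 ∧ P₂.eval z.2 = 0 ∧ ZCompat Z z.1 z.2}
  have hNfin : N.Finite := by
    refine ((P₁.rootSet_finite R₁).prod (P₂.rootSet_finite R₂)).subset ?_
    rintro z ⟨h1, h2, -⟩
    simp [Polynomial.mem_rootSet, hP₁, hP₂, h1, h2]
  have hfin : (Z ∪ N).Finite := h.fin.union hNfin
  have hcov₁ : ∀ r, P₁.eval r = 0 → ∃ r', (r, r') ∈ Z ∪ N := by
    intro r hr
    by_cases hrZ : ∃ z ∈ Z, z.1 = r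
    · obtain ⟨z, hz, rfl⟩ := hrZ
      exact ⟨z.2, Or.inl hz⟩
    · push Not at hrZ
      obtain ⟨r', h1, h2⟩ := exists_matching_root hR₁ hR₂ h.fin h.mono hd₁ hdeg hlc hder₁ hH r hr
        hrZ
      exact ⟨r', Or.inr ⟨hr, h1, h2⟩⟩
  have hcov₂ : ∀ r', P₂.eval r' = 0 → ∃ r, (r, r') ∈ Z ∪ N := by
    intro r' hr'
    by_cases hrZ : ∃ z ∈ Z, z.2 = r'
    · obtain ⟨z, hz, rfl⟩ := hrZ
      exact ⟨z.1, Or.inl hz⟩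
    · push Not at hrZ
      obtain ⟨r, h1, h2⟩ := exists_matching_root (Z := Prod.swap ⁻¹' Z) hR₂ hR₁
        (h.fin.preimage Prod.swap_injective.injOn) h.mono.swap
        (hdeg ▸ hd₁) hdeg.symm hlc.symm
        (fun s hs => hder₂ s hs) (fun z hz => (hH z.swap hz).symm) r' hr'
        (fun z hz => hrZ z.swap hz)
      exact ⟨r, Or.inr ⟨h1, hr', h2.of_swap⟩⟩
  have hmono : ZMono (Z ∪ N) := by
    rintro z (hz | hz) w (hw | hw)
    · exact h.mono z hz w hw
    · exact ⟨(hw.2.2 z hz).2, (hw.2.2 z hz).1⟩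
    · exact hz.2.2 w hw
    · -- between two roots of `P` there is a root of `P'`, which is in `Z`
      have key : ∀ z ∈ N, ∀ w ∈ N, (z.1 < w.1 ↔ z.2 < w.2) := by
        intro z hz w hw
        constructor
        · intro hlt
          obtain ⟨c, h1, h2, h3⟩ := rolle_of_polyIVT hR₁ P₁ hP₁ hlt hz.1 hw.1
          obtain ⟨c', hc'⟩ := hder₁ c h3
          exact ((hz.2.2 _ hc').2.1 h1).trans ((hw.2.2 _ hc').1.1 h2)
        · intro hlt
          obtain ⟨c', h1, h2, h3⟩ := rolle_of_polyIVT hR₂ P₂ hP₂ hlt hz.2.1 hw.2.1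
          obtain ⟨c, hc⟩ := hder₂ c' h3
          exact ((hz.2.2 _ hc).2.2 h1).trans ((hw.2.2 _ hc).1.2 h2)
      exact ⟨key w hw z hz, key z hz w hw⟩
  let Z' : Set (R₁ × R₂) := Z ∪ N
  refine ⟨Z', hfin, hmono, ?_, ?_, ?_, ?_, ?_⟩
  · rintro Q (rfl | hQ)
    · exact ⟨hP₁, hP₂⟩
    · exact h.nz Q hQ
  · rintro Q (rfl | hQ) r hr
    · exact hcov₁ r hr
    · obtain ⟨r', hr'⟩ := h.cov₁ Q hQ r hr
      exact ⟨r', Or.inl hr'⟩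
  · rintro Q (rfl | hQ) r hr
    · exact hcov₂ r hr
    · obtain ⟨r', hr'⟩ := h.cov₂ Q hQ r hr
      exact ⟨r', Or.inl hr'⟩
  · rintro z (hz | hz)
    · obtain ⟨Q, hQ, h1⟩ := h.root z hz
      exact ⟨Q, Or.inr hQ, h1⟩
    · exact ⟨_, Or.inl rfl, hz.1, hz.2.1⟩
  · rintro b b' hb Q (rfl | hQ)
    · refine sign_eq_of_roots_listed hR₁ hR₂ hfin hmono hP₁ hP₂ hdeg hlc ?_ hcov₁ hcov₂ ?_ hb
      · intro r hr
        obtain ⟨r', hr'⟩ := hder₁ r hr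
        exact ⟨r', Or.inl hr'⟩
      · rintro z (hz | hz)
        · exact hH z hz
        · rw [hz.1, hz.2.1]; simp
    · exact h.sgn b b' (hb.mono Set.subset_union_left) Q hQ

end Matching

/-! ### Matching points for finite families of polynomials -/

theorem exists_pseudo_division_aux {C : Type*} [CommRing C] [IsDomain C] (q : Polynomial C)
    (hq : q ≠ 0) (P : Polynomial C) : ∃ (k : ℕ) (h r : Polynomial C),
      Polynomial.C (q.leadingCoeff ^ k) * P = q * h + r ∧ r.degree < q.degree := by
  induction hN : P.natDegree using Nat.strong_induction_on generalizing P with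
  | _ N ih =>
  by_cases hlt : P.degree < q.degree
  · exact ⟨0, 0, P, by simp, hlt⟩
  have hle : q.degree ≤ P.degree := not_lt.1 hlt
  have hP0 : P ≠ 0 := by
    rintro rfl
    simp at hle
    exact hq hle
  have hnat : q.natDegree ≤ P.natDegree := Polynomial.natDegree_le_natDegree hle
  -- one elimination step
  set P₁ := Polynomial.C q.leadingCoeff * P -
    q * (Polynomial.C P.leadingCoeff * Polynomial.X ^ (P.natDegree - q.natDegree)) with hP₁
  have hlq : q.leadingCoeff ≠ 0 := Polynomial.leadingCoeff_ne_zero.2 hq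
  have hlP : P.leadingCoeff ≠ 0 := Polynomial.leadingCoeff_ne_zero.2 hP0
  have hdA : (Polynomial.C q.leadingCoeff * P).degree = P.degree := by
    rw [Polynomial.degree_mul, Polynomial.degree_C hlq, zero_add]
  have hdeg : P₁.degree < P.degree := by
    rw [← hdA]
    apply Polynomial.degree_sub_lt_left
    · rw [hdA, Polynomial.degree_mul, Polynomial.degree_C_mul_X_pow _ hlP,
        Polynomial.degree_eq_natDegree hq, Polynomial.degree_eq_natDegree hP0, ← Nat.cast_add]
      congr 1
      omega
    · exact mul_ne_zero (by simpa using hlq) hP0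
    · rw [Polynomial.leadingCoeff_mul, Polynomial.leadingCoeff_mul, Polynomial.leadingCoeff_C,
        Polynomial.leadingCoeff_C_mul_X_pow, mul_comm]
  rcases eq_or_ne P₁ 0 with h0 | h0
  · refine ⟨1, Polynomial.C P.leadingCoeff * Polynomial.X ^ (P.natDegree - q.natDegree), 0, ?_,
      by simpa [bot_lt_iff_ne_bot] using hq⟩
    rw [pow_one, add_zero]
    exact sub_eq_zero.1 h0
  · obtain ⟨k, h, r, h1, h2⟩ := ih P₁.natDegree
      (hN ▸ Polynomial.natDegree_lt_natDegree h0 hdeg) P₁ rfl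
    refine ⟨k + 1, Polynomial.C (q.leadingCoeff ^ k) *
      (Polynomial.C P.leadingCoeff * Polynomial.X ^ (P.natDegree - q.natDegree)) + h, r, ?_, h2⟩
    rw [pow_succ, Polynomial.C_mul]
    rw [hP₁] at h1
    linear_combination h1

/-- Pseudo-division with an even power of the leading coefficient, so that signs are kept. -/
theorem exists_pseudo_division {C : Type*} [CommRing C] [IsDomain C] (q : Polynomial C)
    (P : Polynomial C) : ∃ (k : ℕ) (h r : Polynomial C), q ≠ 0 →
      Polynomial.C (q.leadingCoeff ^ (2 * k)) * P = q * h + r ∧ r.degree < q.degree := by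
  by_cases hq : q = 0
  · exact ⟨0, 0, 0, fun h => absurd hq h⟩
  obtain ⟨k, h, r, h1, h2⟩ := exists_pseudo_division_aux q hq P
  refine ⟨k, Polynomial.C (q.leadingCoeff ^ k) * h, Polynomial.C (q.leadingCoeff ^ k) * r,
    fun _ => ⟨?_, ?_⟩⟩
  · rw [two_mul, pow_add, Polynomial.C_mul]
    linear_combination Polynomial.C (q.leadingCoeff ^ k) * h1
  · refine lt_of_le_of_lt ?_ h2
    rw [Polynomial.degree_mul]
    calc _ ≤ 0 + r.degree := by gcongr; exact Polynomial.degree_C_le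
      _ = _ := zero_add _

set_option linter.unusedSectionVars false

section Family
variable {R₁ R₂ C : Type*} [Field R₁] [LinearOrder R₁] [IsStrictOrderedRing R₁]
  [Field R₂] [LinearOrder R₂] [IsStrictOrderedRing R₂] [CommRing C] [IsDomain C]

/-- The specialisations of a polynomial under two coefficient homomorphisms. -/
def pairMap (ev₁ : C →+* R₁) (ev₂ : C →+* R₂) (q : Polynomial C) :
    Polynomial R₁ × Polynomial R₂ := (q.map ev₁, q.map ev₂)

/-- If `ev₂` agrees with `ev₁` on finitely many signs, the family `𝒬` can be matched. -/
def FamilyOk (R₂ : Type*) [Field R₂] [LinearOrder R₂] (ev₁ : C →+* R₁)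
    (𝒬 : Set (Polynomial C)) : Prop :=
  ∃ W : Finset C, ∀ ev₂ : C →+* R₂,
    (∀ w ∈ W, SignType.sign (ev₂ w) = SignType.sign (ev₁ w)) →
    ∃ Z, Matched Z (pairMap ev₁ ev₂ '' 𝒬)

/-- The roots of the members `q` of a matched family are where the sign of a new `P` is needed; there
it is the sign of the pseudo-remainder of `P` modulo `q`, which belongs to the larger family `𝒬'`. -/
theorem FamilyOk.insert (hR₁ : PolyIVT R₁) (hR₂ : PolyIVT R₂) {ev₁ : C →+* R₁}
    (hev : Function.Injective ev₁) (P : Polynomial C) (hP : P ≠ 0) (𝒬 : Finset (Polynomial C))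
    (hQ0 : ∀ q ∈ 𝒬, q ≠ 0) (𝒬' : Set (Polynomial C)) (hsub : (𝒬 : Set (Polynomial C)) ⊆ 𝒬')
    (hder : P.natDegree ≠ 0 → P.derivative ∈ 𝒬)
    (hprem : ∀ q ∈ 𝒬, ∃ (k : ℕ) (h r : Polynomial C),
      Polynomial.C (q.leadingCoeff ^ (2 * k)) * P = q * h + r ∧ (r = 0 ∨ r ∈ 𝒬'))
    (hok : FamilyOk R₂ ev₁ 𝒬') : FamilyOk R₂ ev₁ (insert P 𝒬) := by
  classical
  obtain ⟨W, hW⟩ := hok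
  refine ⟨W ∪ Insert.insert P.leadingCoeff (𝒬.image Polynomial.leadingCoeff), fun ev₂ hev₂ => ?_⟩
  obtain ⟨Z, hZ⟩ := hW ev₂ fun w hw => hev₂ w (Finset.mem_union_left _ hw)
  have hne₁ : ∀ c : C, c ≠ 0 → ev₁ c ≠ 0 := fun c hc => (map_ne_zero_iff ev₁ hev).2 hc
  have hlc : SignType.sign (ev₂ P.leadingCoeff) = SignType.sign (ev₁ P.leadingCoeff) :=
    hev₂ _ (by simp)
  have hP₁ : ev₁ P.leadingCoeff ≠ 0 := hne₁ _ (Polynomial.leadingCoeff_ne_zero.2 hP)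
  have hP₂ : ev₂ P.leadingCoeff ≠ 0 := by rw [← sign_ne_zero, hlc, sign_ne_zero]; exact hP₁
  have himg : pairMap ev₁ ev₂ '' (𝒬 : Set (Polynomial C)) ⊆ pairMap ev₁ ev₂ '' 𝒬' :=
    Set.image_mono hsub
  have hZ₁ := hZ.prune hR₂ himg
  set Z₁ := {z ∈ Z | ∃ Q ∈ pairMap ev₁ ev₂ '' (𝒬 : Set (Polynomial C)),
    Q.1.eval z.1 = 0 ∧ Q.2.eval z.2 = 0} with hZ₁def
  rw [Set.image_insert_eq]
  by_cases hdeg : P.natDegree = 0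
  · -- a nonzero constant has no roots
    have hPC := Polynomial.eq_C_of_natDegree_eq_zero hdeg
    have hlcc : P.leadingCoeff = P.coeff 0 := by rw [Polynomial.leadingCoeff, hdeg]
    rw [hlcc] at hP₁ hP₂ hlc
    refine ⟨Z₁, hZ₁.fin, hZ₁.mono, ?_, ?_, ?_, ?_, ?_⟩
    · rintro Q (rfl | hQ)
      · rw [hPC]
        simp [pairMap, hP₁, hP₂]
      · exact hZ₁.nz Q hQ
    · rintro Q (rfl | hQ) r hr
      · rw [hPC] at hr
        simp [pairMap, hP₁] at hr
      · exact hZ₁.cov₁ Q hQ r hr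
    · rintro Q (rfl | hQ) r hr
      · rw [hPC] at hr
        simp [pairMap, hP₂] at hr
      · exact hZ₁.cov₂ Q hQ r hr
    · intro z hz
      obtain ⟨Q, hQ, h1⟩ := hZ₁.root z hz
      exact ⟨Q, Or.inr hQ, h1⟩
    · rintro b b' hb Q (rfl | hQ)
      · rw [hPC]
        simp [pairMap, hlc]
      · exact hZ₁.sgn b b' hb Q hQ
  · apply hZ₁.extend hR₁ hR₂
    · rwa [Polynomial.natDegree_map_of_leadingCoeff_ne_zero _ hP₁]
    · rw [Polynomial.natDegree_map_of_leadingCoeff_ne_zero _ hP₁,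
        Polynomial.natDegree_map_of_leadingCoeff_ne_zero _ hP₂]
    · rw [Polynomial.leadingCoeff_map_of_leadingCoeff_ne_zero _ hP₁,
        Polynomial.leadingCoeff_map_of_leadingCoeff_ne_zero _ hP₂, hlc]
    · rw [Polynomial.derivative_map, Polynomial.derivative_map]
      exact ⟨P.derivative, hder hdeg, rfl⟩
    · -- at a root of `q` the sign of `P` is that of the remainder of `P` modulo `q`
      rintro z ⟨hz, Q, ⟨q, hq, rfl⟩, hq1, hq2⟩
      have hq' : q ∈ 𝒬 := hq
      obtain ⟨k, h, r, hdiv, hr⟩ := hprem q hq'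
      have hl₁ : ev₁ q.leadingCoeff ≠ 0 := hne₁ _ (Polynomial.leadingCoeff_ne_zero.2 (hQ0 q hq'))
      have hl₂ : ev₂ q.leadingCoeff ≠ 0 := by
        rw [← sign_ne_zero, hev₂ _ (Finset.mem_union_right _ (Finset.mem_insert_of_mem
          (Finset.mem_image_of_mem _ hq'))), sign_ne_zero]
        exact hl₁
      have e₁ := congrArg (fun p => (Polynomial.map ev₁ p).eval z.1) hdiv
      have e₂ := congrArg (fun p => (Polynomial.map ev₂ p).eval z.2) hdiv
      simp only [pairMap] at hq1 hq2
      simp only [Polynomial.map_mul, Polynomial.map_C, Polynomial.map_add, Polynomial.eval_mul,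
        Polynomial.eval_add, Polynomial.eval_C, hq1, hq2, zero_mul, zero_add, map_pow,
        Polynomial.map_pow, Polynomial.eval_pow] at e₁ e₂
      have s₁ : SignType.sign ((P.map ev₁).eval z.1) = SignType.sign ((r.map ev₁).eval z.1) := by
        rw [← e₁, sign_mul, sign_pos ((even_two_mul k).pow_pos hl₁), one_mul]
      have s₂ : SignType.sign ((P.map ev₂).eval z.2) = SignType.sign ((r.map ev₂).eval z.2) := by
        rw [← e₂, sign_mul, sign_pos ((even_two_mul k).pow_pos hl₂), one_mul]
      rw [s₁, s₂]
      rcases hr with rfl | hr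
      · simp
      · exact hZ.sgn z.1 z.2 (hZ.mono z hz) _ ⟨r, hr, rfl⟩

theorem FamilyOk.mono (hR₂ : PolyIVT R₂) {ev₁ : C →+* R₁} {𝒬 𝒬' : Set (Polynomial C)}
    (h : FamilyOk R₂ ev₁ 𝒬') (hsub : 𝒬 ⊆ 𝒬') : FamilyOk R₂ ev₁ 𝒬 := by
  obtain ⟨W, hW⟩ := h
  refine ⟨W, fun ev₂ h => ?_⟩
  obtain ⟨Z, hZ⟩ := hW ev₂ h
  exact ⟨_, hZ.prune hR₂ (Set.image_mono hsub)⟩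

/-- Every finite family of nonzero polynomials can be matched: induction on the degree, and on the
number of polynomials of top degree. -/
theorem familyOk_of_natDegree_lt (hR₁ : PolyIVT R₁) (hR₂ : PolyIVT R₂) {ev₁ : C →+* R₁}
    (hev : Function.Injective ev₁) (N : ℕ) : ∀ 𝓛 : Finset (Polynomial C),
      (∀ q ∈ 𝓛, q ≠ 0 ∧ q.natDegree < N) → FamilyOk R₂ ev₁ (𝓛 : Set (Polynomial C)) := by
  classical
  have : CharZero C := by
    have := (algebraMap ℚ R₁).charZero
    exact ⟨fun m n h => by
      have h' := congrArg ev₁ h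
      simpa using h'⟩
  induction N with
  | zero =>
    intro 𝓛 h𝓛
    refine ⟨∅, fun ev₂ _ => ⟨∅, ?_⟩⟩
    have : 𝓛 = ∅ := Finset.eq_empty_of_forall_notMem fun q hq => by simpa using (h𝓛 q hq).2
    subst this
    refine ⟨Set.finite_empty, ?_, ?_, ?_, ?_, ?_, ?_⟩ <;> simp [ZMono]
  | succ N ih =>
    have key : ∀ 𝒯 : Finset (Polynomial C), (∀ q ∈ 𝒯, q ≠ 0 ∧ q.natDegree = N) →
        ∀ 𝓛 : Finset (Polynomial C), (∀ q ∈ 𝓛, q ≠ 0 ∧ q.natDegree < N) →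
        FamilyOk R₂ ev₁ ((𝓛 ∪ 𝒯 : Finset (Polynomial C)) : Set (Polynomial C)) := by
      intro 𝒯
      induction 𝒯 using Finset.induction_on with
      | empty =>
        intro _ 𝓛 h𝓛
        simpa using ih 𝓛 h𝓛
      | insert P 𝒯 hP𝒯 ihP =>
        intro h𝒯 𝓛 h𝓛
        have hP := h𝒯 P (Finset.mem_insert_self _ _)
        have h𝒯' : ∀ q ∈ 𝒯, q ≠ 0 ∧ q.natDegree = N :=
          fun q hq => h𝒯 q (Finset.mem_insert_of_mem hq)
        choose k h r hdiv using fun q : Polynomial C => exists_pseudo_division q P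
        -- the derivative of `P`, unless it vanishes
        let Δ : Finset (Polynomial C) := ({P.derivative} : Finset (Polynomial C)).filter (· ≠ 0)
        have hΔ : ∀ q ∈ Δ, q ≠ 0 ∧ q.natDegree < N := by
          intro q hq
          simp only [Δ, Finset.mem_filter, Finset.mem_singleton] at hq
          obtain ⟨rfl, hq0⟩ := hq
          refine ⟨hq0, ?_⟩
          rw [← hP.2]
          apply Polynomial.natDegree_derivative_lt
          intro h0
          exact hq0 (Polynomial.derivative_of_natDegree_zero h0)
        let 𝒬 : Finset (Polynomial C) := 𝓛 ∪ Δ ∪ 𝒯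
        have h𝒬 : ∀ q ∈ 𝒬, q ≠ 0 ∧ q.natDegree ≤ N := by
          intro q hq
          simp only [𝒬, Finset.mem_union] at hq
          rcases hq with (hq | hq) | hq
          · exact ⟨(h𝓛 q hq).1, (h𝓛 q hq).2.le⟩
          · exact ⟨(hΔ q hq).1, (hΔ q hq).2.le⟩
          · exact ⟨(h𝒯' q hq).1, (h𝒯' q hq).2.le⟩
        let 𝓛' : Finset (Polynomial C) := 𝓛 ∪ Δ ∪ (𝒬.image r).filter (· ≠ 0)
        have h𝓛' : ∀ q ∈ 𝓛', q ≠ 0 ∧ q.natDegree < N := by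
          intro q hq
          simp only [𝓛', Finset.mem_union, Finset.mem_filter, Finset.mem_image] at hq
          rcases hq with (hq | hq) | ⟨⟨s, hs, rfl⟩, hq⟩
          · exact h𝓛 q hq
          · exact hΔ q hq
          · exact ⟨hq, (Polynomial.natDegree_lt_natDegree hq
              (hdiv s (h𝒬 s hs).1).2).trans_le (h𝒬 s hs).2⟩
        have hins := FamilyOk.insert hR₁ hR₂ hev P hP.1 𝒬 (fun q hq => (h𝒬 q hq).1)
          ((𝓛' ∪ 𝒯 : Finset (Polynomial C)) : Set (Polynomial C))
          (by
            intro q hq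
            simp only [𝒬, 𝓛', Finset.coe_union, Set.mem_union] at hq ⊢
            tauto)
          (by
            intro hd
            simp only [𝒬, Δ, Finset.mem_union, Finset.mem_filter, Finset.mem_singleton]
            refine Or.inl (Or.inr ⟨trivial, ?_⟩)
            intro h0
            exact hd (Polynomial.derivative_eq_zero.1 h0))
          (by
            intro q hq
            refine ⟨k q, h q, r q, (hdiv q (h𝒬 q hq).1).1, ?_⟩
            by_cases h0 : r q = 0
            · exact Or.inl h0
            · right
              simp only [𝓛', Finset.coe_union, Set.mem_union, Finset.mem_coe, Finset.mem_filter,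
                Finset.mem_image]
              exact Or.inl (Or.inr ⟨⟨q, hq, rfl⟩, h0⟩))
          (ihP h𝒯' 𝓛' h𝓛')
        refine hins.mono hR₂ ?_
        intro q hq
        simp only [𝒬, Finset.coe_union, Finset.coe_insert, Set.mem_union, Set.mem_insert_iff]
          at hq ⊢
        tauto
    intro 𝓛 h𝓛
    refine (key (𝓛.filter (·.natDegree = N)) (fun q hq => ?_) (𝓛.filter (·.natDegree < N))
      (fun q hq => ?_)).mono hR₂ ?_
    · rw [Finset.mem_filter] at hq
      exact ⟨(h𝓛 q hq.1).1, hq.2⟩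
    · rw [Finset.mem_filter] at hq
      exact ⟨(h𝓛 q hq.1).1, hq.2⟩
    · intro q hq
      have := (h𝓛 q hq).2
      simp only [Finset.coe_union, Set.mem_union, Finset.coe_filter, Set.mem_ofPred_eq]
      have hq' : q ∈ 𝓛 := hq
      rcases (Nat.lt_succ_iff.1 this).lt_or_eq with h | h
      · exact Or.inl ⟨hq', h⟩
      · exact Or.inr ⟨hq', h⟩

/-- Finitely many signs at `b` of polynomials over `C` can be reproduced over `R₂`; if none of
them vanishes at `b`, they are reproduced on a whole interval. -/
theorem exists_sign_matching_point (hR₁ : PolyIVT R₁) (hR₂ : PolyIVT R₂) {ev₁ : C →+* R₁}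
    (hev : Function.Injective ev₁) (b : R₁) (𝒬 : Finset (Polynomial C)) :
    ∃ W : Finset C, ∀ ev₂ : C →+* R₂,
      (∀ w ∈ W, SignType.sign (ev₂ w) = SignType.sign (ev₁ w)) →
      (∃ b' : R₂, ∀ q ∈ 𝒬, SignType.sign (q.eval₂ ev₂ b') = SignType.sign (q.eval₂ ev₁ b)) ∧
      ((∀ q ∈ 𝒬, q ≠ 0 → q.eval₂ ev₁ b ≠ 0) → ∃ s t : R₂, s < t ∧ ∀ b', s < b' → b' < t →
        ∀ q ∈ 𝒬, SignType.sign (q.eval₂ ev₂ b') = SignType.sign (q.eval₂ ev₁ b)) := by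
  classical
  obtain ⟨W, hW⟩ := familyOk_of_natDegree_lt hR₁ hR₂ hev (𝒬.sup Polynomial.natDegree + 1)
    (𝒬.filter (· ≠ 0)) (fun q hq => by
      rw [Finset.mem_filter] at hq
      exact ⟨hq.2, Nat.lt_succ_of_le (Finset.le_sup (f := Polynomial.natDegree) hq.1)⟩)
  refine ⟨W, fun ev₂ h => ?_⟩
  obtain ⟨Z, hZ⟩ := hW ev₂ h
  have hs : ∀ b', ZCompat Z b b' → ∀ q ∈ 𝒬,
      SignType.sign (q.eval₂ ev₂ b') = SignType.sign (q.eval₂ ev₁ b) := by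
    intro b' hb' q hq
    by_cases h0 : q = 0
    · simp [h0]
    · have := hZ.sgn b b' hb' (pairMap ev₁ ev₂ q) ⟨q, by simp [hq, h0], rfl⟩
      simp only [pairMap, Polynomial.eval_map] at this
      exact this.symm
  obtain ⟨b', hb', hgap⟩ := exists_compat hZ.fin hZ.mono b
  refine ⟨⟨b', hs b' hb'⟩, fun hnz => ?_⟩
  obtain ⟨s, t, hst, hc⟩ := hgap (by
    rintro z hz rfl
    obtain ⟨_, ⟨q, hq, rfl⟩, h1, -⟩ := hZ.root z hz
    simp only [Finset.coe_filter, Set.mem_ofPred_eq] at hq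
    simp only [pairMap, Polynomial.eval_map] at h1
    exact hnz q hq.1 hq.2 h1)
  exact ⟨s, t, hst, fun c h1 h2 => hs c (hc c h1 h2)⟩

end Family

/-! ### Real points of finitely generated algebras -/

theorem polyIVT_real : PolyIVT ℝ := by
  intro f a b hab h
  have hc : ContinuousOn (fun x => f.eval x) (Set.Icc a b) := f.continuous.continuousOn
  have hex : ∃ c ∈ Set.Icc a b, f.eval c = 0 := by
    rcases mul_neg_iff.1 h with ⟨h1, h2⟩ | ⟨h1, h2⟩
    · exact intermediate_value_Icc' hab.le hc ⟨h2.le, h1.le⟩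
    · exact intermediate_value_Icc hab.le hc ⟨h1.le, h2.le⟩
  obtain ⟨c, ⟨h1, h2⟩, h3⟩ := hex
  refine ⟨c, lt_of_le_of_ne h1 ?_, lt_of_le_of_ne h2 ?_, h3⟩
  · rintro rfl
    rw [h3, zero_mul] at h
    exact lt_irrefl _ h
  · rintro rfl
    rw [h3, mul_zero] at h
    exact lt_irrefl _ h

section Transfer
variable {R : Type*} [Field R] [LinearOrder R] [IsStrictOrderedRing R]

/-- `C` has enough real points near `ev₁ : C → R`: some homomorphism `C → ℝ` has the same signs
as `ev₁` on a given finite set and avoids the zeros of countably many nonzero elements. -/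
def GoodHom {C : Type*} [CommRing C] (ev₁ : C →+* R) : Prop :=
  ∀ (W : Finset C) (E : Set C), E.Countable → (∀ e ∈ E, e ≠ 0) →
    ∃ ev₂ : C →+* ℝ, (∀ w ∈ W, SignType.sign (ev₂ w) = SignType.sign (ev₁ w)) ∧
      ∀ e ∈ E, ev₂ e ≠ 0

/-- Adjoining one element keeps the supply of real points: an algebraic element is handled
by clearing denominators, a transcendental one by avoiding countably many roots in an interval. -/
theorem GoodHom.adjoin {C C' : Type*} [CommRing C] [IsDomain C] [IsNoetherianRing C]
    [CommRing C'] [IsDomain C'] (hR : PolyIVT R) (j : C →+* C') (b : C')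
    (hsurj : Function.Surjective (Polynomial.eval₂RingHom j b)) (ev : C' →+* R)
    (hev : Function.Injective ev) (hj : Function.Injective j) (h : GoodHom (ev.comp j)) :
    GoodHom ev := by
  classical
  intro W E hE hE0
  set ψ := Polynomial.eval₂RingHom j b with hψ
  choose l hl using hsurj
  have hψev : ∀ q : Polynomial C, q.eval₂ (ev.comp j) (ev b) = ev (ψ q) := by
    intro q
    rw [hψ, Polynomial.coe_eval₂RingHom, Polynomial.hom_eval₂]
  obtain ⟨G, hG⟩ : (RingHom.ker ψ).FG := IsNoetherian.noetherian _
  have hGk : ∀ q ∈ G, ψ q = 0 := fun q hq => by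
    have : q ∈ RingHom.ker ψ := hG ▸ Ideal.subset_span hq
    exact this
  obtain ⟨W₀, hW₀⟩ := exists_sign_matching_point (R₂ := ℝ) hR polyIVT_real
    (ev₁ := ev.comp j) (hev.comp hj) (ev b) (W.image l ∪ G)
  -- it suffices to find a good specialisation of `C` and a good value for `b`
  suffices hs : ∃ (ev₂ : C →+* ℝ) (b' : ℝ),
      (∀ q ∈ W.image l ∪ G, SignType.sign (q.eval₂ ev₂ b') =
        SignType.sign (q.eval₂ (ev.comp j) (ev b))) ∧
      ∀ e ∈ E, ∀ ev' : C' →+* ℝ, (∀ q, ev' (ψ q) = q.eval₂ ev₂ b') → ev' e ≠ 0 by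
    obtain ⟨ev₂, b', h1, h2⟩ := hs
    have hker : RingHom.ker ψ ≤ RingHom.ker (Polynomial.eval₂RingHom ev₂ b') := by
      rw [← hG, Ideal.span_le]
      intro q hq
      have := h1 q (Finset.mem_union_right _ hq)
      rw [hψev, hGk q hq, map_zero, sign_zero, sign_eq_zero_iff] at this
      exact this
    have hsurj' : Function.Surjective ψ := fun y => ⟨l y, hl y⟩
    set ev' := ψ.liftOfSurjective hsurj' ⟨Polynomial.eval₂RingHom ev₂ b', hker⟩ with hev'
    have hev'ψ : ∀ q, ev' (ψ q) = q.eval₂ ev₂ b' := fun q =>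
      RingHom.liftOfSurjective_comp_apply ψ hsurj' ⟨Polynomial.eval₂RingHom ev₂ b', hker⟩ q
    refine ⟨ev', fun w hw => ?_, fun e he => h2 e he ev' hev'ψ⟩
    have := h1 (l w) (Finset.mem_union_left _ (Finset.mem_image_of_mem _ hw))
    rw [← hev'ψ, hψev, hl] at this
    exact this
  by_cases halg : ∃ q : Polynomial C, q ≠ 0 ∧ ψ q = 0
  · let := j.toAlgebra
    have hb : IsAlgebraic C b := by
      obtain ⟨q, hq, h0⟩ := halg
      exact ⟨q, hq, h0⟩
    have hdvd : ∀ e : C', e ≠ 0 → ∃ c : C, c ≠ 0 ∧ e ∣ j c := by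
      intro e he
      have : IsAlgebraic C e := by
        have hmem : e ∈ Algebra.adjoin C {b} := by
          rw [← hl e]
          exact Polynomial.aeval_mem_adjoin_singleton _ _
        have : FaithfulSMul C C' := (faithfulSMul_iff_algebraMap_injective C C').2 hj
        exact Algebra.isAlgebraic_adjoin_singleton_iff.2 hb e hmem
      exact this.exists_nonzero_dvd (mem_nonZeroDivisors_of_ne_zero he)
    choose! c hc0 hcd using hdvd
    obtain ⟨ev₂, h1, h2⟩ := h W₀ (c '' E) (hE.image c) (by
      rintro _ ⟨e, he, rfl⟩
      exact hc0 e (hE0 e he))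
    obtain ⟨b', hb'⟩ := (hW₀ ev₂ h1).1
    refine ⟨ev₂, b', hb', fun e he ev' hev' h0 => ?_⟩
    have hj' : ev' (j (c e)) = ev₂ (c e) := by
      have := hev' (Polynomial.C (c e))
      simpa [hψ] using this
    apply h2 (c e) ⟨e, he, rfl⟩
    obtain ⟨y, hy⟩ := hcd e (hE0 e he)
    rw [← hj', hy, map_mul, h0, zero_mul]
  · push Not at halg
    obtain ⟨ev₂, h1, h2⟩ := h W₀ ((fun e => (l e).leadingCoeff) '' E) (hE.image _) (by
      rintro _ ⟨e, he, rfl⟩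
      refine Polynomial.leadingCoeff_ne_zero.2 fun h0 => hE0 e he ?_
      rw [← hl e, h0, map_zero])
    obtain ⟨s, t, hst, hb'⟩ := (hW₀ ev₂ h1).2 (fun q _ hq0 => by
      rw [hψev]
      exact (map_ne_zero_iff ev hev).2 (halg q hq0))
    have hcount : (⋃ e ∈ E, ((((l e).map ev₂).roots.toFinset : Finset ℝ) : Set ℝ)).Countable :=
      hE.biUnion fun e _ => (Finset.finite_toSet _).countable
    have : ¬ Set.Ioo s t ⊆ ⋃ e ∈ E, ((((l e).map ev₂).roots.toFinset : Finset ℝ) : Set ℝ) :=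
      fun hsub => (Cardinal.Real.Ioo_countable_iff.1 (hcount.mono hsub)).not_gt hst
    obtain ⟨b', hbI, hbr⟩ := Set.not_subset.1 this
    refine ⟨ev₂, b', hb' b' hbI.1 hbI.2, fun e he ev' hev' h0 => hbr ?_⟩
    rw [Set.mem_iUnion₂]
    refine ⟨e, he, ?_⟩
    rw [Finset.mem_coe, Multiset.mem_toFinset, Polynomial.mem_roots', Polynomial.IsRoot,
      Polynomial.eval_map, ← hev', hl]
    refine ⟨fun hz => h2 _ ⟨e, he, rfl⟩ ?_, h0⟩
    have := congrArg (fun p => p.coeff (l e).natDegree) hz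
    simpa using this

theorem sign_ringHom_real (φ : ℝ →+* R) (r : ℝ) : SignType.sign (φ r) = SignType.sign r := by
  have hpos : ∀ r : ℝ, 0 < r → 0 < φ r := by
    intro r hr
    rw [← Real.mul_self_sqrt hr.le, map_mul]
    exact mul_self_pos.2 ((map_ne_zero φ).2 (Real.sqrt_pos.2 hr).ne')
  rcases lt_trichotomy r 0 with h | rfl | h
  · have := hpos (-r) (by linarith)
    rw [map_neg] at this
    rw [sign_neg h, sign_neg (by linarith)]
  · simp
  · rw [sign_pos h, sign_pos (hpos r h)]

/-- Induction on the generators, starting from `ℝ` itself. -/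
theorem goodHom_adjoin [Algebra ℝ R] (hR : PolyIVT R) (s : Finset R) :
    GoodHom (Algebra.adjoin ℝ (s : Set R)).val.toRingHom := by
  classical
  induction s using Finset.induction_on with
  | empty =>
    rw [Finset.coe_empty, Algebra.adjoin_empty]
    intro W E hE hE0
    refine ⟨(Algebra.botEquivOfInjective (algebraMap ℝ R).injective).toAlgHom.toRingHom,
      fun w _ => ?_, fun e he h0 => hE0 e he ?_⟩
    · obtain ⟨r, hr⟩ := Algebra.mem_bot.1 w.2
      have hw : w = algebraMap ℝ (⊥ : Subalgebra ℝ R) r := Subtype.ext hr.symm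
      subst hw
      simpa using (sign_ringHom_real (algebraMap ℝ R) r).symm
    · simpa using h0
  | insert b s hb ih =>
    have hle : Algebra.adjoin ℝ (s : Set R) ≤ Algebra.adjoin ℝ ((insert b s : Finset R) : Set R) :=
      Algebra.adjoin_mono (by simp)
    have hbm : b ∈ Algebra.adjoin ℝ ((insert b s : Finset R) : Set R) :=
      Algebra.subset_adjoin (by simp)
    have : IsNoetherianRing (Algebra.adjoin ℝ (s : Set R)) :=
      isNoetherianRing_of_fg ⟨s, rfl⟩
    refine GoodHom.adjoin hR (Subalgebra.inclusion hle).toRingHom ⟨b, hbm⟩ ?_ _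
      Subtype.val_injective (Subalgebra.inclusion_injective hle) ih
    rintro ⟨y, hy⟩
    induction hy using Algebra.adjoin_induction with
    | mem y hy =>
      rw [Finset.coe_insert] at hy
      rcases hy with rfl | hy
      · exact ⟨Polynomial.X, by simp⟩
      · exact ⟨Polynomial.C ⟨y, Algebra.subset_adjoin hy⟩, by simp⟩
    | algebraMap r => exact ⟨Polynomial.C (algebraMap ℝ _ r), by simp⟩
    | add y z hy hz h1 h2 =>
      obtain ⟨p, hp⟩ := h1
      obtain ⟨q, hq⟩ := h2
      exact ⟨p + q, by rw [map_add, hp, hq]; rfl⟩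
    | mul y z hy hz h1 h2 =>
      obtain ⟨p, hp⟩ := h1
      obtain ⟨q, hq⟩ := h2
      exact ⟨p * q, by rw [map_mul, hp, hq]; rfl⟩

/-- Real points of a finitely generated algebra reproduce finitely many signs of any point in a
real closed field, and may be chosen off the zeros of countably many functions. -/
theorem exists_real_point {A : Type*} [CommRing A] [Algebra ℝ A]
    {n : ℕ} (x : Fin n → A) (hgen : Algebra.adjoin ℝ (Set.range x) = ⊤) (hR : PolyIVT R)
    (φ : A →+* R) (W : Finset A) (E : Set A) (hE : E.Countable) (hE0 : ∀ e ∈ E, φ e ≠ 0) :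
    ∃ χ : A →ₐ[ℝ] ℝ, (∀ w ∈ W, SignType.sign (χ w) = SignType.sign (φ w)) ∧
      ∀ e ∈ E, χ e ≠ 0 := by
  classical
  let : Algebra ℝ R := (φ.comp (algebraMap ℝ A)).toAlgebra
  let φ' : A →ₐ[ℝ] R := { φ with commutes' := fun r => rfl }
  let s : Finset R := Finset.univ.image fun i => φ (x i)
  have hmem : ∀ a, φ a ∈ Algebra.adjoin ℝ (s : Set R) := by
    intro a
    have ha : a ∈ Algebra.adjoin ℝ (Set.range x) := hgen ▸ trivial
    have h1 : φ' a ∈ (Algebra.adjoin ℝ (Set.range x)).map φ' := ⟨a, ha, rfl⟩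
    rw [AlgHom.map_adjoin] at h1
    refine Algebra.adjoin_mono ?_ h1
    rintro _ ⟨_, ⟨i, rfl⟩, rfl⟩
    exact Finset.mem_coe.2 (Finset.mem_image_of_mem _ (Finset.mem_univ i))
  let θ : A →ₐ[ℝ] Algebra.adjoin ℝ (s : Set R) := φ'.codRestrict _ hmem
  have hθ : ∀ a, ((θ a : Algebra.adjoin ℝ (s : Set R)) : R) = φ a := fun a => rfl
  obtain ⟨ev, h1, h2⟩ := goodHom_adjoin hR s (W.image θ) (θ '' E) (hE.image _) (by
    rintro _ ⟨e, he, rfl⟩ h0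
    exact hE0 e he (by rw [← hθ, h0]; rfl))
  refine ⟨{ ev.comp θ.toRingHom with commutes' := fun r => ?_ }, fun w hw => ?_, fun e he => ?_⟩
  · exact congrArg (fun f : ℝ →+* ℝ => f r)
      (Subsingleton.elim ((ev.comp θ.toRingHom).comp (algebraMap ℝ A)) (RingHom.id ℝ))
  · exact h1 (θ w) (Finset.mem_image_of_mem _ hw)
  · exact h2 _ ⟨e, he, rfl⟩

end Transfer

/-! ### Characters and the strict Positivstellensatz -/

/-- A character as an `ℝ`-algebra homomorphism. -/
def charHom {A : Type*} [CommRing A] [Algebra ℝ A] (χ : CharSet A) : A →ₐ[ℝ] ℝ where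
  toFun := χ.1
  map_one' := by simpa using χ.2.2.2 1
  map_mul' := χ.2.2.1
  map_zero' := by simpa using χ.2.2.2 0
  map_add' := χ.2.1
  commutes' := χ.2.2.2

theorem charHom_apply {A : Type*} [CommRing A] [Algebra ℝ A] (χ : CharSet A) (a : A) :
    (χ : A → ℝ) a = charHom χ a := rfl

/-- An `ℝ`-algebra homomorphism as a character. -/
def homChar {A : Type*} [CommRing A] [Algebra ℝ A] (φ : A →ₐ[ℝ] ℝ) : CharSet A :=
  ⟨φ, map_add φ, map_mul φ, φ.commutes⟩

/-- The semiring generated by the squares and the `g j`; as a set it is the preordering of `g`. -/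
def preordT {A : Type*} [CommRing A] {m : ℕ} (g : Fin m → A) : Subsemiring A :=
  Subsemiring.closure ({a | IsSquare a} ∪ Set.range g)

section
variable {A : Type*} [CommRing A] {m : ℕ} {g : Fin m → A}

theorem sq_mem_preordT (a : A) : a ^ 2 ∈ preordT g :=
  Subsemiring.subset_closure (Or.inl ⟨a, sq a⟩)

theorem gen_mem_preordT (j : Fin m) : g j ∈ preordT g :=
  Subsemiring.subset_closure (Or.inr ⟨j, rfl⟩)

theorem genPreordering_one : (1 : A) ∈ genPreordering g := by
  classical
  refine ⟨fun ν => if ν = fun _ => false then 1 else 0, fun ν => ?_, ?_⟩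
  · dsimp only
    split_ifs
    · exact (IsSquare.one).isSumSq
    · exact IsSumSq.zero
  · simp [ite_mul, Finset.sum_ite_eq']

theorem genPreordering_add {u v : A} (hu : u ∈ genPreordering g) (hv : v ∈ genPreordering g) :
    u + v ∈ genPreordering g := by
  obtain ⟨σ, h1, rfl⟩ := hu
  obtain ⟨τ, h2, rfl⟩ := hv
  refine ⟨fun ν => σ ν + τ ν, fun ν => (h1 ν).add (h2 ν), ?_⟩
  rw [← Finset.sum_add_distrib]
  simp only [add_mul]

theorem genPreordering_zero : (0 : A) ∈ genPreordering g :=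
  ⟨fun _ => 0, fun _ => IsSumSq.zero, by simp⟩

theorem genPreordering_sumSq_mul {s u : A} (hs : IsSumSq s) (hu : u ∈ genPreordering g) :
    s * u ∈ genPreordering g := by
  obtain ⟨σ, h1, rfl⟩ := hu
  refine ⟨fun ν => s * σ ν, fun ν => hs.mul (h1 ν), ?_⟩
  rw [Finset.mul_sum]
  simp only [mul_assoc]

theorem genPreordering_gen_mul {u : A} (j : Fin m) (hu : u ∈ genPreordering g) :
    g j * u ∈ genPreordering g := by
  classical
  obtain ⟨σ, h1, rfl⟩ := hu
  let flip : (Fin m → Bool) → (Fin m → Bool) := fun ν => Function.update ν j (!ν j)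
  have hflip : Function.Involutive flip := by
    intro ν
    simp [flip]
  refine ⟨fun ν => if ν j then σ (flip ν) else σ (flip ν) * (g j * g j), fun ν => ?_, ?_⟩
  · dsimp only
    split_ifs
    · exact h1 _
    · exact (h1 _).mul (IsSquare.mul_self (g j)).isSumSq
  · rw [Finset.mul_sum]
    refine Fintype.sum_bijective flip hflip.bijective _ _ fun ν => ?_
    have hf : flip (flip ν) = ν := hflip ν
    have hfj : flip ν j = !ν j := by simp [flip]
    have hrest : ∏ i ∈ Finset.univ.erase j, (if flip ν i then g i else 1)
        = ∏ i ∈ Finset.univ.erase j, (if ν i then g i else 1) := by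
      refine Finset.prod_congr rfl fun i hi => ?_
      have : flip ν i = ν i := Function.update_of_ne (Finset.ne_of_mem_erase hi) _ _
      rw [this]
    beta_reduce
    rw [hf, hfj, ← Finset.mul_prod_erase Finset.univ _ (Finset.mem_univ j),
      ← Finset.mul_prod_erase Finset.univ (fun i => if flip ν i then g i else 1)
        (Finset.mem_univ j), hrest, hfj]
    cases ν j <;> simp <;> ring

theorem genPreordering_map_mul {E : Type*} [CommRing E] (ι : A →+* E) {t : A}
    (ht : t ∈ preordT g) : ∀ u ∈ genPreordering (fun j => ι (g j)),
      ι t * u ∈ genPreordering (fun j => ι (g j)) := by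
  induction ht using Subsemiring.closure_induction with
  | mem t ht =>
    intro u hu
    rcases ht with ⟨s, rfl⟩ | ⟨j, rfl⟩
    · rw [map_mul]
      exact genPreordering_sumSq_mul (IsSquare.mul_self (ι s)).isSumSq hu
    · exact genPreordering_gen_mul (g := fun j => ι (g j)) j hu
  | zero => intro u _; simpa using genPreordering_zero
  | one => intro u hu; simpa using hu
  | add s t _ _ h1 h2 =>
    intro u hu
    rw [map_add, add_mul]
    exact genPreordering_add (h1 u hu) (h2 u hu)
  | mul s t _ _ h1 h2 =>
    intro u hu
    rw [map_mul, mul_assoc]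
    exact h1 _ (h2 u hu)

end

/-- Krivine's strict Positivstellensatz: otherwise `-f` together with `g` would generate a
preordering without `-1`, hence a real closed point of `K` with `f ≤ 0`, hence a real one. -/
theorem exists_strict_certificate {A : Type*} [CommRing A] [Algebra ℝ A]
    {n : ℕ} (x : Fin n → A) (hgen : Algebra.adjoin ℝ (Set.range x) = ⊤)
    {m : ℕ} (g : Fin m → A) (f : A) (hf : ∀ χ ∈ KSA g, 0 < (χ : A → ℝ) f) :
    ∃ s ∈ preordT g, ∃ t ∈ preordT g, f * s = 1 + t := by
  classical
  let N : Subsemiring A :=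
    { carrier := {b | ∃ s ∈ preordT g, ∃ t ∈ preordT g, b = t - f * s}
      mul_mem' := by
        rintro _ _ ⟨s, hs, t, ht, rfl⟩ ⟨s', hs', t', ht', rfl⟩
        exact ⟨s * t' + t * s', add_mem (mul_mem hs ht') (mul_mem ht hs'),
          t * t' + f ^ 2 * (s * s'), add_mem (mul_mem ht ht')
            (mul_mem (sq_mem_preordT f) (mul_mem hs hs')), by ring⟩
      one_mem' := ⟨0, zero_mem _, 1, one_mem _, by ring⟩
      add_mem' := by
        rintro _ _ ⟨s, hs, t, ht, rfl⟩ ⟨s', hs', t', ht', rfl⟩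
        exact ⟨s + s', add_mem hs hs', t + t', add_mem ht ht', by ring⟩
      zero_mem' := ⟨0, zero_mem _, 0, zero_mem _, by ring⟩ }
  by_cases hN : (-1 : A) ∈ N
  · obtain ⟨s, hs, t, ht, h⟩ := hN
    exact ⟨s, hs, t, ht, by linear_combination h⟩
  exfalso
  obtain ⟨R, _, _, _, φ, hR, hφ⟩ := exists_realClosed_hom N
    (fun b => ⟨0, zero_mem _, b ^ 2, sq_mem_preordT b, by ring⟩) hN
  obtain ⟨χ, hχ, -⟩ := exists_real_point x hgen hR φ (insert f (Finset.univ.image g)) ∅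
    Set.countable_empty (by simp)
  have hK : homChar χ ∈ KSA g := by
    intro j
    have h1 : 0 ≤ φ (g j) := hφ _ ⟨0, zero_mem _, g j, gen_mem_preordT j, by ring⟩
    have h2 := hχ (g j) (by simp)
    exact sign_nonneg_iff.1 (h2 ▸ sign_nonneg_iff.2 h1)
  have h1 : 0 ≤ φ (-f) := hφ _ ⟨1, one_mem _, 0, zero_mem _, by ring⟩
  have h2 := hχ f (by simp)
  rw [map_neg, Left.nonneg_neg_iff] at h1
  have h3 : χ f ≤ 0 := sign_nonpos_iff.1 (h2 ▸ sign_nonpos_iff.2 h1)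
  exact absurd (hf _ hK) (not_lt.2 h3)

/-! ### Positive functionals -/

section Functional
variable {A : Type*} [CommRing A] [Algebra ℝ A] {n : ℕ} (x : Fin n → A)
  (hgen : Algebra.adjoin ℝ (Set.range x) = ⊤) {m : ℕ} (g : Fin m → A)
  {E : Type*} [CommRing E] [Algebra ℝ E] (ι : A →ₐ[ℝ] E)

/-- The Cauchy–Schwarz inequality for a functional that is nonnegative on squares. -/
theorem sq_le_of_nonneg_on_squares {L : E →ₗ[ℝ] ℝ} (hL : ∀ e, 0 ≤ L (e ^ 2)) (b : E) :
    L b ^ 2 ≤ L 1 * L (b ^ 2) := by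
  have h : ∀ t : ℝ, 0 ≤ L 1 * (t * t) + (2 * L b) * t + L (b ^ 2) := by
    intro t
    have := hL (b + t • 1)
    have e : (b + t • (1 : E)) ^ 2 = b ^ 2 + (2 * t) • b + (t * t) • 1 := by
      simp only [Algebra.smul_def, map_mul, mul_one, map_ofNat]
      ring
    rw [e] at this
    simp only [map_add, map_smul, smul_eq_mul] at this
    linarith
  have := discrim_le_zero h
  unfold discrim at this
  nlinarith

include hgen in
/-- A functional that is nonnegative on the preordering is bounded, on a fraction `a / P`, by the
supremum of `|a / P|` over `K`: the moments of `a / P` grow at most like powers of the supremum. -/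
theorem abs_le_of_sq_le (L : E →ₗ[ℝ] ℝ) (hL : ∀ t ∈ preordT g, ∀ e : E, 0 ≤ L (ι t * e ^ 2))
    (a P : A) (v : E) (hv : ι P * v = 1) (c : ℝ) (hc : 0 ≤ c)
    (hP : ∀ χ ∈ KSA g, (χ : A → ℝ) P ≠ 0)
    (ha : ∀ χ ∈ KSA g, ((χ : A → ℝ) a) ^ 2 ≤ c ^ 2 * ((χ : A → ℝ) P) ^ 2) :
    |L (ι a * v)| ≤ c * L 1 := by
  have hL1 : ∀ e : E, 0 ≤ L (e ^ 2) := fun e => by simpa using hL 1 (one_mem _) e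
  have hl0 : 0 ≤ L 1 := by simpa using hL1 1
  set b := ι a * v with hb
  refine le_of_forall_pos_le_add fun ε hε => ?_
  -- work with a slightly larger bound `c'`
  obtain ⟨c', hc', hc'ε⟩ : ∃ c' > c, c' * L 1 ≤ c * L 1 + ε := by
    refine ⟨c + ε / (L 1 + 1), by have : 0 < ε / (L 1 + 1) := by positivity
                                  linarith, ?_⟩
    have : ε / (L 1 + 1) * L 1 ≤ ε := by
      rw [div_mul_eq_mul_div, div_le_iff₀ (by linarith)]
      nlinarith
    linarith
  refine le_trans ?_ hc'ε
  have hc'0 : 0 < c' := lt_of_le_of_lt hc hc'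
  obtain ⟨s, hs, t, ht, hst⟩ := exists_strict_certificate x hgen g
    (algebraMap ℝ A (c' ^ 2) * P ^ 2 - a ^ 2) (fun χ hχ => by
      have h1 := ha χ hχ
      have h2 : 0 < ((χ : A → ℝ) P) ^ 2 := by have := hP χ hχ; positivity
      rw [charHom_apply] at *
      rw [charHom_apply] at h1
      simp only [map_sub, map_mul, map_pow, AlgHom.commutes]
      have h3 : c ^ 2 < c' ^ 2 := by nlinarith
      have : (algebraMap ℝ ℝ) c' = c' := rfl
      rw [this]
      nlinarith)
  set s₁ : E := ι s * ι P ^ 2 with hs₁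
  have hrel : (algebraMap ℝ E (c' ^ 2) - b ^ 2) * s₁ = 1 + ι t := by
    have := congrArg ι hst
    simp only [map_sub, map_mul, map_pow, map_add, map_one, AlgHom.commutes] at this
    rw [← this, hb, hs₁, map_pow]
    linear_combination (-(ι a ^ 2 * ι s) * (ι P * v + 1)) * hv
  have hz : ∀ j : ℕ, 0 ≤ L (b ^ (2 * j) * s₁) := by
    intro j
    have := hL s hs (ι P * b ^ j)
    convert this using 2
    rw [hs₁]
    ring
  have hmain : ∀ j : ℕ, L (b ^ (2 * j)) ≤ c' ^ 2 * L (b ^ (2 * j) * s₁) - L (b ^ (2 * (j + 1)) * s₁)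
      := by
    intro j
    have e : b ^ (2 * j) + ι t * (b ^ j) ^ 2 =
        (c' ^ 2) • (b ^ (2 * j) * s₁) - b ^ (2 * (j + 1)) * s₁ := by
      rw [Algebra.smul_def]
      linear_combination (-b ^ (2 * j)) * hrel
    have h1 := congrArg L e
    rw [map_add, map_sub, map_smul, smul_eq_mul] at h1
    have := hL t ht (b ^ j)
    linarith
  have hy0 : ∀ j : ℕ, 0 ≤ L (b ^ (2 * j)) := fun j => by
    have := hL1 (b ^ j)
    rwa [← pow_mul, mul_comm] at this
  have hzb : ∀ j : ℕ, L (b ^ (2 * j) * s₁) ≤ c' ^ (2 * j) * L s₁ := by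
    intro j
    induction j with
    | zero => simp
    | succ j ih =>
      have h1 := hmain j
      have h2 := hy0 j
      calc _ ≤ c' ^ 2 * L (b ^ (2 * j) * s₁) := by linarith
        _ ≤ c' ^ 2 * (c' ^ (2 * j) * L s₁) := by gcongr
        _ = _ := by ring
  have hyb : ∀ j : ℕ, L (b ^ (2 * j)) ≤ c' ^ (2 * j) * (c' ^ 2 * L s₁) := by
    intro j
    have h1 := hmain j
    have h2 := hz (j + 1)
    calc _ ≤ c' ^ 2 * L (b ^ (2 * j) * s₁) := by linarith
      _ ≤ c' ^ 2 * (c' ^ (2 * j) * L s₁) := by gcongr; exact hzb j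
      _ = _ := by ring
  rcases hl0.eq_or_lt with h0 | h0
  · have := sq_le_of_nonneg_on_squares hL1 b
    rw [← h0, zero_mul] at this
    have : L b = 0 := by nlinarith
    rw [this, ← h0]; simp
  by_contra hlt
  rw [not_le] at hlt
  -- repeated Cauchy–Schwarz
  have hcs : ∀ k : ℕ, (|L b| / L 1) ^ (2 ^ k) ≤ |L (b ^ (2 ^ k))| / L 1 := by
    intro k
    induction k with
    | zero => simp
    | succ k ih =>
      have h1 := sq_le_of_nonneg_on_squares hL1 (b ^ (2 ^ k))
      have h2 : 0 ≤ L ((b ^ 2 ^ k) ^ 2) := hL1 _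
      rw [pow_succ, pow_mul, pow_mul, abs_of_nonneg h2]
      calc _ ≤ (|L (b ^ (2 ^ k))| / L 1) ^ 2 := by gcongr
        _ = L (b ^ (2 ^ k)) ^ 2 / L 1 ^ 2 := by rw [div_pow, sq_abs]
        _ ≤ (L 1 * L ((b ^ 2 ^ k) ^ 2)) / L 1 ^ 2 := by gcongr
        _ = _ := by field_simp
  set ρ := |L b| / (c' * L 1) with hρ
  have hρ1 : 1 < ρ := by rw [hρ, one_lt_div (by positivity)]; exact hlt
  obtain ⟨N, hN⟩ := pow_unbounded_of_one_lt ((c' ^ 2 * L s₁) / L 1) hρ1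
  have h1 := hcs (N + 1)
  have h2 := hyb (2 ^ N)
  have e1 : 2 * 2 ^ N = 2 ^ (N + 1) := by ring
  rw [e1] at h2
  have h3 : 0 ≤ L (b ^ 2 ^ (N + 1)) := e1 ▸ hy0 (2 ^ N)
  rw [abs_of_nonneg h3] at h1
  have h4 : ρ ^ (2 ^ (N + 1)) ≤ (c' ^ 2 * L s₁) / L 1 := by
    have e2 : ρ = (|L b| / L 1) / c' := by rw [hρ]; field_simp
    rw [e2, div_pow, div_le_iff₀ (by positivity)]
    calc _ ≤ _ := h1
      _ ≤ (c' ^ 2 ^ (N + 1) * (c' ^ 2 * L s₁)) / L 1 := by gcongr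
      _ = _ := by ring
  have h5 : ρ ^ N ≤ ρ ^ (2 ^ (N + 1)) :=
    pow_le_pow_right₀ hρ1.le ((Nat.lt_two_pow_self).le.trans
      (Nat.pow_le_pow_right (by norm_num) (Nat.le_succ N)))
  linarith

variable {x g}

theorem one_le_of_mem {p : A} (hp1 : p - 1 ∈ PosA (KSA g)) {χ : CharSet A} (hχ : χ ∈ KSA g) :
    1 ≤ charHom χ p := by
  have := hp1 χ hχ
  rw [charHom_apply, map_sub, map_one] at this
  linarith

include hgen in
/-- Every element of `A` is dominated on `K` by a power of `p`. -/
theorem exists_growth {p : A} {k : ℕ} (hk : 1 ≤ k) (hp1 : p - 1 ∈ PosA (KSA g))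
    (hpgrow : (k : A) * p - ∑ i, x i ^ 2 ∈ PosA (KSA g)) (f : A) :
    ∃ (c : ℝ) (N : ℕ), 0 ≤ c ∧ ∀ χ ∈ KSA g, |charHom χ f| ≤ c * charHom χ p ^ N := by
  have hf : f ∈ Algebra.adjoin ℝ (Set.range x) := hgen ▸ trivial
  induction hf using Algebra.adjoin_induction with
  | mem y hy =>
    obtain ⟨i, rfl⟩ := hy
    refine ⟨k, 1, by positivity, fun χ hχ => ?_⟩
    have h1 := one_le_of_mem hp1 hχ
    have h2 := hpgrow χ hχ
    rw [charHom_apply] at h2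
    simp only [map_sub, map_mul, map_natCast, map_sum, map_pow] at h2
    have h3 : charHom χ (x i) ^ 2 ≤ ∑ i, charHom χ (x i) ^ 2 :=
      Finset.single_le_sum (f := fun i => charHom χ (x i) ^ 2) (fun i _ => sq_nonneg _)
        (Finset.mem_univ i)
    have hk' : (1 : ℝ) ≤ k := by exact_mod_cast hk
    have h4 : 1 ≤ k * charHom χ p := by nlinarith
    rw [pow_one]
    refine abs_le_of_sq_le_sq ?_ (by linarith)
    nlinarith
  | algebraMap r =>
    refine ⟨|r|, 0, abs_nonneg r, fun χ _ => ?_⟩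
    simp [AlgHom.commutes]
  | add y z _ _ h1 h2 =>
    obtain ⟨c, N, hc, h1⟩ := h1
    obtain ⟨c', N', hc', h2⟩ := h2
    refine ⟨c + c', N + N', by positivity, fun χ hχ => ?_⟩
    have hp := one_le_of_mem hp1 hχ
    rw [map_add]
    calc _ ≤ |charHom χ y| + |charHom χ z| := abs_add_le _ _
      _ ≤ c * charHom χ p ^ N + c' * charHom χ p ^ N' := add_le_add (h1 χ hχ) (h2 χ hχ)
      _ ≤ c * charHom χ p ^ (N + N') + c' * charHom χ p ^ (N + N') := by
        gcongr <;> first | exact hp | omega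
      _ = _ := by ring
  | mul y z _ _ h1 h2 =>
    obtain ⟨c, N, hc, h1⟩ := h1
    obtain ⟨c', N', hc', h2⟩ := h2
    refine ⟨c * c', N + N', by positivity, fun χ hχ => ?_⟩
    have hp := one_le_of_mem hp1 hχ
    rw [map_mul, abs_mul]
    calc _ ≤ (c * charHom χ p ^ N) * (c' * charHom χ p ^ N') :=
          mul_le_mul (h1 χ hχ) (h2 χ hχ) (abs_nonneg _) (by positivity)
      _ = _ := by ring

include hgen in
/-- If `p` is invertible in `E`, a functional nonnegative on the preordering is nonnegative on
`h² f` for every `f` that is nonnegative on `K`. -/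
theorem nonneg_of_nonneg_on_K {p : A} {k : ℕ} (hk : 1 ≤ k) (hp1 : p - 1 ∈ PosA (KSA g))
    (hpgrow : (k : A) * p - ∑ i, x i ^ 2 ∈ PosA (KSA g)) (hp : IsUnit (ι p))
    (L : E →ₗ[ℝ] ℝ) (hL : ∀ t ∈ genPreordering (fun j => ι (g j)), 0 ≤ L t)
    {f : A} (hf : f ∈ PosA (KSA g)) (h : E) : 0 ≤ L (h ^ 2 * ι f) := by
  obtain ⟨c, N, hc, hfN⟩ := exists_growth hgen hk hp1 hpgrow f
  obtain ⟨v, hv⟩ := (hp.pow (2 * N)).exists_right_inv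
  let L' : E →ₗ[ℝ] ℝ := L.comp (LinearMap.mulLeft ℝ ((h * ι p ^ N) ^ 2))
  have hL'a : ∀ e, L' e = L ((h * ι p ^ N) ^ 2 * e) := fun e => rfl
  have key := abs_le_of_sq_le x hgen g ι L' (fun t ht e => by
      rw [hL'a]
      have h1 := genPreordering_map_mul (ι : A →+* E) ht ((h * ι p ^ N * e) ^ 2)
        (by
          have := genPreordering_sumSq_mul (g := fun j => ι (g j))
            (IsSquare.sq (h * ι p ^ N * e)).isSumSq genPreordering_one
          rwa [mul_one] at this)
      have := hL _ h1
      convert this using 2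
      simp only [RingHom.coe_coe]
      ring)
    (f - algebraMap ℝ A (c / 2) * p ^ (2 * N)) (p ^ (2 * N)) v (by rw [map_pow]; exact hv) (c / 2)
    (by positivity)
    (fun χ hχ => by
      have := one_le_of_mem hp1 hχ
      rw [charHom_apply, map_pow]
      positivity)
    (fun χ hχ => by
      have h1 := one_le_of_mem hp1 hχ
      have h2 := hfN χ hχ
      have h3 : 0 ≤ charHom χ f := hf χ hχ
      simp only [charHom_apply, map_sub, map_mul, map_pow, AlgHom.commutes]
      rw [← mul_pow]
      have e : (algebraMap ℝ ℝ) (c / 2) = c / 2 := rfl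
      rw [e]
      rw [abs_of_nonneg h3] at h2
      have h4 : charHom χ p ^ N ≤ charHom χ p ^ (2 * N) := by
        exact pow_le_pow_right₀ h1 (by omega)
      have h5 : c * charHom χ p ^ N ≤ c * charHom χ p ^ (2 * N) := by gcongr
      apply sq_le_sq'
      · linarith
      · linarith)
  have e1 : L' (ι (f - algebraMap ℝ A (c / 2) * p ^ (2 * N)) * v) =
      L (h ^ 2 * ι f) - c / 2 * L' 1 := by
    rw [hL'a, hL'a, ← smul_eq_mul (c / 2), ← map_smul, ← map_sub]
    congr 1
    rw [map_sub, map_mul, AlgHom.commutes, map_pow, Algebra.smul_def]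
    linear_combination (h ^ 2 * ι f - h ^ 2 * ι p ^ (2 * N) * (algebraMap ℝ E) (c / 2)) * hv
  rw [e1] at key
  have := (abs_le.1 key).1
  linarith

end Functional

/-! ### A Haviland theorem for fractions -/

section Haviland
open Filter Topology CompactlySupported

variable {A : Type*} [CommRing A] [Algebra ℝ A] (D : Submonoid A)
  {X : Type*} [TopologicalSpace X] (ev : X → A →ₐ[ℝ] ℝ) (K : Set X)

theorem mk_eq_of_mul_eq {D : Submonoid A} {a b : A} {d e : D} (h : (e : A) * a = d * b) :
    Localization.mk a d = Localization.mk b e := by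
  rw [Localization.mk_eq_mk_iff, Localization.r_iff_exists]
  exact ⟨1, by simpa using h⟩

/-- The cone of pairs `(R, φ)` of a fraction and a compactly supported function whose sum is
nonnegative on `K`, off the zeros of a denominator of `R`. -/
def fracCone : PointedCone ℝ (Localization D × C_c(X, ℝ)) where
  carrier := {z | ∃ (a : A) (d : D), z.1 = Localization.mk a d ∧
    ∀ χ ∈ K, ev χ d ≠ 0 → 0 ≤ ev χ a / ev χ d + z.2 χ}
  add_mem' := by
    rintro ⟨R, φ⟩ ⟨R', φ'⟩ ⟨a, d, h, h1⟩ ⟨a', d', h', h1'⟩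
    refine ⟨d * a' + d' * a, d * d', ?_, fun χ hχ hd => ?_⟩
    · simp only at h h'
      rw [Prod.fst_add, h, h', Localization.add_mk]
    · simp only [Submonoid.coe_mul, map_mul] at hd
      have hd1 := left_ne_zero_of_mul hd
      have hd2 := right_ne_zero_of_mul hd
      have e1 := h1 χ hχ hd1
      have e2 := h1' χ hχ hd2
      simp only [Prod.snd_add, CompactlySupportedContinuousMap.add_apply, Submonoid.coe_mul,
        map_mul, map_add] at e1 e2 ⊢
      have : (ev χ d * ev χ a' + ev χ d' * ev χ a) / (ev χ d * ev χ d') =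
          ev χ a / ev χ d + ev χ a' / ev χ d' := by field_simp; ring
      rw [this]
      linarith
  zero_mem' := ⟨0, 1, (Localization.mk_zero 1).symm, fun χ _ _ => by simp⟩
  smul_mem' := by
    rintro c ⟨R, φ⟩ ⟨a, d, h, h1⟩
    refine ⟨(c : ℝ) • a, d, ?_, fun χ hχ hd => ?_⟩
    · simp only at h
      rw [← Localization.smul_mk, ← h]
      rfl
    · have e1 := h1 χ hχ hd
      have : ((c • ((R, φ) : Localization D × C_c(X, ℝ))).2 : C_c(X, ℝ)) χ = (c : ℝ) * φ χ := rfl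
      rw [this, map_smul, smul_eq_mul, mul_div_assoc, ← mul_add]
      exact mul_nonneg c.2 e1

theorem mem_fracCone {z : Localization D × C_c(X, ℝ)} : z ∈ fracCone D ev K ↔
    ∃ (a : A) (d : D), z.1 = Localization.mk a d ∧
    ∀ χ ∈ K, ev χ d ≠ 0 → 0 ≤ ev χ a / ev χ d + z.2 χ := Iff.rfl

/-- A functional on fractions that is nonnegative on the fractions nonnegative on `K` extends to
compactly supported functions, compatibly with the order. -/
theorem exists_extension (L : Localization D →ₗ[ℝ] ℝ)
    (hpos : ∀ (a : A) (d : D), (∀ χ ∈ K, 0 ≤ ev χ a * ev χ d) → 0 ≤ L (Localization.mk a d)) :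
    ∃ Λ : C_c(X, ℝ) →ₗ[ℝ] ℝ, ∀ z ∈ fracCone D ev K, 0 ≤ L z.1 + Λ z.2 := by
  let f : Localization D × C_c(X, ℝ) →ₗ.[ℝ] ℝ :=
    ⟨LinearMap.ker (LinearMap.snd ℝ (Localization D) C_c(X, ℝ)),
      (L.comp (LinearMap.fst ℝ (Localization D) C_c(X, ℝ))).domRestrict _⟩
  have hf : ∀ y : f.domain, f y = L (y : Localization D × C_c(X, ℝ)).1 := fun y => rfl
  obtain ⟨G, hG1, hG2⟩ := riesz_extension (fracCone D ev K) f
    (by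
      rintro ⟨⟨R, φ⟩, hy⟩ ⟨a, d, h, h1⟩
      rw [hf]
      have hφ : φ = 0 := hy
      subst hφ
      simp only at h ⊢
      rw [h]
      refine hpos a d fun χ hχ => ?_
      by_cases hd : ev χ d = 0
      · simp [hd]
      · have h2 := h1 χ hχ hd
        rw [CompactlySupportedContinuousMap.zero_apply, add_zero] at h2
        have h3 : ev χ a * ev χ d = ev χ a / ev χ d * ev χ d ^ 2 := by field_simp
        rw [h3]
        positivity)
    (by
      rintro ⟨R, φ⟩
      obtain ⟨M, hM⟩ := φ.continuous.bounded_above_of_compact_support φ.hasCompactSupport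
      refine ⟨⟨(-R + Localization.mk (algebraMap ℝ A M) 1, 0), rfl⟩, algebraMap ℝ A M, 1, ?_,
        fun χ _ _ => ?_⟩
      · simp
      · have hMχ : -M ≤ φ χ := (abs_le.1 (hM χ)).1
        simp only [Prod.snd_add, zero_add, OneMemClass.coe_one, map_one, div_one, AlgHom.commutes]
        have e : (algebraMap ℝ ℝ) M = M := rfl
        rw [e]
        linarith)
  refine ⟨G.comp (LinearMap.inr ℝ (Localization D) C_c(X, ℝ)), fun z hz => ?_⟩
  have h1 := hG2 z hz
  have h2 := hG1 ⟨(z.1, 0), rfl⟩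
  rw [hf] at h2
  have h3 : z = (z.1, 0) + (0, z.2) := by simp
  rw [h3, map_add, h2] at h1
  exact h1

variable {D ev K} [T2Space X] [LocallyCompactSpace X] [MeasurableSpace X] [BorelSpace X]

/-- A cut-off of the function `a / d`, at level `δ` in `d²` and at level `1 / δ` in `q`. -/
def cutoff (ev : X → A →ₐ[ℝ] ℝ) (q a d : A) (δ : ℝ) (χ : X) : ℝ :=
  ev χ a * ev χ d * (ev χ d ^ 2 / max (ev χ d ^ 2) δ ^ 2) * max 0 (min 1 (2 - δ * ev χ q))

theorem cutoff_bound {q : A} (hq : ∀ χ, 0 ≤ ev χ q) (a d : A) {δ : ℝ} (hδ : 0 < δ) (χ : X) :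
    |cutoff ev q a d δ χ| ≤ |ev χ a / ev χ d| ∧ (ev χ d ≠ 0 →
    |ev χ a / ev χ d - cutoff ev q a d δ χ| ≤
      |ev χ a / ev χ d| * (δ * (1 / ev χ d ^ 2 + ev χ q))) := by
  unfold cutoff
  set u := ev χ a
  set w := ev χ d
  have hq0 := hq χ
  set y := ev χ q
  set θ := max 0 (min 1 (2 - δ * y)) with hθ
  have hθ0 : 0 ≤ θ := le_max_left _ _
  have hθ1 : θ ≤ 1 := max_le zero_le_one (min_le_left _ _)
  by_cases hw : w = 0
  · simp [hw]
  have hw2 : 0 < w ^ 2 := by positivity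
  have hm : 0 < max (w ^ 2) δ := lt_max_of_lt_left hw2
  set κ := w ^ 2 * (w ^ 2 / max (w ^ 2) δ ^ 2) with hκ
  have hκ0 : 0 ≤ κ := by positivity
  have hκ1 : κ ≤ 1 := by
    rw [hκ, ← mul_div_assoc, div_le_one (by positivity), sq (max _ _)]
    have := le_max_left (w ^ 2) δ
    gcongr
  have e : u * w * (w ^ 2 / max (w ^ 2) δ ^ 2) * θ = u / w * (κ * θ) := by
    rw [hκ]; field_simp
  rw [e]
  have hκθ : κ * θ ≤ 1 := mul_le_one₀ hκ1 hθ0 hθ1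
  have hκθ0 : 0 ≤ κ * θ := mul_nonneg hκ0 hθ0
  refine ⟨?_, fun _ => ?_⟩
  · rw [abs_mul, abs_of_nonneg hκθ0]
    exact mul_le_of_le_one_right (abs_nonneg _) hκθ
  · have e2 : u / w - u / w * (κ * θ) = u / w * (1 - κ * θ) := by ring
    rw [e2, abs_mul, abs_of_nonneg (sub_nonneg.2 hκθ)]
    gcongr
    have hb : 0 ≤ δ * (1 / w ^ 2) := by positivity
    have hb' : 0 ≤ δ * y := by positivity
    rw [mul_add]
    by_cases h1 : δ ≤ w ^ 2
    · have hκe : κ = 1 := by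
        rw [hκ, max_eq_left h1]; field_simp
      by_cases h2 : δ * y ≤ 1
      · have hθe : θ = 1 := by
          rw [hθ, min_eq_left (by linarith), max_eq_right zero_le_one]
        rw [hκe, hθe]
        linarith
      · linarith
    · have : 1 ≤ δ * (1 / w ^ 2) := by
        rw [mul_one_div, le_div_iff₀ hw2]
        linarith
      linarith

theorem cutoff_tendsto {q : A} (hq : ∀ χ, 0 ≤ ev χ q) (a d : A) (χ : X) :
    Tendsto (fun n : ℕ => cutoff ev q a d (1 / ((n : ℝ) + 1)) χ) atTop
      (𝓝 (ev χ a / ev χ d)) := by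
  by_cases hd : ev χ d = 0
  · simp [cutoff, hd]
  have h0 : Tendsto (fun n : ℕ => |ev χ a / ev χ d| *
      ((1 / ((n : ℝ) + 1)) * (1 / ev χ d ^ 2 + ev χ q))) atTop (𝓝 0) := by
    have := ((tendsto_one_div_add_atTop_nhds_zero_nat (𝕜 := ℝ)).mul_const
      (1 / ev χ d ^ 2 + ev χ q)).const_mul |ev χ a / ev χ d|
    simpa using this
  have h1 := squeeze_zero_norm (fun n => by
    rw [Real.norm_eq_abs]
    exact (cutoff_bound hq a d (δ := 1 / ((n : ℝ) + 1)) (by positivity) χ).2 hd) h0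
  have := (tendsto_const_nhds (x := ev χ a / ev χ d)).sub h1
  simpa using this

theorem exists_cutoff_cc (hev : ∀ a, Continuous fun χ => ev χ a) {q : A}
    (hqc : ∀ M : ℝ, IsCompact {χ | ev χ q ≤ M}) (a d : A) {δ : ℝ}
    (hδ : 0 < δ) : ∃ φ : C_c(X, ℝ), ∀ χ, φ χ = cutoff ev q a d δ χ := by
  have hc : Continuous (cutoff ev q a d δ) := by
    unfold cutoff
    have ha := hev a
    have hd := hev d
    have hq' := hev q
    refine ((ha.mul hd).mul ((hd.pow 2).div (((hd.pow 2).max continuous_const).pow 2) ?_)).mul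
      (continuous_const.max (continuous_const.min (continuous_const.sub
        (continuous_const.mul hq'))))
    intro χ
    have : 0 < max (ev χ d ^ 2) δ := lt_max_of_lt_right hδ
    exact pow_ne_zero 2 this.ne'
  refine ⟨⟨⟨_, hc⟩, ?_⟩, fun χ => rfl⟩
  refine HasCompactSupport.intro' (hqc (2 / δ)) ?_ ?_
  · exact isClosed_le (hev q) continuous_const
  · intro χ hχ
    have hχ' : 2 / δ < ev χ q := not_le.1 hχ
    rw [div_lt_iff₀ hδ] at hχ'
    change cutoff ev q a d δ χ = 0
    unfold cutoff
    have hz : max 0 (min 1 (2 - δ * ev χ q)) = 0 := by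
      rw [min_eq_right (by linarith), max_eq_left (by linarith)]
    rw [hz, mul_zero]

/-- Haviland's theorem for fractions. The extension to compactly supported functions is represented by
a measure (Riesz–Markov–Kakutani), and `cutoff_bound` shows that cutting off loses arbitrarily little. -/
theorem exists_measure_of_nonneg (hK : IsClosed K) (hev : ∀ a, Continuous fun χ => ev χ a) {q : A}
    (hq : ∀ χ, 0 ≤ ev χ q) (hqc : ∀ M : ℝ, IsCompact {χ | ev χ q ≤ M})
    (L : Localization D →ₗ[ℝ] ℝ)
    (hpos : ∀ (a : A) (d : D), (∀ χ ∈ K, 0 ≤ ev χ a * ev χ d) → 0 ≤ L (Localization.mk a d)) :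
    ∃ μ : Measure X, μ Kᶜ = 0 ∧ (∀ d ∈ D, μ {χ | ev χ d = 0} = 0) ∧
      ∀ (f : A) (d : D), Integrable (fun χ => ev χ f / ev χ d) μ ∧
        L (Localization.mk f d) = ∫ χ, ev χ f / ev χ d ∂μ := by
  obtain ⟨Λ, hΛ⟩ := exists_extension D ev K L hpos
  have hΛpos : ∀ φ : C_c(X, ℝ), (∀ χ ∈ K, 0 ≤ φ χ) → 0 ≤ Λ φ := by
    intro φ hφ
    have := hΛ (0, φ) ⟨0, 1, (Localization.mk_zero 1).symm, fun χ hχ _ => by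
      simpa using hφ χ hχ⟩
    simpa using this
  let Λ' : C_c(X, ℝ) →ₚ[ℝ] ℝ := PositiveLinearMap.mk₀ Λ fun φ hφ => hΛpos φ fun χ _ => hφ χ
  let μ := RealRMK.rieszMeasure Λ'
  have h_int : ∀ φ : C_c(X, ℝ), ∫ χ, φ χ ∂μ = Λ φ := RealRMK.integral_rieszMeasure Λ'
  have hμK : μ Kᶜ = 0 := by
    rw [hK.isOpen_compl.measure_eq_iSup_isCompact]
    simp only [ENNReal.iSup_eq_zero]
    intro C hC hCc
    obtain ⟨f, hf1, hf0, hfc, hf⟩ := exists_continuous_one_zero_of_isCompact hCc hK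
      (Set.subset_compl_iff_disjoint_right.1 hC)
    have h1 := RealRMK.rieszMeasure_le_of_eq_one Λ' (f := ⟨f, hfc⟩) (fun χ => (hf χ).1) hCc
      (fun χ hχ => hf1 hχ)
    have h2 : 0 ≤ Λ (-⟨f, hfc⟩) := hΛpos _ fun χ hχ => by
      have : f χ = 0 := hf0 hχ
      change 0 ≤ -f χ
      rw [this, neg_zero]
    have h3 : Λ' ⟨f, hfc⟩ ≤ 0 := by
      rw [map_neg] at h2
      change Λ ⟨f, hfc⟩ ≤ 0
      linarith
    rw [ENNReal.ofReal_of_nonpos h3] at h1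
    exact le_antisymm h1 bot_le
  have hrep : ∀ (f : A) (d : D), Integrable (fun χ => ev χ f / ev χ d) μ ∧
        L (Localization.mk f d) = ∫ χ, ev χ f / ev χ d ∂μ := by
    intro a d
    have hδ : ∀ n : ℕ, (0 : ℝ) < 1 / ((n : ℝ) + 1) := fun n => by positivity
    choose φ hφ using fun n : ℕ => exists_cutoff_cc hev hqc a d (hδ n)
    -- the fraction controlling the error of the cut-off
    set b : Localization D :=
      Localization.mk ((a ^ 2 + (d : A) ^ 2) * (1 + q * (d : A) ^ 2)) (d ^ 4) with hb
    have hs : ∀ χ, ev χ d ≠ 0 → |ev χ a / ev χ d| ≤ (ev χ a / ev χ d) ^ 2 + 1 := by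
      intro χ _
      rw [← sq_abs]
      nlinarith [abs_nonneg (ev χ a / ev χ d), sq_nonneg (|ev χ a / ev χ d| - 1)]
    have herr : ∀ n χ, ev χ d ≠ 0 → |ev χ a / ev χ d - φ n χ| ≤ (1 / ((n : ℝ) + 1)) *
        (((ev χ a / ev χ d) ^ 2 + 1) * (1 / ev χ d ^ 2 + ev χ q)) := by
      intro n χ hd
      rw [hφ]
      refine ((cutoff_bound hq a d (hδ n) χ).2 hd).trans ?_
      have h1 := hs χ hd
      have h2 := hq χ
      have h3 := (hδ n).le
      have h4 : 0 ≤ 1 / ev χ d ^ 2 + ev χ q := by positivity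
      calc _ = |ev χ a / ev χ d| * (1 / ev χ d ^ 2 + ev χ q) * (1 / ((n : ℝ) + 1)) := by ring
        _ ≤ ((ev χ a / ev χ d) ^ 2 + 1) * (1 / ev χ d ^ 2 + ev χ q) * (1 / ((n : ℝ) + 1)) := by
          gcongr
        _ = _ := by ring
    have hclose : ∀ n, |L (Localization.mk a d) - Λ (φ n)| ≤ (1 / ((n : ℝ) + 1)) * L b := by
      intro n
      set δ := 1 / ((n : ℝ) + 1)
      have hcone : ∀ σ : ℝ, |σ| = 1 →
          0 ≤ L (δ • b - σ • Localization.mk a d) + Λ (σ • φ n) := by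
        intro σ hσ
        apply hΛ (δ • b - σ • Localization.mk a d, σ • φ n)
        refine ⟨δ • ((a ^ 2 + (d : A) ^ 2) * (1 + q * (d : A) ^ 2)) - σ • (a * (d : A) ^ 3), d ^ 4,
          ?_, fun χ hχ hd => ?_⟩
        · simp only
          rw [hb, Localization.smul_mk, Localization.smul_mk,
            mk_eq_of_mul_eq (a := σ • a) (b := σ • (a * (d : A) ^ 3)) (e := d ^ 4)
              (by simp only [SubmonoidClass.coe_pow, mul_smul_comm]; congr 1; ring),
            sub_eq_add_neg, Localization.neg_mk, Localization.add_mk_self, sub_eq_add_neg]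
        · have hd' : ev χ d ≠ 0 := by
            intro h0
            apply hd
            simp [h0]
          have h1 := herr n χ hd'
          have h2 : |σ * (ev χ a / ev χ d - φ n χ)| ≤
              δ * (((ev χ a / ev χ d) ^ 2 + 1) * (1 / ev χ d ^ 2 + ev χ q)) := by
            rw [abs_mul, hσ, one_mul]
            exact h1
          have h3 := (abs_le.1 h2).2
          have h4 : (σ • φ n) χ = σ * φ n χ := rfl
          simp only [h4, SubmonoidClass.coe_pow, map_sub, map_smul, map_mul, map_add, map_pow,
            map_one, smul_eq_mul]
          have h5 : (δ * ((ev χ a ^ 2 + ev χ d ^ 2) * (1 + ev χ q * ev χ d ^ 2)) -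
              σ * (ev χ a * ev χ d ^ 3)) / ev χ d ^ 4 =
              δ * (((ev χ a / ev χ d) ^ 2 + 1) * (1 / ev χ d ^ 2 + ev χ q)) -
                σ * (ev χ a / ev χ d) := by
            field_simp
          rw [h5]
          linarith
      have h1 := hcone 1 (by simp)
      have h2 := hcone (-1) (by simp)
      simp only [map_sub, map_smul, smul_eq_mul] at h1 h2
      rw [abs_le]
      constructor <;> linarith
    have hΛlim : Tendsto (fun n => Λ (φ n)) atTop (𝓝 (L (Localization.mk a d))) := by
      have h0 : Tendsto (fun n : ℕ => (1 / ((n : ℝ) + 1)) * L b) atTop (𝓝 0) := by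
        simpa using (tendsto_one_div_add_atTop_nhds_zero_nat (𝕜 := ℝ)).mul_const (L b)
      have h1 := squeeze_zero_norm (fun n => by
        rw [Real.norm_eq_abs]
        exact hclose n) h0
      simpa using (tendsto_const_nhds (x := L (Localization.mk a d))).sub h1
    have hptw : ∀ χ, Tendsto (fun n => φ n χ) atTop (𝓝 (ev χ a / ev χ d)) := by
      intro χ
      simp only [hφ]
      exact cutoff_tendsto hq a d χ
    have hφi : ∀ n, Integrable (φ n) μ := fun n =>
      (φ n).continuous.integrable_of_hasCompactSupport (φ n).hasCompactSupport
    -- a uniform bound for the integrals of the cut-offs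
    set c := L (Localization.mk (a ^ 2 + (d : A) ^ 2) (d ^ 2)) with hc
    have hbd : ∀ n, ∫⁻ χ, ‖φ n χ‖ₑ ∂μ ≤ ENNReal.ofReal c := by
      intro n
      let ψ : C_c(X, ℝ) := ⟨⟨fun χ => |φ n χ|, (φ n).continuous.abs⟩, (φ n).hasCompactSupport.abs⟩
      have h1 : 0 ≤ L (Localization.mk (a ^ 2 + (d : A) ^ 2) (d ^ 2)) + Λ (-ψ) := by
        apply hΛ (_, -ψ)
        refine ⟨a ^ 2 + (d : A) ^ 2, d ^ 2, rfl, fun χ hχ hd => ?_⟩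
        have hd' : ev χ d ≠ 0 := by
          intro h0
          apply hd
          simp [h0]
        have h2 := (cutoff_bound hq a d (hδ n) χ).1
        have h3 := hs χ hd'
        have h4 : (-ψ) χ = -|φ n χ| := rfl
        simp only [h4, hφ, SubmonoidClass.coe_pow, map_add, map_pow]
        have h5 : (ev χ a ^ 2 + ev χ d ^ 2) / ev χ d ^ 2 = (ev χ a / ev χ d) ^ 2 + 1 := by
          field_simp
        rw [h5]
        linarith
      rw [← ofReal_integral_norm_eq_lintegral_enorm (hφi n)]
      apply ENNReal.ofReal_le_ofReal
      have h2 : ∫ χ, ‖φ n χ‖ ∂μ = Λ ψ := h_int ψ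
      rw [h2]
      rw [map_neg] at h1
      linarith
    have hmeas : AEStronglyMeasurable (fun χ => ev χ a / ev χ d) μ :=
      aestronglyMeasurable_of_tendsto_ae atTop (fun n => (hφi n).aestronglyMeasurable)
        (Eventually.of_forall hptw)
    have hI : Integrable (fun χ => ev χ a / ev χ d) μ := by
      refine ⟨hmeas, ?_⟩
      have h1 : ∫⁻ χ, ‖ev χ a / ev χ d‖ₑ ∂μ ≤ liminf (fun n => ∫⁻ χ, ‖φ n χ‖ₑ ∂μ) atTop := by
        calc _ = ∫⁻ χ, liminf (fun n => ‖φ n χ‖ₑ) atTop ∂μ :=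
              lintegral_congr fun χ => ((hptw χ).enorm.liminf_eq).symm
          _ ≤ _ := lintegral_liminf_le' fun n => (hφi n).aestronglyMeasurable.enorm
      refine lt_of_le_of_lt (h1.trans (liminf_le_of_le (by isBoundedDefault) fun y hy => ?_))
        (ENNReal.ofReal_lt_top (r := c))
      obtain ⟨n, hn⟩ := hy.exists
      exact hn.trans (hbd n)
    refine ⟨hI, ?_⟩
    have hlim := tendsto_integral_of_dominated_convergence (fun χ => |ev χ a / ev χ d|)
      (fun n => (hφi n).aestronglyMeasurable) hI.abs
      (fun n => Eventually.of_forall fun χ => by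
        rw [Real.norm_eq_abs, hφ]
        exact (cutoff_bound hq a d (hδ n) χ).1) (Eventually.of_forall hptw)
    simp only [h_int] at hlim
    exact tendsto_nhds_unique hΛlim hlim
  refine ⟨μ, hμK, fun d hd => ?_, hrep⟩
  -- `∫ d / d = L 1 = ∫ 1`
  obtain ⟨h1, h2⟩ := hrep d ⟨d, hd⟩
  obtain ⟨h3, h4⟩ := hrep 1 1
  have h5 : ∫ χ, (ev χ 1 / ev χ (1 : D) - ev χ d / ev χ d) ∂μ = 0 := by
    rw [integral_sub h3 h1, ← h4, ← h2, Localization.mk_self_mk, Localization.mk_one, sub_self]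
  rw [integral_eq_zero_iff_of_nonneg] at h5
  · refine measure_mono_null ?_ h5
    intro χ (hχ : ev χ d = 0)
    simp [hχ]
  · intro χ
    by_cases h0 : ev χ d = 0 <;> simp [h0]
  · exact h3.sub h1

end Haviland

/-! ### The character space of a finitely generated algebra -/

section CharSpace
open Filter Topology

variable {A : Type*} [CommRing A] [Algebra ℝ A] {n : ℕ}

/-- The coordinates of a character with respect to a family of elements. -/
def coord (x : Fin n → A) (χ : CharSet A) : Fin n → ℝ := fun i => charHom χ (x i)

theorem continuous_charHom (a : A) : Continuous fun χ : CharSet A => charHom χ a :=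
  (continuous_apply a).comp continuous_subtype_val

theorem continuous_coord (x : Fin n → A) : Continuous (coord x) :=
  continuous_pi fun i => continuous_charHom (x i)

theorem charHom_aeval (x : Fin n → A) (P : MvPolynomial (Fin n) ℝ) (χ : CharSet A) :
    charHom χ (aeval x P) = eval (coord x χ) P := by
  have h : (charHom χ).comp (aeval x) = aeval (coord x χ) := by
    ext i
    simp [coord]
  have := DFunLike.congr_fun h P
  rw [AlgHom.comp_apply] at this
  rw [this, ← coe_aeval_eq_eval]
  rfl

variable {x : Fin n → A} (hgen : Algebra.adjoin ℝ (Set.range x) = ⊤)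

theorem aeval_surjective_of_gen (hgen : Algebra.adjoin ℝ (Set.range x) = ⊤) :
    Function.Surjective (aeval x : MvPolynomial (Fin n) ℝ →ₐ[ℝ] A) := by
  rw [← AlgHom.range_eq_top, ← Algebra.adjoin_range_eq_range_aeval, hgen]

/-- The character space is a real algebraic subset of `ℝⁿ`. -/
theorem isClosedEmbedding_coord (hgen : Algebra.adjoin ℝ (Set.range x) = ⊤) :
    IsClosedEmbedding (coord x) := by
  have hsurj := aeval_surjective_of_gen hgen
  choose P hP using hsurj
  have hev : ∀ (χ : CharSet A) a, χ.1 a = eval (coord x χ) (P a) := fun χ a => by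
    conv_lhs => rw [← hP a]
    exact charHom_aeval x (P a) χ
  refine ⟨⟨⟨le_antisymm ?_ ?_⟩, fun χ ψ h => ?_⟩, ?_⟩
  · exact (continuous_coord x).le_induced
  · let t : TopologicalSpace (CharSet A) := TopologicalSpace.induced (coord x) inferInstance
    have hc : Continuous[t, _] (coord x) := continuous_induced_dom
    have : Continuous[t, _] (Subtype.val : CharSet A → A → ℝ) := by
      refine continuous_pi fun a => ?_
      have : (fun χ : CharSet A => χ.1 a) = (fun y => eval y (P a)) ∘ coord x :=
        funext fun χ => hev χ a
      rw [this]
      exact (MvPolynomial.continuous_eval (P a)).comp hc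
    exact this.le_induced
  · apply Subtype.ext
    funext a
    rw [hev, hev, h]
  · have : Set.range (coord x) = ⋂ Q ∈ RingHom.ker (aeval x : MvPolynomial (Fin n) ℝ →ₐ[ℝ] A),
        {y | eval y Q = 0} := by
      ext y
      simp only [Set.mem_range, Set.mem_iInter, Set.mem_ofPred_eq]
      constructor
      · rintro ⟨χ, rfl⟩ Q hQ
        rw [← charHom_aeval, RingHom.mem_ker.1 hQ, map_zero]
      · intro h
        let φ : A →ₐ[ℝ] ℝ := (Ideal.Quotient.liftₐ _ (aeval y) fun Q hQ => by
          rw [← h Q hQ, ← coe_aeval_eq_eval]; rfl).comp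
          (Ideal.quotientKerAlgEquivOfSurjective (aeval_surjective_of_gen hgen)).symm.toAlgHom
        refine ⟨homChar φ, funext fun i => ?_⟩
        change φ (x i) = y i
        have e : (Ideal.quotientKerAlgEquivOfSurjective (aeval_surjective_of_gen hgen)).symm (x i)
            = Ideal.Quotient.mkₐ ℝ _ (X i) := by
          rw [AlgEquiv.symm_apply_eq]
          simp
        simp only [φ, AlgHom.comp_apply]
        erw [e]
        simp
    rw [this]
    exact isClosed_biInter fun Q _ => isClosed_eq (MvPolynomial.continuous_eval Q) continuous_const

theorem isCompact_sum_sq_le (hgen : Algebra.adjoin ℝ (Set.range x) = ⊤) (M : ℝ) :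
    IsCompact {χ : CharSet A | charHom χ (∑ i, x i ^ 2) ≤ M} := by
  have h1 : IsCompact {y : Fin n → ℝ | ∑ i, y i ^ 2 ≤ M} := by
    refine Metric.isCompact_of_isClosed_isBounded
      (isClosed_le (by fun_prop) continuous_const) ?_
    refine (Metric.isBounded_closedBall (x := (0 : Fin n → ℝ)) (r := 1 + |M|)).subset ?_
    intro y hy
    rw [mem_closedBall_zero_iff, pi_norm_le_iff_of_nonneg (by positivity)]
    intro i
    have h2 : y i ^ 2 ≤ ∑ i, y i ^ 2 :=
      Finset.single_le_sum (f := fun i => y i ^ 2) (fun _ _ => sq_nonneg _) (Finset.mem_univ i)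
    have h3 : ∑ i, y i ^ 2 ≤ M := hy
    rw [Real.norm_eq_abs]
    have h4 := le_abs_self M
    rw [← sq_abs] at h2
    nlinarith [abs_nonneg (y i), abs_nonneg M]
  have h2 := (isClosedEmbedding_coord hgen).isCompact_preimage h1
  convert h2 using 1
  ext χ
  simp [coord]

theorem isClosed_KSA {m : ℕ} (g : Fin m → A) : IsClosed (KSA g) := by
  have : KSA g = ⋂ i, {χ | 0 ≤ charHom χ (g i)} := by
    ext χ
    simp [KSA, charHom_apply]
  rw [this]
  exact isClosed_iInter fun i => isClosed_le continuous_const (continuous_charHom (g i))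

end CharSpace

/-! ### Denominators do not vanish almost everywhere -/

section Support
open Filter Topology

/-- A measure on `ℝⁿ` for which a high negative power of a differentiable function `f` is
integrable has so little mass near the zeros of `f` that Lebesgue measure has infinite density
with respect to it there. Hence `f` does not vanish where this density is finite. -/
theorem ne_zero_of_density {n : ℕ} (ν : Measure (Fin n → ℝ)) [IsFiniteMeasure ν]
    {f : (Fin n → ℝ) → ℝ}
    {y : Fin n → ℝ} (hf : DifferentiableAt ℝ f y) (h0 : ν {z | f z = 0} = 0)
    (hi : Integrable (fun z => 1 / f z ^ (2 * n + 2)) ν) {M : ENNReal} (hM : M ≠ ⊤)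
    (hlim : Tendsto (fun r => volume (Metric.closedBall y r) / ν (Metric.closedBall y r))
      (𝓝[>] 0) (𝓝 M)) : f y ≠ 0 := by
  intro hy
  obtain ⟨C, hC⟩ := hf.hasFDerivAt.isBigO_sub.bound
  set C' := max C 1
  have hC'0 : 0 < C' := lt_max_of_lt_right one_pos
  obtain ⟨ε, hε, hball⟩ := Metric.eventually_nhds_iff.1 hC
  set I := ∫ z, 1 / f z ^ (2 * n + 2) ∂ν with hI
  have hev : ∀ z, 0 ≤ 1 / f z ^ (2 * n + 2) := fun z => by
    have : Even (2 * n + 2) := ⟨n + 1, by ring⟩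
    have := this.pow_nonneg (f z)
    positivity
  have hI0 : 0 ≤ I := integral_nonneg hev
  have hbd : ∀ r, 0 < r → r < ε →
      ν.real (Metric.closedBall y r) ≤ (C' * r) ^ (2 * n + 2) * I := by
    intro r hr hrε
    have hpos : 0 < (C' * r) ^ (2 * n + 2) := by positivity
    have h1 : ν.real (Metric.closedBall y r) * (1 / (C' * r) ^ (2 * n + 2)) ≤ I := by
      calc _ = ∫ z in Metric.closedBall y r, (1 / (C' * r) ^ (2 * n + 2)) ∂ν := by
            rw [setIntegral_const, smul_eq_mul]
        _ ≤ ∫ z in Metric.closedBall y r, 1 / f z ^ (2 * n + 2) ∂ν := by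
            refine setIntegral_mono_on_ae (integrable_const _).integrableOn hi.integrableOn
              measurableSet_closedBall ?_
            have : ∀ᵐ z ∂ν, f z ≠ 0 := by
              rw [ae_iff]; simpa using h0
            filter_upwards [this] with z hz hzr
            have h2 : |f z| ≤ C' * r := by
              have h3 := hball (lt_of_le_of_lt (Metric.mem_closedBall.1 hzr) hrε)
              rw [hy, sub_zero, Real.norm_eq_abs] at h3
              have h4 : ‖z - y‖ ≤ r := by rw [← dist_eq_norm]; exact hzr
              calc _ ≤ C * ‖z - y‖ := h3
                _ ≤ C' * ‖z - y‖ := by gcongr; exact le_max_left _ _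
                _ ≤ _ := by gcongr
            have he : Even (2 * n + 2) := ⟨n + 1, by ring⟩
            have hz' : 0 < f z ^ (2 * n + 2) := he.pow_pos hz
            apply one_div_le_one_div_of_le hz'
            rw [← he.pow_abs]
            gcongr
        _ ≤ I := setIntegral_le_integral hi (Eventually.of_forall hev)
    rw [mul_one_div, div_le_iff₀ hpos] at h1
    linarith
  -- near `y` the volume is at most a multiple of the measure
  have h1 : ∀ᶠ r in 𝓝[>] (0 : ℝ), volume (Metric.closedBall y r) / ν (Metric.closedBall y r) <
      M + 1 := hlim.eventually_lt_const (ENNReal.lt_add_right hM one_ne_zero)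
  have h2 : ∀ᶠ r in 𝓝[>] (0 : ℝ),
      (2 : ℝ) ^ n ≤ (M + 1).toReal * C' ^ (2 * n + 2) * I * r ^ (n + 2) := by
    have hlt : ∀ᶠ r in 𝓝[>] (0 : ℝ), r < ε := nhdsWithin_le_nhds (eventually_lt_nhds hε)
    filter_upwards [h1, hlt, self_mem_nhdsWithin] with r hr hrε hr0
    have hr0' : 0 < r := hr0
    have hM1 : M + 1 ≠ ⊤ := by simp [hM]
    have h3 : volume (Metric.closedBall y r) ≤ (M + 1) * ν (Metric.closedBall y r) := by
      exact (ENNReal.div_le_iff_le_mul (Or.inr hM1) (Or.inl (measure_ne_top _ _))).1 hr.le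
    rw [Real.volume_pi_closedBall y hr0'.le, Fintype.card_fin] at h3
    have h4 := ENNReal.toReal_mono (ENNReal.mul_ne_top hM1 (measure_ne_top _ _)) h3
    rw [ENNReal.toReal_ofReal (by positivity), ENNReal.toReal_mul] at h4
    have h5 := hbd r hr0' hrε
    have hrn : 0 < r ^ n := by positivity
    refine le_of_mul_le_mul_right ?_ hrn
    calc (2 : ℝ) ^ n * r ^ n = (2 * r) ^ n := (mul_pow _ _ _).symm
      _ ≤ (M + 1).toReal * ν.real (Metric.closedBall y r) := h4
      _ ≤ (M + 1).toReal * ((C' * r) ^ (2 * n + 2) * I) := by gcongr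
      _ = _ := by rw [mul_pow]; ring
  have h3 : Tendsto (fun r : ℝ => (M + 1).toReal * C' ^ (2 * n + 2) * I * r ^ (n + 2)) (𝓝[>] 0)
      (𝓝 0) := by
    have : Continuous fun r : ℝ => (M + 1).toReal * C' ^ (2 * n + 2) * I * r ^ (n + 2) := by
      fun_prop
    have h := this.tendsto 0
    simp only [ne_eq, Nat.add_eq_zero_iff, OfNat.ofNat_ne_zero, and_false, not_false_eq_true,
      zero_pow, mul_zero] at h
    exact h.mono_left nhdsWithin_le_nhds
  have h4 : (2 : ℝ) ^ n ≤ 0 := ge_of_tendsto h3 h2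
  have : (0 : ℝ) < 2 ^ n := by positivity
  linarith

/-- The elements of `D` may be inverted simultaneously off a null set, even though `D` may be
uncountable. -/
theorem ae_forall_ne_zero {A : Type*} [CommRing A] [Algebra ℝ A] {n : ℕ} {x : Fin n → A}
    (hgen : Algebra.adjoin ℝ (Set.range x) = ⊤) (D : Submonoid A)
    [MeasurableSpace (CharSet A)] [BorelSpace (CharSet A)] (μ : Measure (CharSet A))
    [IsFiniteMeasure μ] (h0 : ∀ d ∈ D, μ {χ | charHom χ d = 0} = 0)
    (hi : ∀ d ∈ D, Integrable (fun χ => 1 / charHom χ d) μ) :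
    ∀ᵐ χ ∂μ, ∀ d ∈ D, charHom χ d ≠ 0 := by
  have hc := isClosedEmbedding_coord hgen
  have hcm : MeasurableEmbedding (coord x) := hc.measurableEmbedding
  have hB := Besicovitch.ae_tendsto_rnDeriv (volume : Measure (Fin n → ℝ)) (μ.map (coord x))
  have hT := Measure.rnDeriv_lt_top (volume : Measure (Fin n → ℝ)) (μ.map (coord x))
  have h := ae_of_ae_map hcm.measurable.aemeasurable (hB.and hT)
  filter_upwards [h] with χ ⟨hχ1, hχ2⟩ d hd
  obtain ⟨P, rfl⟩ := aeval_surjective_of_gen hgen d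
  rw [charHom_aeval]
  have hPm : Measurable fun y => eval y P := (MvPolynomial.continuous_eval P).measurable
  refine ne_zero_of_density (μ.map (coord x)) (f := fun y => eval y P) ?_ ?_ ?_ hχ2.ne hχ1
  · exact (AnalyticOnNhd.eval_mvPolynomial P _ (Set.mem_univ _)).differentiableAt
  · rw [hcm.map_apply]
    convert h0 _ hd using 2
    ext ψ
    simp [charHom_aeval]
  · rw [hcm.integrable_map_iff]
    refine (hi _ (pow_mem hd (2 * n + 2))).congr (Eventually.of_forall fun ψ => ?_)
    simp [charHom_aeval]

end Support

/-- Functionals nonnegative on fractions that are nonnegative on `K` are integrals over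
the characters in `K` at which no denominator vanishes. -/
theorem exists_measure_KSA {A : Type*} [CommRing A] [Algebra ℝ A] {n : ℕ} {x : Fin n → A}
    (hgen : Algebra.adjoin ℝ (Set.range x) = ⊤) (D : Submonoid A) {m : ℕ} (g : Fin m → A)
    [MeasurableSpace (CharSet A)] [BorelSpace (CharSet A)]
    (L : Localization D →ₗ[ℝ] ℝ)
    (hpos : ∀ (a : A) (d : D), (∀ χ ∈ KSA g, 0 ≤ charHom χ a * charHom χ d) →
      0 ≤ L (Localization.mk a d)) :
    ∃ μ : Measure (CharSet A), μ (KSA g \ ⋃ d ∈ (D : Set A), ZA d)ᶜ = 0 ∧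
      (∀ d ∈ D, μ (ZA d) = 0) ∧
      ∀ (f : A) (d : D), Integrable (fun χ => charHom χ f / charHom χ d) μ ∧
        L (Localization.mk f d) = ∫ χ, charHom χ f / charHom χ d ∂μ := by
  have hc := isClosedEmbedding_coord hgen
  have : LocallyCompactSpace (CharSet A) := hc.locallyCompactSpace
  obtain ⟨μ, h1, h2, h3⟩ := exists_measure_of_nonneg (D := D) (ev := charHom) (isClosed_KSA g)
    continuous_charHom (q := ∑ i, x i ^ 2)
    (fun χ => by
      rw [map_sum]
      exact Finset.sum_nonneg fun i _ => by rw [map_pow]; positivity)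
    (isCompact_sum_sq_le hgen) L hpos
  refine ⟨μ, ?_, h2, h3⟩
  have : IsFiniteMeasure μ := by
    have := (h3 1 1).1
    simp only [map_one, OneMemClass.coe_one, div_one] at this
    exact (integrable_const_iff_isFiniteMeasure one_ne_zero).1 this
  have h4 := ae_forall_ne_zero hgen D μ h2 fun d hd => by simpa using (h3 1 ⟨d, hd⟩).1
  rw [← mem_ae_iff]
  have h5 : ∀ᵐ χ ∂μ, χ ∈ KSA g := mem_ae_iff.2 h1
  filter_upwards [h4, h5] with χ hχ hχK
  refine ⟨hχK, ?_⟩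
  simp only [Set.mem_iUnion, not_exists]
  exact fun d hd h => hχ d hd h

/-! ### Fractions that are nonnegative on a set of characters -/

section PosFrac

variable {A : Type*} [CommRing A] [Algebra ℝ A] {D : Submonoid A} {Y : Set (CharSet A)}

theorem PosF_add {R R' : Localization D} (h : R ∈ PosF D Y) (h' : R' ∈ PosF D Y) :
    R + R' ∈ PosF D Y := by
  obtain ⟨a, d, rfl, h1⟩ := h
  obtain ⟨b, e, rfl, h2⟩ := h'
  refine ⟨_, _, Localization.add_mk _ _ _ _, fun χ hχ => ?_⟩
  have e1 := h1 χ hχ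
  have e2 := h2 χ hχ
  simp only [charHom_apply, map_add, map_mul, Submonoid.coe_mul] at e1 e2 ⊢
  nlinarith [mul_nonneg e1 (sq_nonneg (charHom χ e)), mul_nonneg e2 (sq_nonneg (charHom χ d))]

theorem PosF_mul {R R' : Localization D} (h : R ∈ PosF D Y) (h' : R' ∈ PosF D Y) :
    R * R' ∈ PosF D Y := by
  obtain ⟨a, d, rfl, h1⟩ := h
  obtain ⟨b, e, rfl, h2⟩ := h'
  refine ⟨_, _, Localization.mk_mul _ _ _ _, fun χ hχ => ?_⟩
  have e1 := h1 χ hχ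
  have e2 := h2 χ hχ
  simp only [charHom_apply, map_mul, Submonoid.coe_mul] at e1 e2 ⊢
  nlinarith [mul_nonneg e1 e2]

theorem PosF_of_PosA {a : A} (h : a ∈ PosA Y) : algebraMap A (Localization D) a ∈ PosF D Y :=
  ⟨a, 1, (Localization.mk_one_eq_algebraMap a).symm, fun χ hχ => by
    have := h χ hχ
    simp only [charHom_apply, OneMemClass.coe_one, map_one, mul_one] at this ⊢
    exact this⟩

theorem PosF_one : (1 : Localization D) ∈ PosF D Y := by
  have := PosF_of_PosA (D := D) (Y := Y) (a := 1) fun χ _ => by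
    rw [charHom_apply, map_one]; exact zero_le_one
  rwa [map_one] at this

theorem PosF_zero : (0 : Localization D) ∈ PosF D Y := by
  have := PosF_of_PosA (D := D) (Y := Y) (a := 0) fun χ _ => by
    rw [charHom_apply, map_zero]
  rwa [map_zero] at this

theorem PosF_mul_self (R : Localization D) : R * R ∈ PosF D Y := by
  induction R using Localization.induction_on with
  | H y =>
    refine ⟨_, _, Localization.mk_mul _ _ _ _, fun χ hχ => ?_⟩
    simp only [charHom_apply, map_mul, Submonoid.coe_mul]
    nlinarith [sq_nonneg (charHom χ y.1 * charHom χ y.2)]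

theorem PosF_of_isSumSq {R : Localization D} (h : IsSumSq R) : R ∈ PosF D Y := by
  induction h with
  | zero => exact PosF_zero
  | sq_add a _ ih => exact PosF_add (PosF_mul_self a) ih

theorem genPreordering_subset_PosF {m : ℕ} (g : Fin m → A) (hY : Y ⊆ KSA g) :
    (genPreordering fun i => algebraMap A (Localization D) (g i)) ⊆ PosF D Y := by
  rintro R ⟨σ, hσ, rfl⟩
  refine Finset.sum_induction _ (· ∈ PosF D Y) (fun _ _ => PosF_add) PosF_zero fun ν _ => ?_
  refine PosF_mul (PosF_of_isSumSq (hσ ν)) ?_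
  refine Finset.prod_induction _ (· ∈ PosF D Y) (fun _ _ => PosF_mul) PosF_one fun j _ => ?_
  split_ifs
  · exact PosF_of_PosA fun χ hχ => hY hχ j
  · exact PosF_one

/-- The extension to fractions of a character at which no denominator vanishes. -/
def fracChar (D : Submonoid A) (χ : CharSet A) (h : ∀ d ∈ D, charHom χ d ≠ 0) :
    Localization D →ₐ[ℝ] ℝ :=
  IsLocalization.liftAlgHom (M := D) (f := charHom χ) fun y => (h y y.2).isUnit

theorem fracChar_mk (χ : CharSet A) (h : ∀ d ∈ D, charHom χ d ≠ 0) (a : A) (d : D) :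
    fracChar D χ h (Localization.mk a d) = charHom χ a / charHom χ d := by
  rw [eq_div_iff (h d d.2)]
  have h1 : ∀ b, fracChar D χ h (algebraMap A _ b) = charHom χ b := fun b =>
    IsLocalization.lift_eq _ b
  rw [← h1 d, ← map_mul, ← h1 a, ← Localization.mk_one_eq_algebraMap, Localization.mk_mul,
    ← Localization.mk_one_eq_algebraMap]
  congr 1
  apply mk_eq_of_mul_eq
  simp [mul_comm]

theorem div_nonneg_of_mul {a b : ℝ} (h : 0 ≤ a * b) : 0 ≤ a / b := by
  rw [div_eq_mul_inv]
  rcases eq_or_ne b 0 with rfl | hb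
  · simp
  · have : a * b⁻¹ = a * b * (b⁻¹) ^ 2 := by field_simp
    rw [this]
    positivity

end PosFrac

/-! ### The closure in the finest locally convex topology and the moment problem -/

section MainParts

variable {A : Type*} [CommRing A] [Algebra ℝ A]
    {n : ℕ} {x : Fin n → A} (D : Submonoid A) {m : ℕ} {g : Fin m → A} {p : A} {k : ℕ}

/-- Since `a / d = (1 / d)² (a d)`, this reduces to elements of `A` that are nonnegative on `K`. -/
theorem nonneg_on_PosF (hgen : Algebra.adjoin ℝ (Set.range x) = ⊤) (hpD : p ∈ D) (hk : 1 ≤ k)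
    (hp1 : p - 1 ∈ PosA (KSA g)) (hpgrow : (k : A) * p - ∑ i, x i ^ 2 ∈ PosA (KSA g))
    (L : Localization D →ₗ[ℝ] ℝ)
    (hL : ∀ t ∈ genPreordering fun i => algebraMap A (Localization D) (g i), 0 ≤ L t)
    (a : A) (d : D) (h : ∀ χ ∈ KSA g, 0 ≤ charHom χ a * charHom χ d) :
    0 ≤ L (Localization.mk a d) := by
  have := nonneg_of_nonneg_on_K hgen (IsScalarTower.toAlgHom ℝ A (Localization D)) hk hp1 hpgrow
    (IsLocalization.map_units (Localization D) ⟨p, hpD⟩) L hL (f := a * d)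
    (fun χ hχ => by rw [charHom_apply, map_mul]; exact h χ hχ) (Localization.mk 1 d)
  convert this using 2
  rw [IsScalarTower.coe_toAlgHom', ← Localization.mk_one_eq_algebraMap, sq, Localization.mk_mul,
    Localization.mk_mul]
  apply mk_eq_of_mul_eq
  simp only [Submonoid.coe_mul, OneMemClass.coe_one]
  ring

/-- Functionals in the dual cone are integrals over the characters in `K` without vanishing
denominators; conversely such characters are themselves in the dual cone. -/
theorem dualClosure_eq (hgen : Algebra.adjoin ℝ (Set.range x) = ⊤) (hpD : p ∈ D) (hk : 1 ≤ k)
    (hp1 : p - 1 ∈ PosA (KSA g)) (hpgrow : (k : A) * p - ∑ i, x i ^ 2 ∈ PosA (KSA g)) :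
    dualClosure (genPreordering fun i => algebraMap A (Localization D) (g i))
        = PosF D (KSA g \ ⋃ d ∈ (D : Set A), ZA d) := by
  apply Set.Subset.antisymm
  · intro R hR
    induction R using Localization.induction_on with
    | H y =>
      refine ⟨y.1, y.2, rfl, fun χ hχ => ?_⟩
      have hd : ∀ d ∈ D, charHom χ d ≠ 0 := fun d hd h0 =>
        hχ.2 (Set.mem_biUnion (x := d) hd h0)
      have h1 := hR (fracChar D χ hd).toLinearMap fun c hc => by
        obtain ⟨a, d, rfl, h2⟩ :=
          genPreordering_subset_PosF g (Set.singleton_subset_iff.2 hχ.1) hc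
        rw [AlgHom.toLinearMap_apply, fracChar_mk]
        exact div_nonneg_of_mul (h2 χ rfl)
      rw [AlgHom.toLinearMap_apply, fracChar_mk] at h1
      have h2 := div_nonneg_of_mul (b := (charHom χ y.2)⁻¹) (a := charHom χ y.1) h1
      rwa [div_inv_eq_mul] at h2
  · rintro R ⟨a, d, rfl, h⟩ L hL
    let _ : MeasurableSpace (CharSet A) := borel (CharSet A)
    have : BorelSpace (CharSet A) := ⟨rfl⟩
    obtain ⟨μ, h1, -, h3⟩ := exists_measure_KSA hgen D g L
      (nonneg_on_PosF D hgen hpD hk hp1 hpgrow L hL)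
    rw [(h3 a d).2]
    have h5 : ∀ᵐ χ ∂μ, χ ∈ KSA g \ ⋃ d ∈ (D : Set A), ZA d := mem_ae_iff.2 h1
    apply integral_nonneg_of_ae
    filter_upwards [h5] with χ hχ
    exact div_nonneg_of_mul (h χ hχ)

theorem moment_problem (hgen : Algebra.adjoin ℝ (Set.range x) = ⊤) (hpD : p ∈ D) (hk : 1 ≤ k)
    (hp1 : p - 1 ∈ PosA (KSA g)) (hpgrow : (k : A) * p - ∑ i, x i ^ 2 ∈ PosA (KSA g))
    (L : Localization D →ₗ[ℝ] ℝ)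
    (hL : ∀ t ∈ genPreordering fun i => algebraMap A (Localization D) (g i), 0 ≤ L t) :
      ∃ μ : @Measure (CharSet A) (borel (CharSet A)),
        μ (closure (KSA g \ ⋃ d ∈ (D : Set A), ZA d))ᶜ = 0 ∧
        (∀ d ∈ D, μ (closure (KSA g \ ⋃ d' ∈ (D : Set A), ZA d') ∩ ZA d) = 0) ∧
        ∀ (f : A) (d : D),
          Integrable (fun χ : CharSet A => (χ : A → ℝ) f / (χ : A → ℝ) (d : A)) μ ∧
          L (Localization.mk f d)
            = ∫ χ in closure (KSA g \ ⋃ d' ∈ (D : Set A), ZA d'),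
                (χ : A → ℝ) f / (χ : A → ℝ) (d : A) ∂μ := by
  let _ : MeasurableSpace (CharSet A) := borel (CharSet A)
  have : BorelSpace (CharSet A) := ⟨rfl⟩
  obtain ⟨μ, h1, h2, h3⟩ := exists_measure_KSA hgen D g L
    (nonneg_on_PosF D hgen hpD hk hp1 hpgrow L hL)
  have h4 : μ (closure (KSA g \ ⋃ d ∈ (D : Set A), ZA d))ᶜ = 0 :=
    measure_mono_null (Set.compl_subset_compl.2 subset_closure) h1
  refine ⟨μ, h4, fun d hd => measure_mono_null Set.inter_subset_right (h2 d hd), fun f d => ?_⟩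
  refine ⟨(h3 f d).1, ?_⟩
  have h5 : ∀ᵐ χ ∂μ, χ ∈ closure (KSA g \ ⋃ d ∈ (D : Set A), ZA d) := mem_ae_iff.2 h4
  rw [Measure.restrict_eq_self_of_ae_mem h5]
  exact (h3 f d).2

end MainParts

/-! ### Closedness of the nonnegative fractions in the finite topology -/

section FinTop
open Filter Topology

/-- On a finite-dimensional space the weak topology is transported from `ℝʳ` by a basis. -/
theorem continuous_weakTop_equivFun {V : Type*} [AddCommGroup V] [Module ℝ V] {ι : Type*}
    [Fintype ι] (b : Module.Basis ι ℝ V) : Continuous[weakTop V, _] b.equivFun := by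
  let _ := weakTop V
  refine continuous_pi fun i => ?_
  exact continuous_iff_le_induced.2 (iInf_le _ (b.coord i))

/-- Every linear map from `ℝʳ` is continuous for the weak topology. -/
theorem continuous_weakTop_of_pi {V : Type*} [AddCommGroup V] [Module ℝ V] {ι : Type*}
    [Fintype ι] (f : (ι → ℝ) →ₗ[ℝ] V) : Continuous[_, weakTop V] f := by
  refine continuous_iInf_rng.2 fun L => continuous_induced_rng.2 ?_
  exact (L.comp f).continuous_of_finiteDimensional

theorem isClosed_finTop_iff {E : Type*} [AddCommGroup E] [Module ℝ E] {S : Set E} :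
    IsClosed[finTop E] S ↔ ∀ U : Submodule ℝ E, FiniteDimensional ℝ U →
      IsClosed[weakTop U] ((Subtype.val : U → E) ⁻¹' S) := by
  constructor
  · intro h U hU
    let _ := weakTop U
    exact ⟨h.isOpen_compl U hU⟩
  · intro h
    refine @IsClosed.mk _ (finTop E) _ fun U hU => ?_
    let _ := weakTop U
    exact (h U hU).isOpen_compl

variable {A : Type*} [CommRing A] [Algebra ℝ A]
    {n : ℕ} {x : Fin n → A} (D : Submonoid A) {m : ℕ} {g : Fin m → A}

/-- If `a ≥ 0` at the points of `K` at which none of countably many elements vanish, then finitely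
many of them suffice. -/
theorem exists_finite_exception (hgen : Algebra.adjoin ℝ (Set.range x) = ⊤) (e : ℕ → A) (a : A)
    (h : ∀ χ ∈ KSA g, (∀ i, charHom χ (e i) ≠ 0) → 0 ≤ charHom χ a) :
    ∃ N, ∀ χ ∈ KSA g, charHom χ (∏ i ∈ Finset.range N, e i) ≠ 0 → 0 ≤ charHom χ a := by
  by_contra! hcon
  choose χ hχK hχe hχa using hcon
  -- a counterexample for each `N`: their sequence is a point of `A` in a real closed field of germs
  let T : Subsemiring (ℕ → ℝ) :=
    { carrier := {f | ∀ᶠ N in atTop, 0 ≤ f N}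
      mul_mem' := fun ha hb => by
        filter_upwards [ha, hb] with N h1 h2 using mul_nonneg h1 h2
      one_mem' := Eventually.of_forall fun N => zero_le_one
      add_mem' := fun ha hb => by
        filter_upwards [ha, hb] with N h1 h2 using add_nonneg h1 h2
      zero_mem' := Eventually.of_forall fun N => le_rfl }
  obtain ⟨R, _, _, _, φ, hR, hφ⟩ := exists_realClosed_hom T
    (fun f => Eventually.of_forall fun N => sq_nonneg (f N))
    (fun hT => by
      obtain ⟨N, hN⟩ := Eventually.exists hT
      simp only [Pi.neg_apply, Pi.one_apply] at hN
      linarith)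
  have hev0 : ∀ f : ℕ → ℝ, (∀ᶠ N in atTop, f N = 0) → φ f = 0 := fun f hf => by
    refine le_antisymm ?_ (hφ f (hf.mono fun N hN => hN.ge))
    have := hφ (-f) (hf.mono fun N hN => by simp [hN])
    rw [map_neg] at this
    linarith
  have hev1 : ∀ f : ℕ → ℝ, (∀ᶠ N in atTop, f N ≠ 0) → φ f ≠ 0 := fun f hf h0 => by
    have := hev0 (1 - f * fun N => (f N)⁻¹) (hf.mono fun N hN => by simp [hN])
    rw [map_sub, map_one, map_mul, h0, zero_mul, sub_zero] at this
    exact one_ne_zero this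
  let ψ : A →+* R := φ.comp (RingHom.pi fun N => (charHom (χ N) : A →+* ℝ))
  have hψ : ∀ b, ψ b = φ fun N => charHom (χ N) b := fun b => rfl
  classical
  obtain ⟨ω, hω1, hω2⟩ := exists_real_point x hgen hR ψ (insert a (Finset.univ.image g))
    (Set.range e) (Set.countable_range e) (by
      rintro _ ⟨i, rfl⟩
      rw [hψ]
      refine hev1 _ ((eventually_gt_atTop i).mono fun N hN h0 => hχe N ?_)
      rw [map_prod]
      exact Finset.prod_eq_zero (Finset.mem_range.2 hN) h0)
  have hωK : homChar ω ∈ KSA g := fun i => by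
    have h1 := hω1 (g i) (by simp)
    have h2 : 0 ≤ ψ (g i) := hφ _ (Eventually.of_forall fun N => hχK N i)
    change 0 ≤ ω (g i)
    rw [← sign_nonneg_iff, h1, sign_nonneg_iff]
    exact h2
  have h3 : 0 ≤ ω a := h (homChar ω) hωK fun i => hω2 _ ⟨i, rfl⟩
  have h4 := hω1 a (by simp)
  rw [← sign_nonneg_iff, h4, sign_nonneg_iff] at h3
  have h5 : 0 ≤ ψ (-a) := hφ _ (Eventually.of_forall fun N => by
    have := hχa N
    change 0 ≤ charHom (χ N) (-a)
    rw [map_neg]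
    linarith)
  have h6 : ψ a ≠ 0 := hev1 _ (Eventually.of_forall fun N => (hχa N).ne)
  rw [map_neg] at h5
  exact h6 (le_antisymm (by linarith) h3)

/-- A fraction is in `PosF` as soon as its sign is right off the zeros of one further denominator `h`,
by which the representation may be expanded. -/
theorem mk_mem_PosF_iff {Y : Set (CharSet A)} (a : A) (d : D) : Localization.mk a d ∈ PosF D Y ↔
    ∃ h ∈ D, ∀ χ ∈ Y, charHom χ h ≠ 0 → 0 ≤ charHom χ (a * d) := by
  constructor
  · rintro ⟨b, e, h1, h2⟩
    rw [Localization.mk_eq_mk_iff, Localization.r_iff_exists] at h1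
    obtain ⟨c, hc⟩ := h1
    refine ⟨c * e, mul_mem c.2 e.2, fun χ hχ h0 => ?_⟩
    rw [map_mul] at h0
    have hc0 := left_ne_zero_of_mul h0
    have he0 := right_ne_zero_of_mul h0
    have h3 := congrArg (charHom χ) hc
    simp only [map_mul] at h3
    have h4 := mul_left_cancel₀ hc0 h3
    have h5 := h2 χ hχ
    simp only [charHom_apply] at h5
    have h6 : charHom χ (a * d) * charHom χ e ^ 2 =
        charHom χ d ^ 2 * (charHom χ b * charHom χ e) := by
      rw [map_mul]
      linear_combination (charHom χ d * charHom χ e) * h4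
    have h7 : 0 < charHom χ e ^ 2 := by positivity
    refine nonneg_of_mul_nonneg_left ?_ h7
    rw [h6]
    positivity
  · rintro ⟨h, hD, h1⟩
    refine ⟨a * h, d * ⟨h, hD⟩, ?_, fun χ hχ => ?_⟩
    · apply mk_eq_of_mul_eq
      simp only [Submonoid.coe_mul]
      ring
    · have h2 := h1 χ hχ
      simp only [charHom_apply, Submonoid.coe_mul, map_mul] at h2 ⊢
      by_cases h0 : charHom χ h = 0
      · simp [h0]
      · have h3 := h2 h0
        nlinarith [mul_nonneg h3 (sq_nonneg (charHom χ h))]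

/-- A limit within a finite-dimensional subspace is a limit of a sequence, for which countably many
denominators occur; `exists_finite_exception` replaces them by a single one. -/
theorem isClosed_PosF (hgen : Algebra.adjoin ℝ (Set.range x) = ⊤) :
    IsClosed[finTop (Localization D)] (PosF D (KSA g)) := by
  refine isClosed_finTop_iff.2 fun U hU => ?_
  let b := Module.finBasis ℝ U
  -- a common denominator of a basis
  obtain ⟨d, hd⟩ := IsLocalization.exist_integer_multiples_of_finite D
    fun i => ((b i : U) : Localization D)
  choose a ha using hd
  have hrep : ∀ t, ((b.equivFun.symm t : U) : Localization D) =
      Localization.mk (∑ i, t i • a i) d := by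
    intro t
    rw [Localization.mk_eq_mk', IsLocalization.eq_mk'_iff_mul_eq, Module.Basis.equivFun_symm_apply,
      Submodule.coe_sum, Finset.sum_mul, map_sum]
    refine Finset.sum_congr rfl fun i _ => ?_
    rw [Submodule.coe_smul, smul_mul_assoc, mul_comm, ← Algebra.smul_def, ← ha i,
      ← IsScalarTower.coe_toAlgHom' ℝ A (Localization D), map_smul]
  have hcl : IsClosed {t | ((b.equivFun.symm t : U) : Localization D) ∈ PosF D (KSA g)} := by
    rw [← isSeqClosed_iff_isClosed]
    intro t s ht hts
    have ht' : ∀ j, ∃ h ∈ D, ∀ χ ∈ KSA g, charHom χ h ≠ 0 →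
        0 ≤ charHom χ ((∑ i, t j i • a i) * d) := fun j => by
      rw [← mk_mem_PosF_iff, ← hrep]
      exact ht j
    choose h hD hpos using ht'
    obtain ⟨N, hN⟩ := exists_finite_exception (g := g) hgen h ((∑ i, s i • a i) * d)
      (fun χ hχ h0 => by
        have hlim : Tendsto (fun j => charHom χ ((∑ i, t j i • a i) * d)) atTop
            (𝓝 (charHom χ ((∑ i, s i • a i) * d))) := by
          simp only [map_mul, map_sum, map_smul, smul_eq_mul]
          refine Tendsto.mul_const _ (tendsto_finsetSum _ fun i _ => Tendsto.mul_const _ ?_)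
          exact (tendsto_pi_nhds.1 hts) i
        exact ge_of_tendsto' hlim fun j => hpos j χ hχ (h0 j))
    rw [Set.mem_ofPred_eq, hrep, mk_mem_PosF_iff]
    exact ⟨_, prod_mem fun i _ => hD i, hN⟩
  let _ := weakTop U
  convert hcl.preimage (continuous_weakTop_equivFun b) using 1
  ext u
  simp only [Set.mem_preimage, Set.mem_ofPred_eq, LinearEquiv.symm_apply_apply]

end FinTop

/-! ### Separation in the finite topology of a space of countable dimension -/

section Separation
open Filter Topology

variable {V : Type*} [AddCommGroup V] [Module ℝ V]

theorem isOpen_preimage_of_pi {ι : Type*} [Fintype ι] (f : (ι → ℝ) →ₗ[ℝ] V) {O : Set V}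
    (hO : IsOpen[finTop V] O) : IsOpen (f ⁻¹' O) := by
  have h1 := hO (LinearMap.range f) inferInstance
  exact @IsOpen.preimage _ _ _ (weakTop _) _ (continuous_weakTop_of_pi f.rangeRestrict) _ h1

theorem isOpen_preimage_sum {Z ι : Type*} [TopologicalSpace Z] [Fintype ι] (v : ι → V)
    (c : ι → Z → ℝ) (hc : ∀ i, Continuous (c i)) {O : Set V} (hO : IsOpen[finTop V] O) :
    IsOpen {z | ∑ i, c i z • v i ∈ O} := by
  have h1 := isOpen_preimage_of_pi (Fintype.linearCombination ℝ v) hO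
  have h2 : Continuous fun z i => c i z := continuous_pi hc
  exact h1.preimage h2

/-- Linear maps are continuous for the finite topologies. -/
theorem mem_closure_finTop_map {V' : Type*} [AddCommGroup V'] [Module ℝ V'] (f : V →ₗ[ℝ] V')
    {C : Set V'} {v : V} (hv : v ∈ @closure _ (finTop V) (f ⁻¹' C)) :
    f v ∈ @closure _ (finTop V') C := by
  let t := finTop V
  let t' := finTop V'
  have hf : Continuous f := by
    refine continuous_def.2 fun O hO U hU => ?_
    let b := Module.finBasis ℝ U
    have h1 := isOpen_preimage_of_pi (f.comp (U.subtype.comp b.equivFun.symm.toLinearMap)) hO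
    let _ := weakTop U
    convert h1.preimage (continuous_weakTop_equivFun b) using 1
    ext u
    simp only [Set.mem_preimage, LinearMap.comp_apply, LinearEquiv.coe_coe,
      LinearEquiv.symm_apply_apply, Submodule.subtype_apply]
  exact closure_mono (Set.image_preimage_subset f C)
    (image_closure_subset_closure_image hf ⟨v, hv, rfl⟩)

/-- `δ` bounds a box in the span of `e 0, …, e (N - 1)` whose translate by `v` lies in `O`. -/
def BoxIn (e : ℕ → V) (v : V) (O : Set V) (N : ℕ) (δ : ℕ → ℝ) : Prop :=
  (∀ i < N, 0 < δ i) ∧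
    ∀ t : ℕ → ℝ, (∀ i < N, |t i| ≤ δ i) → v + ∑ i ∈ Finset.range N, t i • e i ∈ O

theorem BoxIn.extend {e : ℕ → V} {v : V} {O : Set V} (hO : IsOpen[finTop V] O) {N : ℕ}
    {δ : ℕ → ℝ} (h : BoxIn e v O N δ) : ∃ r, BoxIn e v O (N + 1) (Function.update δ N r) := by
  let B : Set (ℕ → ℝ) := Set.univ.pi fun i => if i < N then Set.Icc (-δ i) (δ i) else {0}
  have hB : IsCompact B := isCompact_univ_pi fun i => by
    split_ifs
    · exact isCompact_Icc
    · exact isCompact_singleton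
  let P : Set ((ℕ → ℝ) × ℝ) := {z | v + ∑ i ∈ Finset.range N, z.1 i • e i + z.2 • e N ∈ O}
  have hP : IsOpen P := by
    convert isOpen_preimage_sum (Z := (ℕ → ℝ) × ℝ) (ι := Option (Option (Fin N)))
      (fun o => o.elim v fun o => o.elim (e N) fun i => e i)
      (fun o z => o.elim 1 fun o => o.elim z.2 fun i => z.1 i) ?_ hO using 1
    · ext z
      simp only [P, Fintype.sum_option, Option.elim, one_smul, Set.mem_ofPred_eq,
        Fin.sum_univ_eq_sum_range (fun i => z.1 i • e i) N]
      rw [add_assoc, add_comm (z.2 • e N)]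
    · rintro (_ | _ | i)
      · exact continuous_const
      · exact continuous_snd
      · exact (continuous_apply (i : ℕ)).comp (continuous_fst (X := ℕ → ℝ) (Y := ℝ))
  obtain ⟨u, w, -, hw, hBu, h0w, huw⟩ := generalized_tube_lemma hB
    (isCompact_singleton (x := (0 : ℝ))) hP (by
      rintro ⟨t, r⟩ ⟨ht, rfl : r = 0⟩
      simp only [P, Set.mem_ofPred_eq, zero_smul, add_zero]
      refine h.2 t fun i hi => ?_
      have := ht i trivial
      simp only [hi, if_true] at this
      exact abs_le.2 this)
  obtain ⟨r, hr, hrw⟩ := Metric.nhds_basis_closedBall.mem_iff.1 (hw.mem_nhds (h0w rfl))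
  refine ⟨r, fun i hi => ?_, fun t ht => ?_⟩
  · rcases Nat.lt_succ_iff_lt_or_eq.1 hi with hi | rfl
    · rw [Function.update_of_ne hi.ne]
      exact h.1 i hi
    · rwa [Function.update_self]
  · have h1 : ((fun i => if i < N then t i else 0, t N) : (ℕ → ℝ) × ℝ) ∈ P := by
      refine huw ⟨hBu fun i _ => ?_, hrw ?_⟩
      · dsimp only
        split_ifs with hi
        · have := ht i (by omega)
          rw [Function.update_of_ne hi.ne] at this
          exact abs_le.1 this
        · rfl
      · have := ht N (by omega)
        rw [Function.update_self] at this
        simpa using this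
    rw [Finset.sum_range_succ, ← add_assoc]
    convert (show _ ∈ O from h1) using 3
    refine Finset.sum_congr rfl fun i hi => ?_
    simp [Finset.mem_range.1 hi]

/-- In a finitely open set one fits a box with positive side lengths in countably many directions,
choosing the side lengths one after the other. -/
theorem exists_box {e : ℕ → V} {v : V} {O : Set V} (hO : IsOpen[finTop V] O) (hv : v ∈ O) :
    ∃ δ : ℕ → ℝ, (∀ i, 0 < δ i) ∧
      ∀ t : ℕ →₀ ℝ, (∀ i, |t i| ≤ δ i) → v + Finsupp.linearCombination ℝ e t ∈ O := by
  let s : (N : ℕ) → {δ : ℕ → ℝ // BoxIn e v O N δ} := fun N => Nat.rec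
    ⟨fun _ => 1, by simp, by simpa using hv⟩
    (fun N δ => ⟨Function.update δ.1 N (δ.2.extend hO).choose, (δ.2.extend hO).choose_spec⟩) N
  have hs : ∀ N i, i ≠ N → (s (N + 1)).1 i = (s N).1 i := fun N i hi => Function.update_of_ne hi _ _
  have hst : ∀ i k, (s (i + 1 + k)).1 i = (s (i + 1)).1 i := by
    intro i k
    induction k with
    | zero => rfl
    | succ k ih => rw [← add_assoc, hs _ _ (by omega), ih]
  have hst' : ∀ i N, i < N → (s N).1 i = (s (i + 1)).1 i := by
    intro i N hi
    obtain ⟨k, rfl⟩ := Nat.exists_eq_add_of_le (Nat.succ_le_of_lt hi)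
    exact hst i k
  refine ⟨fun i => (s (i + 1)).1 i, fun i => (s (i + 1)).2.1 i (by omega), fun t ht => ?_⟩
  obtain ⟨N, hN⟩ : ∃ N, t.support ⊆ Finset.range N := t.support.exists_nat_subset_range
  rw [Finsupp.linearCombination_apply, Finsupp.sum_of_support_subset t hN _ (by simp)]
  exact (s N).2.2 t fun i hi => by rw [hst' i N hi]; exact ht i

/-- In a space of countable dimension the finite topology has the same closed convex cones as the
finest locally convex topology. -/
theorem dualClosure_subset_closure {e : ℕ → V} (he : Submodule.span ℝ (Set.range e) = ⊤)
    {C : Set V} (h0 : 0 ∈ C) (hadd : ∀ a ∈ C, ∀ b ∈ C, a + b ∈ C)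
    (hsmul : ∀ r : ℝ, 0 ≤ r → ∀ a ∈ C, r • a ∈ C) :
    dualClosure C ⊆ @closure _ (finTop V) C := by
  intro v hv
  by_contra hvC
  have hO : IsOpen[finTop V] (@closure _ (finTop V) C)ᶜ := by
    let _ := finTop V
    exact isClosed_closure.isOpen_compl
  have hCO : ∀ c ∈ C, c ∉ (@closure _ (finTop V) C)ᶜ := fun c hc h => by
    let _ := finTop V
    exact h (subset_closure hc)
  obtain ⟨δ, hδ, hbox⟩ := exists_box (e := e) hO hvC
  have hv0 : v ≠ 0 := by
    rintro rfl
    exact hCO 0 h0 hvC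
  -- the cone generated by `C` and the negatives of the translated box
  let s : PointedCone ℝ V :=
    { carrier := {y | ∃ c ∈ C, ∃ r : ℝ, 0 ≤ r ∧ ∃ t : ℕ →₀ ℝ, (∀ i, |t i| ≤ r * δ i) ∧
        y = c - r • v - Finsupp.linearCombination ℝ e t}
      add_mem' := by
        rintro _ _ ⟨c, hc, r, hr, t, ht, rfl⟩ ⟨c', hc', r', hr', t', ht', rfl⟩
        refine ⟨c + c', hadd c hc c' hc', r + r', add_nonneg hr hr', t + t', fun i => ?_, ?_⟩
        · rw [Finsupp.add_apply, add_mul]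
          exact (abs_add_le _ _).trans (add_le_add (ht i) (ht' i))
        · rw [map_add, add_smul]
          abel
      zero_mem' := ⟨0, h0, 0, le_rfl, 0, by simp, by simp⟩
      smul_mem' := by
        rintro ⟨q, hq⟩ _ ⟨c, hc, r, hr, t, ht, rfl⟩
        refine ⟨q • c, hsmul q hq c hc, q * r, mul_nonneg hq hr, q • t, fun i => ?_, ?_⟩
        · rw [Finsupp.smul_apply, smul_eq_mul, abs_mul, abs_of_nonneg hq, mul_assoc]
          exact mul_le_mul_of_nonneg_left (ht i) hq
        · rw [map_smul, Nonneg.mk_smul, smul_sub, smul_sub, smul_smul] }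
  let f : V →ₗ.[ℝ] ℝ := LinearPMap.mkSpanSingleton v (-1 : ℝ) hv0
  have hf : ∀ (l : ℝ) (hl : l • v ∈ f.domain), f ⟨l • v, hl⟩ = -l := fun l hl =>
    (LinearPMap.mkSpanSingleton'_apply (σ := RingHom.id ℝ) v (-1 : ℝ) _ l hl).trans (by simp)
  obtain ⟨G, hG1, hG2⟩ := riesz_extension s f
    (by
      rintro ⟨y, hy⟩ ⟨c, hc, r, hr, t, ht, hyc⟩
      obtain ⟨l, rfl⟩ := Submodule.mem_span_singleton.1 hy
      rw [hf, neg_nonneg]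
      by_contra! hl
      have hlr : 0 < l + r := by linarith
      have h1 := hbox ((l + r)⁻¹ • t) fun i => by
        rw [Finsupp.smul_apply, smul_eq_mul, abs_mul, abs_of_pos (inv_pos.2 hlr),
          inv_mul_le_iff₀ hlr]
        refine (ht i).trans ?_
        have := hδ i
        gcongr
        linarith
      refine hCO _ ?_ h1
      have h2 : v + Finsupp.linearCombination ℝ e ((l + r)⁻¹ • t) = (l + r)⁻¹ • c := by
        rw [map_smul, eq_inv_smul_iff₀ hlr.ne', smul_add, smul_inv_smul₀ hlr.ne', add_smul]
        simp only at hyc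
        rw [hyc]
        abel
      rw [h2]
      exact hsmul _ (inv_pos.2 hlr).le c hc)
    (by
      intro y
      have hy : y ∈ Submodule.span ℝ (Set.range e) := he ▸ trivial
      obtain ⟨t, rfl⟩ := (Finsupp.mem_span_range_iff_exists_finsupp).1 hy
      set r := ∑ i ∈ t.support, |t i| / δ i with hr
      have hterm : ∀ i, 0 ≤ |t i| / δ i := fun i => div_nonneg (abs_nonneg _) (hδ i).le
      have hr0 : 0 ≤ r := Finset.sum_nonneg fun i _ => hterm i
      refine ⟨⟨(-r) • v, Submodule.smul_mem _ _ (Submodule.mem_span_singleton_self v)⟩,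
        0, h0, r, hr0, -t, fun i => ?_, ?_⟩
      · rw [Finsupp.neg_apply, abs_neg]
        by_cases hi : i ∈ t.support
        · rw [← div_le_iff₀ (hδ i)]
          exact Finset.single_le_sum (f := fun i => |t i| / δ i) (fun i _ => hterm i) hi
        · rw [Finsupp.notMem_support_iff.1 hi, abs_zero]
          exact mul_nonneg hr0 (hδ i).le
      · rw [map_neg, Finsupp.linearCombination_apply]
        simp)
  have h1 := hv G fun c hc => hG2 c ⟨c, hc, 0, le_rfl, 0, by simp, by simp⟩
  have h2 := hG1 ⟨(1 : ℝ) • v, Submodule.smul_mem _ _ (Submodule.mem_span_singleton_self v)⟩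
  rw [hf, map_smul, one_smul] at h2
  linarith

end Separation

/-! ### The closure in the topology of finitely open sets -/

section FinClosure

theorem genPreordering_smul {E : Type*} [CommRing E] [Algebra ℝ E] {m : ℕ} {g : Fin m → E}
    {r : ℝ} (hr : 0 ≤ r) {u : E} (hu : u ∈ genPreordering g) : r • u ∈ genPreordering g := by
  have := genPreordering_sumSq_mul (IsSquare.sq (algebraMap ℝ E (√r))).isSumSq hu
  rwa [← map_pow, Real.sq_sqrt hr, ← Algebra.smul_def] at this

theorem isSumSq_map {E E' : Type*} [CommRing E] [CommRing E'] (f : E →+* E') {s : E}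
    (hs : IsSumSq s) : IsSumSq (f s) := by
  induction hs using IsSumSq.rec' with
  | zero => rw [map_zero]; exact IsSumSq.zero
  | sq_add hx _ ih => rw [map_add]; exact (hx.map f).isSumSq.add ih

theorem genPreordering_map {E E' : Type*} [CommRing E] [CommRing E'] (f : E →+* E') {m : ℕ}
    {g : Fin m → E} {u : E} (hu : u ∈ genPreordering g) :
    f u ∈ genPreordering fun j => f (g j) := by
  obtain ⟨σ, hσ, rfl⟩ := hu
  refine ⟨fun ν => f (σ ν), fun ν => isSumSq_map f (hσ ν), ?_⟩
  simp only [map_sum, map_mul, map_prod]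
  refine Finset.sum_congr rfl fun ν _ => ?_
  congr 1
  refine Finset.prod_congr rfl fun j _ => ?_
  split_ifs <;> simp

theorem exists_seq_span_eq_top {E : Type*} [CommRing E] [Algebra ℝ E] [Algebra.FiniteType ℝ E] :
    ∃ e : ℕ → E, Submodule.span ℝ (Set.range e) = ⊤ := by
  obtain ⟨N, f, hf⟩ := Algebra.FiniteType.iff_quotient_mvPolynomial''.1
    (inferInstance : Algebra.FiniteType ℝ E)
  obtain ⟨u, hu⟩ := exists_surjective_nat (Fin N →₀ ℕ)
  refine ⟨fun i => f (basisMonomials (Fin N) ℝ (u i)), ?_⟩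
  have h1 : Set.range (fun i => f (basisMonomials (Fin N) ℝ (u i))) =
      f.toLinearMap '' Set.range (basisMonomials (Fin N) ℝ) := by
    rw [← hu.range_comp, ← Set.range_comp]
    rfl
  rw [h1, ← Submodule.map_span, Module.Basis.span_eq, Submodule.map_top, LinearMap.range_eq_top]
  exact hf

variable {A : Type*} [CommRing A] [Algebra ℝ A]
    {n : ℕ} {x : Fin n → A} (D : Submonoid A) {m : ℕ} {g : Fin m → A} {p : A} {k : ℕ}

/-- One fraction involves finitely many denominators, so the question can be moved to a finitely
generated subalgebra, which has countable dimension. -/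
theorem PosF_subset_closure (hgen : Algebra.adjoin ℝ (Set.range x) = ⊤) (hpD : p ∈ D) (hk : 1 ≤ k)
    (hp1 : p - 1 ∈ PosA (KSA g)) (hpgrow : (k : A) * p - ∑ i, x i ^ 2 ∈ PosA (KSA g)) :
    PosF D (KSA g) ⊆ @closure _ (finTop (Localization D))
      (genPreordering fun i => algebraMap A (Localization D) (g i)) := by
  rintro R ⟨a, d, rfl, hR⟩
  let ι : A →ₐ[ℝ] Localization D := IsScalarTower.toAlgHom ℝ A (Localization D)
  -- a finitely generated subalgebra containing the image of `A` and the inverses of `p` and `d`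
  let p' : Localization D := Localization.mk 1 ⟨p, hpD⟩
  let d' : Localization D := Localization.mk 1 d
  let G : Set (Localization D) := Set.range (fun i => ι (x i)) ∪ {p', d'}
  have hG : G.Finite := (Set.finite_range _).union (Set.toFinite _)
  let W : Subalgebra ℝ (Localization D) := Algebra.adjoin ℝ G
  have hp'W : p' ∈ W := Algebra.subset_adjoin (Or.inr (Or.inl rfl))
  have hd'W : d' ∈ W := Algebra.subset_adjoin (Or.inr (Or.inr rfl))
  have : Algebra.FiniteType ℝ W :=
    (Subalgebra.fg_iff_finiteType W).1 (Subalgebra.fg_def.2 ⟨G, hG, rfl⟩)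
  obtain ⟨e, he⟩ := exists_seq_span_eq_top (E := W)
  have hιW : ∀ b, ι b ∈ W := by
    intro b
    have hb : b ∈ Algebra.adjoin ℝ (Set.range x) := hgen ▸ trivial
    have h1 : ι b ∈ (Algebra.adjoin ℝ (Set.range x)).map ι := ⟨b, hb, rfl⟩
    rw [AlgHom.map_adjoin, ← Set.range_comp] at h1
    exact Algebra.adjoin_mono Set.subset_union_left h1
  let ιW : A →ₐ[ℝ] W := ι.codRestrict W hιW
  have hpu : IsUnit (ιW p) := by
    refine IsUnit.of_mul_eq_one ⟨p', hp'W⟩ (Subtype.ext ?_)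
    change algebraMap A (Localization D) p * Localization.mk 1 ⟨p, hpD⟩ = 1
    rw [← Localization.mk_one_eq_algebraMap, Localization.mk_mul, mul_one, one_mul]
    exact Localization.mk_self ⟨p, hpD⟩
  let C : Set (Localization D) := genPreordering fun i => algebraMap A (Localization D) (g i)
  have hkey : (⟨d', hd'W⟩ : W) ^ 2 * ιW (a * d) ∈
      @closure _ (finTop W) (W.val.toLinearMap ⁻¹' C) := by
    refine dualClosure_subset_closure he ?_ ?_ ?_ ?_
    · exact genPreordering_zero
    · exact fun u hu v hv => genPreordering_add hu hv
    · exact fun r hr u hu => genPreordering_smul hr hu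
    · intro L hL
      have hL' : ∀ t ∈ genPreordering (fun j => ιW (g j)), 0 ≤ L t := by
        intro t ht
        apply hL
        have ht' := genPreordering_map W.val.toRingHom ht
        exact ht'
      exact nonneg_of_nonneg_on_K hgen ιW hk hp1 hpgrow hpu L hL' (f := a * d)
        (fun χ hχ => by rw [charHom_apply, map_mul]; exact hR χ hχ) ⟨d', hd'W⟩
  have h2 := mem_closure_finTop_map W.val.toLinearMap hkey
  convert h2 using 1
  change _ = (Localization.mk 1 d) ^ 2 * algebraMap A (Localization D) (a * d)
  rw [← Localization.mk_one_eq_algebraMap, sq, Localization.mk_mul, Localization.mk_mul]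
  apply mk_eq_of_mul_eq
  simp only [Submonoid.coe_mul, OneMemClass.coe_one]
  ring

theorem closure_finTop_eq (hgen : Algebra.adjoin ℝ (Set.range x) = ⊤) (hpD : p ∈ D) (hk : 1 ≤ k)
    (hp1 : p - 1 ∈ PosA (KSA g)) (hpgrow : (k : A) * p - ∑ i, x i ^ 2 ∈ PosA (KSA g)) :
    @closure _ (finTop (Localization D))
      (genPreordering fun i => algebraMap A (Localization D) (g i)) = PosF D (KSA g) := by
  refine Set.Subset.antisymm ?_ (PosF_subset_closure D hgen hpD hk hp1 hpgrow)
  exact @closure_minimal _ (finTop (Localization D)) _ _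
    (genPreordering_subset_PosF g subset_rfl) (isClosed_PosF D hgen)

end FinClosure

/-- The three main theorems for localizations of a finitely generated
`ℝ`-algebra `A`. -/
theorem fg_algebra_closure_and_moment_problem
    {A : Type*} [CommRing A] [Algebra ℝ A]
    {n : ℕ} (x : Fin n → A) (hgen : Algebra.adjoin ℝ (Set.range x) = ⊤)
    (D : Submonoid A) (hD0 : (0 : A) ∉ D)
    {m : ℕ} (g : Fin m → A)
    (p : A) (hpD : p ∈ D) (k : ℕ) (hk : 1 ≤ k)
    (hp1 : p - 1 ∈ PosA (KSA g))
    (hpgrow : (k : A) * p - ∑ i, x i ^ 2 ∈ PosA (KSA g)) :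
    dualClosure (genPreordering fun i => algebraMap A (Localization D) (g i))
        = PosF D (KSA g \ ⋃ d ∈ (D : Set A), ZA d) ∧
    @closure _ (finTop (Localization D))
        (genPreordering fun i => algebraMap A (Localization D) (g i))
        = PosF D (KSA g) ∧
    ∀ L : Localization D →ₗ[ℝ] ℝ,
      (∀ t ∈ genPreordering fun i => algebraMap A (Localization D) (g i), 0 ≤ L t) →
      ∃ μ : @Measure (CharSet A) (borel (CharSet A)),
        μ (closure (KSA g \ ⋃ d ∈ (D : Set A), ZA d))ᶜ = 0 ∧
        (∀ d ∈ D, μ (closure (KSA g \ ⋃ d' ∈ (D : Set A), ZA d') ∩ ZA d) = 0) ∧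
        ∀ (f : A) (d : D),
          Integrable (fun χ : CharSet A => (χ : A → ℝ) f / (χ : A → ℝ) (d : A)) μ ∧
          L (Localization.mk f d)
            = ∫ χ in closure (KSA g \ ⋃ d' ∈ (D : Set A), ZA d'),
                (χ : A → ℝ) f / (χ : A → ℝ) (d : A) ∂μ := by
  exact ⟨dualClosure_eq D hgen hpD hk hp1 hpgrow, closure_finTop_eq D hgen hpD hk hp1 hpgrow,
    fun L hL => moment_problem D hgen hpD hk hp1 hpgrow L hL⟩

end
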